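/- arXiv:1808.01484 — 5 statements merged into one kernel-verified Lean document; each statement's English description precedes it below -/
import Mathlib

section
/- For 0 < ν < 1, the improper integral ∫₀^∞ cos(u)/u^ν du equals Γ(1−ν)·sin(πν/2), and for 0 < ν < 2 (ν ≠ 1), the improper integral ∫₀^∞ sin(u)/u^ν du equals Γ(1−ν)·cos(πν/2); for ν = 1 this integral equals π/2. -/
open Filter Topology

open MeasureTheory Set in
lemma fr_fubini (f : ℝ → ℝ) (hf : Continuous f) (s : ℝ) (hs : 0 < s)
    (hi : IntegrableOn (fun u => f u * u ^ (-s)) (Ioi 0)) :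
    (∫ u in Ioi (0:ℝ), f u * u ^ (-s)) * Real.Gamma s
      = ∫ t in Ioi (0:ℝ), t ^ (s - 1) * ∫ u in Ioi (0:ℝ), f u * Real.exp (-(t * u)) := by
  have hexp : ∀ u ∈ Ioi (0:ℝ),
      IntegrableOn (fun t : ℝ => t ^ (s - 1) * Real.exp (-(u * t))) (Ioi 0) := by
    intro u hu
    have := integrableOn_rpow_mul_exp_neg_mul_rpow (p := 1) (s := s - 1) (b := u)
      (by linarith) one_pos hu
    simpa only [Real.rpow_one, neg_mul] using this
  have hG : ∀ u ∈ Ioi (0:ℝ), ∫ t in Ioi (0:ℝ), t ^ (s - 1) * Real.exp (-(u * t))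
      = u ^ (-s) * Real.Gamma s := by
    intro u hu
    rw [Real.integral_rpow_mul_exp_neg_mul_Ioi hs hu, one_div, Real.inv_rpow (le_of_lt hu),
      Real.rpow_neg (le_of_lt hu)]
  have hm : Measurable (Function.uncurry
      fun (u t : ℝ) => f u * (t ^ (s - 1) * Real.exp (-(u * t)))) := by
    have := hf.measurable
    unfold Function.uncurry
    fun_prop
  have hI : Integrable (Function.uncurry
      fun (u t : ℝ) => f u * (t ^ (s - 1) * Real.exp (-(u * t))))
      ((volume.restrict (Ioi 0)).prod (volume.restrict (Ioi 0))) := by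
    rw [integrable_prod_iff hm.aestronglyMeasurable]
    constructor
    · filter_upwards [ae_restrict_mem measurableSet_Ioi] with u hu
      exact (hexp u hu).const_mul (f u)
    · refine (hi.norm.mul_const (Real.Gamma s)).congr ?_
      filter_upwards [ae_restrict_mem measurableSet_Ioi] with u hu
      have : ∫ t in Ioi (0:ℝ), ‖f u * (t ^ (s - 1) * Real.exp (-(u * t)))‖
          = ∫ t in Ioi (0:ℝ), |f u| * (t ^ (s - 1) * Real.exp (-(u * t))) := by
        refine setIntegral_congr_fun measurableSet_Ioi ?_
        intro t ht
        have h0 : 0 ≤ t ^ (s - 1) := Real.rpow_nonneg (le_of_lt ht) _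
        simp only [norm_mul, Real.norm_eq_abs, Real.abs_exp, abs_of_nonneg h0]
      simp only [Function.uncurry]
      rw [this, integral_const_mul, hG u hu, norm_mul, Real.norm_eq_abs, Real.norm_eq_abs,
        abs_of_nonneg (Real.rpow_nonneg (le_of_lt hu) _)]
      ring
  have hsw := integral_integral_swap hI
  rw [← integral_mul_const]
  calc _ = ∫ u in Ioi (0:ℝ), ∫ t in Ioi (0:ℝ), f u * (t ^ (s - 1) * Real.exp (-(u * t))) := by
        refine setIntegral_congr_fun measurableSet_Ioi ?_
        intro u hu
        simp only
        rw [integral_const_mul, hG u hu]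
        ring
    _ = _ := hsw
    _ = _ := by
        refine setIntegral_congr_fun measurableSet_Ioi ?_
        intro t ht
        simp only
        rw [← integral_const_mul]
        congr 1
        ext u
        rw [mul_comm u t]
        ring

open MeasureTheory Set in
lemma fr_beta (a : ℝ) (h0 : 0 < a) (h1 : a < 1) :
    ∫ t in Ioi (0:ℝ), t ^ (a - 1) * (1 / (1 + t)) = Real.pi / Real.sin (Real.pi * a) := by
  have hi : IntegrableOn (fun u : ℝ => Real.exp (-u) * u ^ (-a)) (Ioi 0) := by
    have := Real.GammaIntegral_convergent (s := 1 - a) (by linarith)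
    rwa [show 1 - a - 1 = -a by ring] at this
  have h := fr_fubini (fun u => Real.exp (-u)) (by fun_prop) a h0 hi
  have hL : ∫ u in Ioi (0:ℝ), Real.exp (-u) * u ^ (-a) = Real.Gamma (1 - a) := by
    rw [Real.Gamma_eq_integral (by linarith), show 1 - a - 1 = -a by ring]
  rw [hL, mul_comm, Real.Gamma_mul_Gamma_one_sub] at h
  rw [h]
  refine setIntegral_congr_fun measurableSet_Ioi ?_
  intro t ht
  have ht' : (0:ℝ) < t := ht
  simp only
  congr 1
  have := integral_exp_mul_Ioi (a := -(1 + t)) (by linarith) 0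
  simp only [mul_zero, Real.exp_zero, neg_div_neg_eq] at this
  rw [← this]
  congr 1
  ext u
  rw [← Real.exp_add]
  ring_nf

open MeasureTheory Set in
lemma fr_beta2 (s : ℝ) (h0 : 0 < s) (h1 : s < 2) :
    ∫ t in Ioi (0:ℝ), t ^ (s - 1) * (1 / (1 + t ^ 2))
      = Real.pi / (2 * Real.sin (Real.pi * s / 2)) := by
  have h := integral_comp_rpow_Ioi_of_pos
    (g := fun t : ℝ => t ^ (s / 2 - 1) * (1 / (1 + t))) (p := 2) (by norm_num)
  rw [fr_beta (s / 2) (by linarith) (by linarith)] at h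
  have h2 : ∫ x in Ioi (0:ℝ), ((2:ℝ) * x ^ ((2:ℝ) - 1)) •
      ((x ^ (2:ℝ)) ^ (s / 2 - 1) * (1 / (1 + x ^ (2:ℝ))))
      = 2 * ∫ t in Ioi (0:ℝ), t ^ (s - 1) * (1 / (1 + t ^ 2)) := by
    rw [← integral_const_mul]
    refine setIntegral_congr_fun measurableSet_Ioi ?_
    intro t ht
    have ht' : (0:ℝ) < t := ht
    simp only [smul_eq_mul]
    rw [← Real.rpow_mul ht'.le, Real.rpow_two,
      show s - 1 = (2 - 1) + 2 * (s / 2 - 1) by ring, Real.rpow_add ht']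
    ring
  rw [h2] at h
  rw [mul_div_assoc, mul_comm (2:ℝ) (Real.sin _), ← div_div, ← h]
  ring

open MeasureTheory Set in
lemma fr_lap (t : ℝ) (ht : 0 < t) :
    IntegrableOn (fun u : ℝ => Real.cos u * Real.exp (-(t * u))) (Ioi 0) ∧
    ∫ u in Ioi (0:ℝ), Real.sin u * Real.exp (-(t * u)) = 1 / (1 + t ^ 2) ∧
    ∫ u in Ioi (0:ℝ), Real.cos u * Real.exp (-(t * u)) = t / (1 + t ^ 2) := by
  have hre : ((-t : ℂ) + Complex.I).re < 0 := by simpa using ht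
  have hi := integrableOn_exp_mul_complex_Ioi hre 0
  have hv := integral_exp_mul_complex_Ioi hre 0
  have e : ∀ u : ℝ, Complex.exp (((-t : ℂ) + Complex.I) * u)
      = ⟨Real.cos u * Real.exp (-(t * u)), Real.sin u * Real.exp (-(t * u))⟩ := by
    intro u
    apply Complex.ext
    · simp [Complex.exp_re, mul_comm]
    · simp [Complex.exp_im, mul_comm]
  have hr := integral_re hi
  have him := integral_im hi
  have hc := hi.re
  rw [hv] at hr him
  simp only [e] at hr him hc
  have hpos : (1 + t ^ 2) ≠ 0 := by positivity
  refine ⟨hc, ?_, ?_⟩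
  · refine Eq.trans him ?_
    simp [Complex.div_im, Complex.normSq_apply]
    ring_nf
  · refine Eq.trans hr ?_
    simp [Complex.div_re, Complex.normSq_apply]
    ring_nf

open MeasureTheory Set in
lemma fr_lap2 (t : ℝ) (ht : 0 < t) :
    ∫ u in Ioi (0:ℝ), (1 - Real.cos u) * Real.exp (-(t * u)) = t⁻¹ * (1 / (1 + t ^ 2)) := by
  obtain ⟨hc, -, hv⟩ := fr_lap t ht
  have h1 : IntegrableOn (fun u : ℝ => Real.exp (-(t * u))) (Ioi 0) := by
    simpa only [neg_mul] using integrableOn_exp_mul_Ioi (a := -t) (by linarith) 0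
  have h2 : ∫ u in Ioi (0:ℝ), Real.exp (-(t * u)) = 1 / t := by
    have := integral_exp_mul_Ioi (a := -t) (by linarith) 0
    simpa only [neg_mul, mul_zero, neg_zero, Real.exp_zero, neg_div_neg_eq] using this
  simp only [sub_mul, one_mul]
  rw [integral_sub h1 hc, h2, hv]
  field_simp
  ring

open MeasureTheory Set in
lemma fr_int0 (f : ℝ → ℝ) (hf : Continuous f) (k s T : ℝ) (hk : ∀ u, 0 < u → |f u| ≤ u ^ k)
    (hks : -1 < k - s) (hT : 0 ≤ T) : IntegrableOn (fun u => f u * u ^ (-s)) (Ioc 0 T) := by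
  have h := (intervalIntegrable_iff_integrableOn_Ioc_of_le hT).1
    (intervalIntegral.intervalIntegrable_rpow' (a := 0) (b := T) hks)
  refine Integrable.mono' h ?_ ?_
  · have := hf.measurable
    exact Measurable.aestronglyMeasurable (by fun_prop)
  · filter_upwards [ae_restrict_mem measurableSet_Ioc] with u hu
    have hu0 : 0 < u := hu.1
    have hp := Real.rpow_nonneg hu0.le (-s)
    rw [norm_mul, Real.norm_eq_abs, Real.norm_eq_abs, abs_of_nonneg hp, sub_eq_add_neg,
      Real.rpow_add hu0]
    exact mul_le_mul_of_nonneg_right (hk u hu0) hp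

open MeasureTheory Set in
lemma fr_int (f : ℝ → ℝ) (hf : Continuous f) (k s : ℝ) (hk : ∀ u, 0 < u → |f u| ≤ u ^ k)
    (h2 : ∀ u, |f u| ≤ 2)
    (hks : -1 < k - s) (hs : 1 < s) : IntegrableOn (fun u => f u * u ^ (-s)) (Ioi 0) := by
  rw [← Ioc_union_Ioi_eq_Ioi (zero_le_one (α := ℝ))]
  refine (fr_int0 f hf k s 1 hk hks zero_le_one).union ?_
  have h := (integrableOn_Ioi_rpow_of_lt (a := -s) (by linarith) one_pos).const_mul 2
  refine Integrable.mono' h ?_ ?_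
  · have := hf.measurable
    exact Measurable.aestronglyMeasurable (by fun_prop)
  · filter_upwards [ae_restrict_mem measurableSet_Ioi] with u hu
    have hu0 : 0 < u := lt_trans one_pos hu
    have hp := Real.rpow_nonneg hu0.le (-s)
    rw [norm_mul, Real.norm_eq_abs, Real.norm_eq_abs, abs_of_nonneg hp]
    exact mul_le_mul_of_nonneg_right (h2 u) hp

open MeasureTheory Set in
lemma fr_ibp (f g : ℝ → ℝ) (hf : Continuous f) (hg : Continuous g)
    (hd : ∀ u, HasDerivAt f (g u) u) (hf0 : f 0 = 0) (k ν : ℝ)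
    (hk : ∀ u, 0 < u → |f u| ≤ u ^ k) (h2 : ∀ u, |f u| ≤ 2)
    (hgk : ∀ u, 0 < u → |g u| ≤ u ^ (k - 1)) (hν : 0 < ν) (hνk : ν < k) :
    Tendsto (fun T : ℝ => ∫ u in (0:ℝ)..T, g u / u ^ ν) atTop
      (𝓝 (ν * ∫ u in Ioi (0:ℝ), f u * u ^ (-(ν + 1)))) := by
  have hI := fr_int f hf k (ν + 1) hk h2 (by linarith) (by linarith)
  have hlim := (intervalIntegral_tendsto_integral_Ioi 0 hI tendsto_id).const_mul ν
  have hbd : Tendsto (fun T : ℝ => f T * T ^ (-ν)) atTop (𝓝 0) := by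
    have h := (tendsto_rpow_neg_atTop hν).const_mul 2
    rw [mul_zero] at h
    refine squeeze_zero_norm' ?_ h
    filter_upwards [eventually_gt_atTop 0] with u hu0
    have hp := Real.rpow_nonneg hu0.le (-ν)
    rw [norm_mul, Real.norm_eq_abs, Real.norm_eq_abs, abs_of_nonneg hp]
    exact mul_le_mul_of_nonneg_right (h2 u) hp
  have hsum := hbd.add hlim
  rw [zero_add] at hsum
  refine hsum.congr' ?_
  filter_upwards [eventually_gt_atTop 0] with T hT
  have hi1 : IntervalIntegrable (fun u => g u * u ^ (-ν)) volume 0 T :=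
    (intervalIntegrable_iff_integrableOn_Ioc_of_le hT.le).2
      (fr_int0 g hg (k - 1) ν T hgk (by linarith) hT.le)
  have hi2 : IntervalIntegrable (fun u => f u * u ^ (-(ν + 1))) volume 0 T :=
    (intervalIntegrable_iff_integrableOn_Ioc_of_le hT.le).2
      (fr_int0 f hf k (ν + 1) T hk (by linarith) hT.le)
  have hcont : ContinuousOn (fun u => f u * u ^ (-ν)) (Icc 0 T) := by
    intro x hx
    rcases eq_or_lt_of_le hx.1 with h | h
    · subst h
      have h1 : Tendsto (fun u : ℝ => u ^ (k - ν)) (𝓝[Icc 0 T] 0) (𝓝 0) := by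
        have := (Real.continuousAt_rpow_const 0 (k - ν) (Or.inr (by linarith))).tendsto
        rw [Real.zero_rpow (by linarith)] at this
        exact this.mono_left nhdsWithin_le_nhds
      unfold ContinuousWithinAt
      simp only [hf0, zero_mul]
      refine squeeze_zero_norm' ?_ h1
      filter_upwards [self_mem_nhdsWithin] with u hu
      rcases eq_or_lt_of_le hu.1 with h | hu0
      · subst h
        simp only [hf0, zero_mul, norm_zero]
        exact Real.rpow_nonneg le_rfl _
      · have hp := Real.rpow_nonneg hu0.le (-ν)
        rw [norm_mul, Real.norm_eq_abs, Real.norm_eq_abs, abs_of_nonneg hp, sub_eq_add_neg,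
          Real.rpow_add hu0]
        exact mul_le_mul_of_nonneg_right (hk u hu0) hp
    · exact (hf.continuousAt.mul
        (Real.continuousAt_rpow_const x (-ν) (Or.inl h.ne'))).continuousWithinAt
  have hF := intervalIntegral.integral_eq_sub_of_hasDerivAt_of_le hT.le hcont
    (f' := fun u => g u * u ^ (-ν) - ν * (f u * u ^ (-(ν + 1)))) (by
      intro x hx
      have := (hd x).mul (Real.hasDerivAt_rpow_const (x := x) (p := -ν) (Or.inl hx.1.ne'))
      refine HasDerivAt.congr_deriv this ?_
      rw [show -(ν + 1) = -ν - 1 by ring]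
      ring) (hi1.sub (hi2.const_mul ν))
  rw [intervalIntegral.integral_sub hi1 (hi2.const_mul ν),
    intervalIntegral.integral_const_mul, hf0, zero_mul, sub_zero] at hF
  simp only [id]
  rw [← hF, sub_add_cancel]
  refine intervalIntegral.integral_congr ?_
  intro u hu
  rw [uIcc_of_le hT.le] at hu
  simp only
  rw [Real.rpow_neg hu.1, div_eq_mul_inv]

open MeasureTheory Set in
lemma fr_sin (ν : ℝ) (h0 : 0 < ν) (h2 : ν < 2) :
    Tendsto (fun T : ℝ => ∫ u in (0:ℝ)..T, Real.sin u / u ^ ν) atTop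
      (𝓝 (Real.pi / (2 * Real.sin (Real.pi * ν / 2)) / Real.Gamma ν)) := by
  have hf : Continuous fun u => 1 - Real.cos u := by fun_prop
  have hk : ∀ u : ℝ, 0 < u → |1 - Real.cos u| ≤ u ^ (2:ℝ) := by
    intro u hu
    rw [Real.rpow_two, abs_of_nonneg (by linarith [Real.cos_le_one u])]
    have := Real.one_sub_sq_div_two_le_cos (x := u)
    nlinarith
  have hb : ∀ u : ℝ, |1 - Real.cos u| ≤ 2 := by
    intro u
    rw [abs_of_nonneg (by linarith [Real.cos_le_one u])]
    linarith [Real.neg_one_le_cos u]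
  have key := fr_ibp (fun u => 1 - Real.cos u) Real.sin hf Real.continuous_sin
    (fun u => by simpa using (Real.hasDerivAt_cos u).const_sub 1) (by simp) 2 ν hk hb
    (fun u hu => by
      rw [show (2:ℝ) - 1 = 1 by norm_num, Real.rpow_one]
      simpa [abs_of_pos hu] using Real.abs_sin_le_abs (x := u)) h0 h2
  have hF := fr_fubini _ hf (ν + 1) (by linarith)
    (fr_int _ hf 2 (ν + 1) hk hb (by linarith) (by linarith))
  have hR : ∫ t in Ioi (0:ℝ), t ^ (ν + 1 - 1) *
      ∫ u in Ioi (0:ℝ), (1 - Real.cos u) * Real.exp (-(t * u))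
      = ∫ t in Ioi (0:ℝ), t ^ (ν - 1) * (1 / (1 + t ^ 2)) := by
    refine setIntegral_congr_fun measurableSet_Ioi ?_
    intro t ht
    have ht' : (0:ℝ) < t := ht
    simp only
    rw [fr_lap2 t ht', ← mul_assoc, add_sub_cancel_right, Real.rpow_sub_one ht'.ne',
      div_eq_mul_inv (t ^ ν)]
  rw [hR, fr_beta2 ν h0 h2, Real.Gamma_add_one h0.ne'] at hF
  convert key using 2
  rw [← hF]
  have := (Real.Gamma_pos_of_pos h0).ne'
  field_simp

open MeasureTheory Set in
lemma fr_cos (ν : ℝ) (h0 : 0 < ν) (h1 : ν < 1) :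
    Tendsto (fun T : ℝ => ∫ u in (0:ℝ)..T, Real.cos u / u ^ ν) atTop
      (𝓝 (Real.pi / (2 * Real.cos (Real.pi * ν / 2)) / Real.Gamma ν)) := by
  have hk : ∀ u : ℝ, 0 < u → |Real.sin u| ≤ u ^ (1:ℝ) := by
    intro u hu
    rw [Real.rpow_one]
    simpa [abs_of_pos hu] using Real.abs_sin_le_abs (x := u)
  have hb : ∀ u : ℝ, |Real.sin u| ≤ 2 := fun u => (Real.abs_sin_le_one u).trans one_le_two
  have key := fr_ibp Real.sin Real.cos Real.continuous_sin Real.continuous_cos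
    Real.hasDerivAt_sin Real.sin_zero 1 ν hk hb
    (fun u hu => by simpa using Real.abs_cos_le_one u) h0 h1
  have hF := fr_fubini _ Real.continuous_sin (ν + 1) (by linarith)
    (fr_int _ Real.continuous_sin 1 (ν + 1) hk hb (by linarith) (by linarith))
  have hR : ∫ t in Ioi (0:ℝ), t ^ (ν + 1 - 1) *
      ∫ u in Ioi (0:ℝ), Real.sin u * Real.exp (-(t * u))
      = ∫ t in Ioi (0:ℝ), t ^ (ν + 1 - 1) * (1 / (1 + t ^ 2)) := by
    refine setIntegral_congr_fun measurableSet_Ioi ?_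
    intro t ht
    simp only
    rw [(fr_lap t ht).2.1]
  rw [hR, fr_beta2 (ν + 1) (by linarith) (by linarith), Real.Gamma_add_one h0.ne',
    show Real.pi * (ν + 1) / 2 = Real.pi * ν / 2 + Real.pi / 2 by ring,
    Real.sin_add_pi_div_two] at hF
  convert key using 2
  rw [← hF]
  have := (Real.Gamma_pos_of_pos h0).ne'
  field_simp

/-- Reflection formula rewritten with the half angle. -/
lemma fr_refl (ν : ℝ) (h0 : 0 < ν) :
    Real.Gamma (1 - ν) =
      Real.pi / (2 * Real.sin (Real.pi * ν / 2) * Real.cos (Real.pi * ν / 2)) / Real.Gamma ν := by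
  have h := Real.Gamma_mul_Gamma_one_sub ν
  rw [show Real.pi * ν = 2 * (Real.pi * ν / 2) by ring, Real.sin_two_mul] at h
  have := (Real.Gamma_pos_of_pos h0).ne'
  rw [eq_div_iff this, mul_comm, h]

/-- Classical Fresnel-type integrals: for `0 < ν < 1`,
`∫₀^∞ cos u / u^ν du = Γ(1−ν) sin(πν/2)`; for `0 < ν < 2`, `ν ≠ 1`,
`∫₀^∞ sin u / u^ν du = Γ(1−ν) cos(πν/2)`; and for `ν = 1` the latter equals `π/2`.
The integrals are improper Riemann integrals `lim_{T→∞} ∫₀^T`. -/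
theorem stmt0 (ν : ℝ) :
    ((0 < ν ∧ ν < 1) →
      Tendsto (fun T : ℝ => ∫ u in (0:ℝ)..T, Real.cos u / u ^ ν) atTop
        (𝓝 (Real.Gamma (1 - ν) * Real.sin (Real.pi * ν / 2)))) ∧
    ((0 < ν ∧ ν < 2 ∧ ν ≠ 1) →
      Tendsto (fun T : ℝ => ∫ u in (0:ℝ)..T, Real.sin u / u ^ ν) atTop
        (𝓝 (Real.Gamma (1 - ν) * Real.cos (Real.pi * ν / 2)))) ∧
    (ν = 1 →
      Tendsto (fun T : ℝ => ∫ u in (0:ℝ)..T, Real.sin u / u ^ ν) atTop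
        (𝓝 (Real.pi / 2))) := by
  have hpi := Real.pi_pos
  have hsin : 0 < ν → ν < 2 → Real.sin (Real.pi * ν / 2) ≠ 0 := fun h0 h2 =>
    (Real.sin_pos_of_pos_of_lt_pi (by positivity) (by nlinarith)).ne'
  refine ⟨?_, ?_, ?_⟩
  · rintro ⟨h0, h1⟩
    convert fr_cos ν h0 h1 using 2
    rw [fr_refl ν h0]
    have hs := hsin h0 (by linarith)
    have hc : Real.cos (Real.pi * ν / 2) ≠ 0 :=
      (Real.cos_pos_of_mem_Ioo ⟨by nlinarith, by nlinarith⟩).ne'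
    have := (Real.Gamma_pos_of_pos h0).ne'
    generalize Real.sin (Real.pi * ν / 2) = x at *
    generalize Real.cos (Real.pi * ν / 2) = y at *
    field_simp
  · rintro ⟨h0, h2, h1⟩
    convert fr_sin ν h0 h2 using 2
    rw [fr_refl ν h0]
    have hs := hsin h0 h2
    have hc : Real.cos (Real.pi * ν / 2) ≠ 0 := by
      rcases lt_or_gt_of_ne h1 with h | h
      · exact (Real.cos_pos_of_mem_Ioo ⟨by nlinarith, by nlinarith⟩).ne'
      · exact (Real.cos_neg_of_pi_div_two_lt_of_lt (by nlinarith) (by nlinarith)).ne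
    have := (Real.Gamma_pos_of_pos h0).ne'
    generalize Real.sin (Real.pi * ν / 2) = x at *
    generalize Real.cos (Real.pi * ν / 2) = y at *
    field_simp
  · rintro rfl
    convert fr_sin 1 one_pos one_lt_two using 2
    simp
end

section
/- Let Y be a strictly stable process on ℝ of index α ∈ (1,2) with skewness parameter γ, |γ| ≤ 2−α, whose density at time t is 𝔭_t. Then ∫_{−∞}^{∞} 𝔭_t(x)·|x| dx = (2 t^{1/α}/π)·Γ(1 − 1/α)·sin(π(α−γ)/(2α)). -/
open Filter Topology

/-- The characteristic exponent `ψ(θ) = e^{i sgn(θ) πγ/2} |θ|^α` of a strictly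
stable law of index `α` with skewness parameter `γ`. -/
noncomputable def stableExponent (α γ θ : ℝ) : ℂ :=
  Complex.exp (Complex.I * (Real.pi * γ / 2) * Real.sign θ) * ((|θ| ^ α : ℝ) : ℂ)

/-- The continuous density `𝔭_t(x)` of `Y_t`, where `Y` is the stable process
with `E[e^{iθ Y_t}] = e^{−tψ(θ)}`, obtained by Fourier inversion. -/
noncomputable def stableDensity (α γ t x : ℝ) : ℝ :=
  (1 / (2 * Real.pi)) *
    ∫ θ : ℝ, (Complex.exp (-(t : ℂ) * stableExponent α γ θ - Complex.I * θ * x)).re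

open MeasureTheory Set

lemma aux_young (α a b : ℝ) (hα : 1 < α) (ha : 0 < a) :
    ∃ C : ℝ, ∀ s : ℝ, 0 < s → b * s ≤ a * s ^ α + C := by
  refine ⟨|b| * ((|b| / a) ^ (1 / (α - 1))), fun s hs => ?_⟩
  have hb : b ≤ |b| := le_abs_self b
  have hb0 : 0 ≤ |b| := abs_nonneg b
  rcases le_total s ((|b| / a) ^ (1 / (α - 1))) with h | h
  · have h1 : b * s ≤ |b| * s := by gcongr
    have h2 : |b| * s ≤ |b| * ((|b| / a) ^ (1 / (α - 1))) := by gcongr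
    have h3 : 0 ≤ a * s ^ α := by positivity
    linarith
  · have h1 : |b| / a ≤ s ^ (α - 1) := by
      have := Real.rpow_le_rpow (by positivity) h (by linarith : 0 ≤ α - 1)
      rwa [← Real.rpow_mul (by positivity), one_div, inv_mul_cancel₀ (by linarith),
        Real.rpow_one] at this
    have h2 : |b| ≤ a * s ^ (α - 1) := by
      rw [div_le_iff₀ ha] at h1; linarith
    have h3 : s ^ α = s ^ (α - 1) * s := by
      rw [← Real.rpow_add_one hs.ne']; ring_nf
    have h4 : 0 ≤ |b| * ((|b| / a) ^ (1 / (α - 1))) := by positivity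
    have h5 : |b| * s ≤ a * s ^ (α - 1) * s := by gcongr
    have h6 : b * s ≤ |b| * s := by gcongr
    rw [h3]; linarith

lemma aux_meas (α k : ℝ) (c w l : ℂ) : Measurable
    (fun s : ℝ => ((s ^ k : ℝ) : ℂ) * Complex.exp (c - w * ((s ^ α : ℝ) : ℂ) - l * s)) := by
  fun_prop

/-- uniform norm bound -/
lemma aux_bound (α a M : ℝ) (hα : 1 < α) (ha : 0 < a) :
    ∃ C : ℝ, 0 < C ∧ ∀ (k : ℝ) (c w l : ℂ) (s : ℝ), 0 < s → c.re = 0 → a ≤ w.re → -l.re ≤ M →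
      ‖((s ^ k : ℝ) : ℂ) * Complex.exp (c - w * ((s ^ α : ℝ) : ℂ) - l * s)‖ ≤
        C * (s ^ k * Real.exp (-(a / 2) * s ^ α)) := by
  obtain ⟨C, hC⟩ := aux_young α (a / 2) M hα (by linarith)
  refine ⟨Real.exp C, Real.exp_pos _, fun k c w l s hs hc hw hl => ?_⟩
  have hsk : 0 < s ^ k := Real.rpow_pos_of_pos hs _
  have hsa : 0 < s ^ α := Real.rpow_pos_of_pos hs _
  rw [norm_mul, Complex.norm_exp, Complex.norm_real, Real.norm_of_nonneg hsk.le]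
  have e : (c - w * ((s ^ α : ℝ) : ℂ) - l * s).re = - w.re * s ^ α - l.re * s := by
    simp [hc]
  rw [e, mul_left_comm, ← Real.exp_add]
  gcongr
  have h1 := hC s hs
  have h2 : a * s ^ α ≤ w.re * s ^ α := by gcongr
  have h3 : -l.re * s ≤ M * s := by gcongr
  linarith

lemma aux_int (α k : ℝ) (c w l : ℂ) (hα : 1 < α) (hk : -1 < k) (hw : 0 < w.re) :
    IntegrableOn (fun s : ℝ => ((s ^ k : ℝ) : ℂ) *
      Complex.exp (c - w * ((s ^ α : ℝ) : ℂ) - l * s)) (Ioi 0) := by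
  obtain ⟨C, hC, h⟩ := aux_bound α w.re (-l.re) hα hw
  have h0 : IntegrableOn (fun s : ℝ => ((s ^ k : ℝ) : ℂ) *
      Complex.exp (0 - w * ((s ^ α : ℝ) : ℂ) - l * s)) (Ioi 0) := by
    refine Integrable.mono' (((integrableOn_rpow_mul_exp_neg_mul_rpow hk (by linarith : 0 < α)
      (by linarith : 0 < w.re / 2))).const_mul C) (aux_meas α k 0 w l).aestronglyMeasurable ?_
    filter_upwards [ae_restrict_mem measurableSet_Ioi] with s hs
    exact h k 0 w l s hs rfl le_rfl le_rfl
  refine (h0.const_mul (Complex.exp c)).congr (Eventually.of_forall fun s => ?_)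
  simp only []
  rw [mul_left_comm, ← Complex.exp_add]
  ring_nf

lemma aux_deriv_s (α k : ℝ) (c w l : ℂ) (s : ℝ) (hs : 0 < s) :
    HasDerivAt (fun s : ℝ => ((s ^ (k + 1) : ℝ) : ℂ) *
        Complex.exp (c - w * ((s ^ α : ℝ) : ℂ) - l * s))
      (((k + 1 : ℝ) - α * w * ((s ^ α : ℝ) : ℂ) - l * s) * (((s ^ k : ℝ) : ℂ) *
        Complex.exp (c - w * ((s ^ α : ℝ) : ℂ) - l * s))) s := by
  have h1 : HasDerivAt (fun s : ℝ => ((s ^ (k + 1) : ℝ) : ℂ)) _ s :=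
    ((Real.hasDerivAt_rpow_const (p := k + 1) (Or.inl hs.ne'))).ofReal_comp
  have h2 : HasDerivAt (fun s : ℝ => ((s ^ α : ℝ) : ℂ)) _ s :=
    ((Real.hasDerivAt_rpow_const (p := α) (Or.inl hs.ne'))).ofReal_comp
  have h3 : HasDerivAt (fun s : ℝ => (s : ℂ)) _ s := (hasDerivAt_id s).ofReal_comp
  have h4 := h1.mul ((((h2.const_mul w).const_sub c).sub (h3.const_mul l)).cexp)
  refine h4.congr_deriv ?_
  have e1 : s ^ (k + 1) = s ^ k * s := Real.rpow_add_one hs.ne' k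
  have e2 : s ^ α = s ^ (α - 1) * s := by
    rw [← Real.rpow_add_one hs.ne']; ring_nf
  simp only [add_sub_cancel_right, Pi.sub_apply]
  rw [e1, e2]
  push_cast
  ring

lemma aux_deriv_s_int (α k : ℝ) (c w l : ℂ) (hα : 1 < α) (hk : -1 < k) (hw : 0 < w.re) :
    IntegrableOn (fun s : ℝ => ((k + 1 : ℝ) - α * w * ((s ^ α : ℝ) : ℂ) - l * s) *
      (((s ^ k : ℝ) : ℂ) * Complex.exp (c - w * ((s ^ α : ℝ) : ℂ) - l * s))) (Ioi 0) := by
  have i0 := (aux_int α k c w l hα hk hw).const_mul ((k + 1 : ℝ) : ℂ)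
  have i1 := (aux_int α (k + α) c w l hα (by linarith) hw).const_mul (α * w)
  have i2 := (aux_int α (k + 1) c w l hα (by linarith) hw).const_mul l
  refine ((i0.sub i1).sub i2).congr ?_
  filter_upwards [ae_restrict_mem measurableSet_Ioi] with s hs
  have hs : 0 < s := hs
  simp only [Pi.sub_apply]
  rw [Real.rpow_add_one hs.ne' k, Real.rpow_add hs k α]
  push_cast
  ring

lemma aux_deriv_s_zero (α k : ℝ) (c w l : ℂ) (hα : 1 < α) (hk : -1 < k) (hw : 0 < w.re) :
    ∫ s in Ioi (0 : ℝ), ((k + 1 : ℝ) - α * w * ((s ^ α : ℝ) : ℂ) - l * s) *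
      (((s ^ k : ℝ) : ℂ) * Complex.exp (c - w * ((s ^ α : ℝ) : ℂ) - l * s)) = 0 := by
  have hd := fun s (hs : s ∈ Ioi (0 : ℝ)) => aux_deriv_s α k c w l s hs
  have hi := aux_deriv_s_int α k c w l hα hk hw
  have ht := tendsto_zero_of_hasDerivAt_of_integrableOn_Ioi hd hi
    (aux_int α (k + 1) c w l hα (by linarith) hw)
  rw [integral_Ioi_of_hasDerivAt_of_tendsto ?_ hd hi ht]
  · rw [Real.zero_rpow (by linarith)]; simp
  · refine Continuous.continuousWithinAt ?_
    have c1 : Continuous fun s : ℝ => s ^ (k + 1) :=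
      Real.continuous_rpow_const (by linarith)
    have c2 : Continuous fun s : ℝ => s ^ α :=
      Real.continuous_rpow_const (by linarith)
    fun_prop

/-- The integrand rotated by the angle `η`. -/
noncomputable def rotG (α k t β x η s : ℝ) : ℂ :=
  ((s ^ k : ℝ) : ℂ) * Complex.exp ((-Complex.I * (k + 1 : ℝ) * η) -
    (t * Complex.exp (Complex.I * (β - α * η : ℝ))) * ((s ^ α : ℝ) : ℂ) -
      (Complex.I * Complex.exp (-Complex.I * η) * x) * s)

lemma rot_deriv (α k t β x η s : ℝ) :
    HasDerivAt (fun η => rotG α k t β x η s)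
      (-Complex.I * (((k + 1 : ℝ) - α * (t * Complex.exp (Complex.I * (β - α * η : ℝ))) *
        ((s ^ α : ℝ) : ℂ) - (Complex.I * Complex.exp (-Complex.I * η) * x) * s) *
        rotG α k t β x η s)) η := by
  unfold rotG
  have h3 : HasDerivAt (fun s : ℝ => (s : ℂ)) _ η := (hasDerivAt_id η).ofReal_comp
  have h4 : HasDerivAt (fun η : ℝ => ((β - α * η : ℝ) : ℂ)) _ η :=
    (((hasDerivAt_id η).const_mul α).const_sub β).ofReal_comp
  have h5 := ((((h3.const_mul (-Complex.I * (k + 1 : ℝ))).sub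
    (((((h4.const_mul Complex.I).cexp).const_mul (t : ℂ))).mul_const ((s ^ α : ℝ) : ℂ))).sub
    (((((h3.const_mul (-Complex.I)).cexp).const_mul Complex.I).mul_const (x : ℂ)).mul_const
      (s : ℂ))).cexp).const_mul ((s ^ k : ℝ) : ℂ)
  refine h5.congr_deriv ?_
  simp only [Pi.sub_apply]
  push_cast
  ring

lemma re_w (t φ : ℝ) : ((t : ℂ) * Complex.exp (Complex.I * (φ : ℝ))).re = t * Real.cos φ := by
  rw [mul_comm Complex.I, Complex.re_ofReal_mul, Complex.exp_ofReal_mul_I_re]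

lemma rot_eq (α k t β x ρ η : ℝ) (hα : 1 < α) (hk : -1 < k) (ht : 0 < t)
    (hρ : ρ < Real.pi / 2) (hβ : |β| < ρ) (hη : |β - α * η| < ρ) :
    ∫ s in Ioi (0 : ℝ), rotG α k t β x 0 s = ∫ s in Ioi (0 : ℝ), rotG α k t β x η s := by
  set S : Set ℝ := {η | |β - α * η| < ρ} with hS
  have hSo : IsOpen S := isOpen_lt (by fun_prop) continuous_const
  have hSc : Convex ℝ S := by
    have : S = Ioo ((β - ρ) / α) ((β + ρ) / α) := by
      ext u
      change |β - α * u| < ρ ↔ _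
      rw [abs_lt, mem_Ioo, div_lt_iff₀ (by linarith), lt_div_iff₀ (by linarith)]
      constructor
      · rintro ⟨h1, h2⟩
        constructor <;> linarith
      · rintro ⟨h1, h2⟩
        constructor <;> linarith
    rw [this]
    exact convex_Ioo _ _
  have hcos : 0 < Real.cos ρ := Real.cos_pos_of_mem_Ioo ⟨by linarith [abs_nonneg β], hρ⟩
  have hw : ∀ η ∈ S, t * Real.cos ρ ≤
      ((t : ℂ) * Complex.exp (Complex.I * (β - α * η : ℝ))).re := by
    intro η hη
    rw [re_w, ← Real.cos_abs (β - α * η)]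
    gcongr
    exact Real.cos_le_cos_of_nonneg_of_le_pi (abs_nonneg _) (by linarith [Real.pi_pos]) (le_of_lt hη)
  have hwpos : 0 < t * Real.cos ρ := by positivity
  have hl1 : ∀ η : ℝ, ‖Complex.I * Complex.exp (-Complex.I * η) * x‖ = |x| := by
    intro η
    rw [show -Complex.I * (η : ℂ) = ((-η : ℝ) : ℂ) * Complex.I by push_cast; ring]
    rw [norm_mul, norm_mul, Complex.norm_exp_ofReal_mul_I]
    simp
  have hl : ∀ η : ℝ, -(Complex.I * Complex.exp (-Complex.I * η) * x).re ≤ |x| := by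
    intro η
    rw [← hl1 η]
    exact (neg_le_abs _).trans (Complex.abs_re_le_norm _)
  have hc : ∀ η : ℝ, (-Complex.I * ((k + 1 : ℝ) : ℂ) * (η : ℂ)).re = 0 := by
    intro η; simp
  obtain ⟨C, hC, hb⟩ := aux_bound α (t * Real.cos ρ) |x| hα hwpos
  have key : ∀ η ∈ S, HasDerivAt (fun η => ∫ s in Ioi (0 : ℝ), rotG α k t β x η s) 0 η := by
    intro η hη
    have hd := hasDerivAt_integral_of_dominated_loc_of_deriv_le (μ := volume.restrict (Ioi (0 : ℝ)))
      (F := fun η s => rotG α k t β x η s)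
      (bound := fun s => (|k + 1| + α * t * s ^ α + |x| * s) *
        (C * (s ^ k * Real.exp (-(t * Real.cos ρ / 2) * s ^ α))))
      (hSo.mem_nhds hη)
      (Eventually.of_forall fun η => (aux_meas α k _ _ _).aestronglyMeasurable)
      (aux_int α k _ _ _ hα hk (hwpos.trans_le (hw η hη)))
      ((aux_deriv_s_int α k _ _ _ hα hk (hwpos.trans_le (hw η hη))).const_mul
        (-Complex.I)).aestronglyMeasurable
      ?_ ?_ (Eventually.of_forall fun s η _ => rot_deriv α k t β x η s)
    · have h2 := hd.2
      rw [integral_const_mul] at h2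
      unfold rotG at h2
      rw [aux_deriv_s_zero α k _ _ _ hα hk (hwpos.trans_le (hw η hη)), mul_zero] at h2
      exact h2
    · filter_upwards [ae_restrict_mem measurableSet_Ioi] with s hs η hη
      have hs : 0 < s := hs
      rw [norm_mul, norm_mul, norm_neg, Complex.norm_I, one_mul]
      gcongr
      · refine (norm_sub_le _ _).trans ?_
        gcongr
        · refine (norm_sub_le _ _).trans ?_
          gcongr
          · rw [Complex.norm_real]; exact le_rfl
          · rw [mul_comm Complex.I, norm_mul, norm_mul, norm_mul, Complex.norm_exp_ofReal_mul_I,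
              Complex.norm_real, Complex.norm_real, Complex.norm_real, Real.norm_of_nonneg ht.le,
              Real.norm_of_nonneg (by positivity), Real.norm_of_nonneg (by positivity), mul_one]
        · rw [norm_mul, hl1, Complex.norm_real, Real.norm_of_nonneg hs.le]
      · exact hb k _ _ _ s hs (hc η) (hw η hη) (hl η)
    · have i := fun k hk => integrableOn_rpow_mul_exp_neg_mul_rpow (s := k) hk (by linarith : 0 < α)
        (by linarith : 0 < t * Real.cos ρ / 2)
      have i0 := (i k hk).const_mul (|k + 1| * C)
      have i1 := (i (k + α) (by linarith)).const_mul (α * t * C)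
      have i2 := (i (k + 1) (by linarith)).const_mul (|x| * C)
      refine ((i0.add i1).add i2).congr ?_
      filter_upwards [ae_restrict_mem measurableSet_Ioi] with s hs
      have hs : 0 < s := hs
      simp only [Pi.add_apply]
      rw [Real.rpow_add_one hs.ne' k, Real.rpow_add hs k α]
      ring
  have := hSo.is_const_of_fderiv_eq_zero (𝕜 := ℝ) hSc.isPreconnected
    (fun η hη => (key η hη).differentiableAt.differentiableWithinAt) (fun η hη => by
      ext; simp [(key η hη).deriv]) (x := 0) (y := η) (by simpa [hS] using hβ) hη
  exact this

lemma parts (α : ℝ) (c w l : ℂ) (hα : 1 < α) (hw : 0 < w.re) :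
    l * ∫ s in Ioi (0 : ℝ), (((s ^ (0 : ℝ) : ℝ) : ℂ) *
      Complex.exp (c - w * ((s ^ α : ℝ) : ℂ) - l * s)) =
    Complex.exp c - α * w * ∫ s in Ioi (0 : ℝ), (((s ^ (α - 1) : ℝ) : ℂ) *
      Complex.exp (c - w * ((s ^ α : ℝ) : ℂ) - l * s)) := by
  have i0 := aux_int α 0 c w l hα (by norm_num) hw
  have i1 := aux_int α (α - 1) c w l hα (by linarith) hw
  have hd : ∀ s ∈ Ioi (0 : ℝ), HasDerivAt (fun s : ℝ =>
      Complex.exp (c - w * ((s ^ α : ℝ) : ℂ) - l * s))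
      (-(α * w * (((s ^ (α - 1) : ℝ) : ℂ) *
      Complex.exp (c - w * ((s ^ α : ℝ) : ℂ) - l * s))) - l * (((s ^ (0 : ℝ) : ℝ) : ℂ) *
      Complex.exp (c - w * ((s ^ α : ℝ) : ℂ) - l * s))) s := by
    intro s hs
    have hs : 0 < s := hs
    have h2 : HasDerivAt (fun s : ℝ => ((s ^ α : ℝ) : ℂ)) _ s :=
      ((Real.hasDerivAt_rpow_const (p := α) (Or.inl hs.ne'))).ofReal_comp
    have h3 : HasDerivAt (fun s : ℝ => (s : ℂ)) _ s := (hasDerivAt_id s).ofReal_comp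
    have h4 := ((((h2.const_mul w).const_sub c).sub (h3.const_mul l)).cexp)
    refine h4.congr_deriv ?_
    simp only [Pi.sub_apply, Real.rpow_zero]
    push_cast
    ring
  have hi := ((i1.const_mul (α * w)).neg).sub (i0.const_mul l)
  have hE : IntegrableOn (fun s : ℝ => Complex.exp (c - w * ((s ^ α : ℝ) : ℂ) - l * s)) (Ioi 0) := by
    simpa using i0
  have ht := tendsto_zero_of_hasDerivAt_of_integrableOn_Ioi hd hi hE
  have := integral_Ioi_of_hasDerivAt_of_tendsto ?_ hd hi ht
  · have hsub := integral_sub ((i1.const_mul (α * w)).neg) (i0.const_mul l)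
    simp only [Pi.neg_apply] at hsub
    rw [hsub, integral_neg,
      integral_const_mul, integral_const_mul, Real.zero_rpow (by linarith)] at this
    simp only [Complex.ofReal_zero, mul_zero, sub_zero] at this
    linear_combination -this
  · refine Continuous.continuousWithinAt ?_
    have c2 : Continuous fun s : ℝ => s ^ α :=
      Real.continuous_rpow_const (by linarith)
    fun_prop

lemma fubini_part (α : ℝ) (c w l : ℂ) (hα : 1 < α) (hw : 0 < w.re) (hl : 0 < l.re) :
    IntegrableOn (fun x : ℝ => ∫ s in Ioi (0 : ℝ), (((s ^ (α - 1) : ℝ) : ℂ) *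
      Complex.exp (c - w * ((s ^ α : ℝ) : ℂ) - (l * x) * s))) (Ioi 0) ∧
    ∫ x in Ioi (0 : ℝ), ∫ s in Ioi (0 : ℝ), (((s ^ (α - 1) : ℝ) : ℂ) *
      Complex.exp (c - w * ((s ^ α : ℝ) : ℂ) - (l * x) * s)) =
    l⁻¹ * ∫ s in Ioi (0 : ℝ), (((s ^ (α - 2) : ℝ) : ℂ) *
      Complex.exp (c - w * ((s ^ α : ℝ) : ℂ) - 0 * s)) := by
  have hl0 : l ≠ 0 := by rintro rfl; simp at hl
  have hsplit : ∀ x s : ℝ, (((s ^ (α - 1) : ℝ) : ℂ) *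
      Complex.exp (c - w * ((s ^ α : ℝ) : ℂ) - (l * x) * s)) =
      (((s ^ (α - 1) : ℝ) : ℂ) * Complex.exp (c - w * ((s ^ α : ℝ) : ℂ) - 0 * s)) *
        Complex.exp (-(l * s) * x) := by
    intro x s
    rw [mul_assoc (((s ^ (α - 1) : ℝ) : ℂ)) _ _, ← Complex.exp_add]; ring_nf
  have hneg : ∀ s : ℝ, 0 < s → (-(l * s)).re < 0 := by
    intro s hs
    simp only [Complex.neg_re, Complex.re_mul_ofReal]
    have := mul_pos hl hs
    linarith
  have hpow : ∀ s : ℝ, 0 < s → s ^ (α - 1) = s ^ (α - 2) * s := by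
    intro s hs
    rw [← Real.rpow_add_one hs.ne']; ring_nf
  have i2 := aux_int α (α - 2) c w 0 hα (by linarith) hw
  have hint : Integrable (Function.uncurry fun x s : ℝ => (((s ^ (α - 1) : ℝ) : ℂ) *
      Complex.exp (c - w * ((s ^ α : ℝ) : ℂ) - (l * x) * s)))
      ((volume.restrict (Ioi (0 : ℝ))).prod (volume.restrict (Ioi (0 : ℝ)))) := by
    rw [integrable_prod_iff']
    · constructor
      · filter_upwards [ae_restrict_mem measurableSet_Ioi] with s hs
        simp only [Function.uncurry, hsplit]
        exact (integrableOn_exp_mul_complex_Ioi (hneg s hs) 0).const_mul _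
      · refine (i2.norm.const_mul (l.re⁻¹)).congr ?_
        filter_upwards [ae_restrict_mem measurableSet_Ioi] with s hs
        have hs : 0 < s := hs
        simp only [Function.uncurry, hsplit, norm_mul]
        rw [integral_const_mul]
        have e1 : ∀ x : ℝ, ‖Complex.exp (-(l * s) * x)‖ = Real.exp (-(l.re * s) * x) := by
          intro x
          rw [Complex.norm_exp]; simp
        simp only [e1]
        rw [integral_exp_mul_Ioi (by have := mul_pos hl hs; linarith), hpow s hs]
        push_cast
        rw [norm_mul, Complex.norm_real s, Real.norm_of_nonneg hs.le]
        have := hl.ne'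
        have := hs.ne'
        simp
        field_simp
    · refine Measurable.aestronglyMeasurable ?_
      unfold Function.uncurry
      fun_prop
  refine ⟨hint.integral_prod_left, ?_⟩
  rw [integral_integral_swap hint, ← integral_const_mul]
  refine setIntegral_congr_fun measurableSet_Ioi fun s hs => ?_
  have hs : 0 < s := hs
  have hs' : (s : ℂ) ≠ 0 := by exact_mod_cast hs.ne'
  simp only [hsplit]
  rw [integral_const_mul, integral_exp_mul_complex_Ioi (hneg s hs), hpow s hs]
  push_cast
  simp only [mul_zero, Complex.exp_zero]
  field_simp

lemma gamma_part (α t β : ℝ) (hα : 1 < α) (ht : 0 < t) (hβ : |β| < Real.pi / 2) :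
    ∫ s in Ioi (0 : ℝ), (((s ^ (α - 2) : ℝ) : ℂ) *
      Complex.exp (0 - (t * Complex.exp (Complex.I * β)) * ((s ^ α : ℝ) : ℂ) - 0 * s)) =
    Complex.exp (-Complex.I * (β - β / α : ℝ)) *
      ((t ^ (1 / α - 1) * α⁻¹ * Real.Gamma (1 - 1 / α) : ℝ) : ℂ) := by
  have hα0 : α ≠ 0 := by linarith
  obtain ⟨ρ, h1, h2⟩ := exists_between hβ
  have h := rot_eq α (α - 2) t β 0 ρ (β / α) hα (by linarith) ht h2 h1 (by
    rw [mul_div_cancel₀ _ hα0, sub_self, abs_zero]; linarith [abs_nonneg β])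
  have hr := integral_rpow_mul_exp_neg_mul_rpow (p := α) (q := α - 2) (b := t) (by linarith)
    (by linarith) ht
  have e : t ^ (1 / α - 1) * α⁻¹ * Real.Gamma (1 - 1 / α) =
      ∫ (x : ℝ) in Ioi 0, x ^ (α - 2) * Real.exp (-t * x ^ α) := by
    rw [hr]
    have e1 : (α - 2 + 1) / α = 1 - 1 / α := by field_simp; ring
    have e2 : -(α - 2 + 1) / α = 1 / α - 1 := by field_simp; ring
    rw [e1, e2, one_div]
  rw [e, ← integral_complex_ofReal, ← integral_const_mul]
  refine Eq.trans ?_ (h.trans ?_)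
  · refine setIntegral_congr_fun measurableSet_Ioi fun s hs => ?_
    simp [rotG]
  · refine setIntegral_congr_fun measurableSet_Ioi fun s hs => ?_
    simp only [rotG]
    rw [mul_div_cancel₀ _ hα0, sub_self]
    push_cast
    rw [mul_left_comm, ← Complex.exp_add]
    congr 2
    have : (α : ℂ) ≠ 0 := by exact_mod_cast hα0
    simp
    field_simp
    ring

lemma density_eq (α γ t x : ℝ) (hα : 1 < α) (hγ : |γ| < 1) (ht : 0 < t) :
    stableDensity α γ t x =
      (1 / Real.pi) * (∫ s in Ioi (0 : ℝ), rotG α 0 t (Real.pi * γ / 2) x 0 s).re := by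
  have hcos : 0 < Real.cos (Real.pi * γ / 2) := by
    have := abs_lt.1 hγ
    apply Real.cos_pos_of_mem_Ioo
    constructor <;> nlinarith [Real.pi_pos]
  have hi : IntegrableOn (fun s => rotG α 0 t (Real.pi * γ / 2) x 0 s) (Ioi 0) := by
    refine aux_int α 0 _ _ _ hα (by norm_num) ?_
    rw [re_w]
    simpa using mul_pos ht hcos
  have hre : (∫ s in Ioi (0 : ℝ), rotG α 0 t (Real.pi * γ / 2) x 0 s).re =
      ∫ s in Ioi (0 : ℝ), (rotG α 0 t (Real.pi * γ / 2) x 0 s).re := by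
    exact (integral_re hi).symm
  have h1 : (∫ s in Ioi (0 : ℝ), (rotG α 0 t (Real.pi * γ / 2) x 0 s).re) =
      ∫ s in Ioi (0 : ℝ),
        (Complex.exp (-(t : ℂ) * stableExponent α γ s - Complex.I * s * x)).re := by
    refine setIntegral_congr_fun measurableSet_Ioi fun s hs => ?_
    have hs : 0 < s := hs
    simp only [rotG, stableExponent, Real.sign_of_pos hs, abs_of_pos hs]
    congr 1
    simp
    congr 1
    ring_nf
  have h2 : ∀ θ : ℝ, (Complex.exp (-(t : ℂ) * stableExponent α γ θ - Complex.I * θ * x)).re =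
     (Complex.exp (-(t : ℂ) * stableExponent α γ |θ| - Complex.I * (|θ| : ℝ) * x)).re := by
    intro θ
    rcases le_or_gt 0 θ with h | h
    · rw [abs_of_nonneg h]
    · rw [abs_of_neg h, ← Complex.conj_re, ← Complex.exp_conj]
      congr 2
      simp only [stableExponent, Real.sign_neg, abs_neg, map_sub, map_mul, map_neg, ← Complex.exp_conj,
        Complex.conj_I, Complex.conj_ofReal, map_div₀, Complex.conj_ofNat]
      push_cast
      ring_nf
  unfold stableDensity
  rw [hre, h1]
  rw [integral_congr_ae (Eventually.of_forall h2), integral_comp_abs (f := fun θ : ℝ =>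
    (Complex.exp (-(t : ℂ) * stableExponent α γ θ - Complex.I * θ * x)).re)]
  rw [← mul_assoc]
  congr 1
  field_simp

lemma density_neg (α γ t x : ℝ) : stableDensity α γ t (-x) = stableDensity α (-γ) t x := by
  unfold stableDensity
  rw [← integral_neg_eq_self]
  congr 2
  ext θ
  simp only [stableExponent, Real.sign_neg, abs_neg]
  push_cast
  ring_nf

lemma half_moment (α γ t : ℝ) (hα : 1 < α) (hγ : |γ| < 1) (ht : 0 < t) :
    IntegrableOn (fun x => stableDensity α γ t x * x) (Ioi 0) ∧
    ∫ x in Ioi (0 : ℝ), stableDensity α γ t x * x =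
      (1 / Real.pi) * (t ^ (1 / α) * Real.Gamma (1 - 1 / α) *
        Real.cos (Real.pi * γ / (2 * α))) := by
  have hpi := Real.pi_pos
  have hα0 : α ≠ 0 := by linarith
  obtain ⟨β, hβdef⟩ : ∃ β, β = Real.pi * γ / 2 := ⟨_, rfl⟩
  have hβ : |β| < Real.pi / 2 := by
    have := abs_lt.1 hγ
    rw [hβdef, abs_lt]
    constructor <;> nlinarith
  obtain ⟨ρ, hβρ, hρ⟩ := exists_between hβ
  obtain ⟨η, hηdef⟩ : ∃ η, η = (ρ - |β|) / (2 * α) := ⟨_, rfl⟩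
  have hη0 : 0 < η := by rw [hηdef]; apply div_pos <;> linarith
  have hαη : α * η = (ρ - |β|) / 2 := by rw [hηdef]; field_simp
  have hηρ : |β - α * η| < ρ := by
    rw [hαη, abs_lt]
    constructor <;> linarith [le_abs_self β, neg_abs_le β]
  have hηpi : η < Real.pi := by nlinarith [abs_nonneg β]
  obtain ⟨l, hl⟩ : ∃ l, l = Complex.I * Complex.exp (-Complex.I * η) := ⟨_, rfl⟩
  obtain ⟨w, hw⟩ : ∃ w, w = (t : ℂ) * Complex.exp (Complex.I * (β - α * η : ℝ)) := ⟨_, rfl⟩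
  obtain ⟨c, hc⟩ : ∃ c : ℂ, c = -Complex.I * ((0 + 1 : ℝ) : ℂ) * η := ⟨_, rfl⟩
  have hlre : 0 < l.re := by
    rw [hl, show -Complex.I * (η : ℂ) = ((-η : ℝ) : ℂ) * Complex.I by push_cast; ring,
      Complex.I_mul_re, Complex.exp_ofReal_mul_I_im, Real.sin_neg, neg_neg]
    exact Real.sin_pos_of_pos_of_lt_pi hη0 hηpi
  have hwre : 0 < w.re := by
    rw [hw, re_w]
    refine mul_pos ht (Real.cos_pos_of_mem_Ioo ?_)
    have := abs_lt.1 hηρ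
    constructor <;> linarith
  have hl0 : l ≠ 0 := by rintro h; simp [h] at hlre
  have hlc : l = Complex.I * Complex.exp c := by rw [hl, hc]; simp
  obtain ⟨hF1, hF2⟩ := fubini_part α c w l hα hwre hlre
  set Φ : ℝ → ℂ := fun x : ℝ => ∫ s in Ioi (0 : ℝ), (((s ^ (α - 1) : ℝ) : ℂ) *
      Complex.exp (c - w * ((s ^ α : ℝ) : ℂ) - (l * x) * s)) with hΦ
  have key : ∀ x ∈ Ioi (0 : ℝ), stableDensity α γ t x * x =
      (1 / Real.pi) * ((-l⁻¹ * (α * w)) * Φ x).re := by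
    intro x hx
    rw [density_eq α γ t x hα hγ ht, ← hβdef,
      rot_eq α 0 t β x ρ η hα (by norm_num) ht hρ hβρ hηρ]
    simp only [rotG]
    rw [← hc, ← hw, ← hl]
    have hp := parts α c w (l * x) hα hwre
    rw [mul_assoc, mul_comm _ x, ← Complex.re_ofReal_mul]
    congr 1
    set J := ∫ s in Ioi (0 : ℝ), (((s ^ (0 : ℝ) : ℝ) : ℂ) *
      Complex.exp (c - w * ((s ^ α : ℝ) : ℂ) - (l * x) * s)) with hJ
    have e : (x : ℂ) * J = -Complex.I + (-l⁻¹ * (α * w)) * Φ x := by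
      have h1 : l * (x * J) = Complex.exp c - α * w * Φ x := by rw [← mul_assoc]; exact hp
      have h2 : Complex.exp c = l * (-Complex.I) := by
        rw [hlc]; linear_combination (Complex.exp c) * Complex.I_mul_I
      rw [h2] at h1
      apply mul_left_cancel₀ hl0
      rw [h1]
      field_simp
      ring
    rw [e]
    simp
  have hI := hF1.const_mul (-l⁻¹ * (α * w))
  have hIre := (Complex.reCLM.integrable_comp hI).const_mul (1 / Real.pi)
  constructor
  · refine IntegrableOn.congr_fun hIre (fun x hx => ?_) measurableSet_Ioi
    rw [key x hx]; rfl
  · rw [setIntegral_congr_fun measurableSet_Ioi key, integral_const_mul]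
    congr 1
    have hre := integral_re hI
    simp only [RCLike.re_to_complex] at hre
    rw [hre, integral_const_mul, hF2]
    have hg := gamma_part α t (β - α * η) hα ht (hηρ.trans hρ)
    rw [← hw] at hg
    have hg2 : ∫ s in Ioi (0 : ℝ), (((s ^ (α - 2) : ℝ) : ℂ) *
        Complex.exp (c - w * ((s ^ α : ℝ) : ℂ) - 0 * s)) =
        Complex.exp c * (Complex.exp (-Complex.I * (β - α * η - (β - α * η) / α : ℝ)) *
      ((t ^ (1 / α - 1) * α⁻¹ * Real.Gamma (1 - 1 / α) : ℝ) : ℂ)) := by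
      rw [← hg, ← integral_const_mul]
      refine setIntegral_congr_fun measurableSet_Ioi fun s _ => ?_
      rw [mul_left_comm, ← Complex.exp_add]
      ring_nf
    rw [hg2]
    have hll : l⁻¹ = -Complex.I * Complex.exp (-c) := by
      rw [hlc, mul_inv, Complex.inv_I, Complex.exp_neg]
    have hfin : -l⁻¹ * (α * w) * (l⁻¹ * (Complex.exp c *
        (Complex.exp (-Complex.I * (β - α * η - (β - α * η) / α : ℝ)) *
        ((t ^ (1 / α - 1) * α⁻¹ * Real.Gamma (1 - 1 / α) : ℝ) : ℂ)))) =
        ((t ^ (1 / α) * Real.Gamma (1 - 1 / α) : ℝ) : ℂ) *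
          Complex.exp ((Real.pi * γ / (2 * α) : ℝ) * Complex.I) := by
      have e1 : t ^ (1 / α - 1) = t ^ (1 / α) / t := Real.rpow_sub_one ht.ne' _
      have e2 : Complex.exp ((Real.pi * γ / (2 * α) : ℝ) * Complex.I) =
          Complex.exp (-c) * Complex.exp (-c) * Complex.exp c *
          Complex.exp (Complex.I * (β - α * η : ℝ)) *
          Complex.exp (-Complex.I * (β - α * η - (β - α * η) / α : ℝ)) := by
        simp only [← Complex.exp_add]
        congr 1
        have : (α : ℂ) ≠ 0 := by exact_mod_cast hα0
        rw [hc, hβdef]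
        push_cast
        field_simp
        ring
      rw [e1, e2, hll, hw]
      have h1 : (α : ℂ) ≠ 0 := by exact_mod_cast hα0
      have h2 : (t : ℂ) ≠ 0 := by exact_mod_cast ht.ne'
      push_cast
      have h3 : (α : ℂ) * (α : ℂ)⁻¹ = 1 := mul_inv_cancel₀ h1
      have h4 : (t : ℂ) * (t : ℂ)⁻¹ = 1 := mul_inv_cancel₀ h2
      have h5 : Complex.I ^ 2 = -1 := Complex.I_sq
      field_simp
      rw [h5]
      ring
    rw [hfin, Complex.re_ofReal_mul, Complex.exp_ofReal_mul_I_re]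

/-- First absolute moment of the stable density:
`∫ 𝔭_t(x) |x| dx = (2 t^{1/α}/π) Γ(1 − 1/α) sin(π(α−γ)/(2α))`. -/
theorem stmt4 (α γ t : ℝ) (hα : 1 < α) (hα2 : α < 2) (hγ : |γ| ≤ 2 - α) (ht : 0 < t) :
    ∫ x : ℝ, stableDensity α γ t x * |x| =
      (2 * t ^ (1 / α) / Real.pi) * Real.Gamma (1 - 1 / α) *
        Real.sin (Real.pi * (α - γ) / (2 * α)) := by
  have hγ1 : |γ| < 1 := by linarith
  obtain ⟨hp1, hp2⟩ := half_moment α γ t hα hγ1 ht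
  obtain ⟨hn1, hn2⟩ := half_moment α (-γ) t hα (by rwa [abs_neg]) ht
  have hα0 : α ≠ 0 := by linarith
  have iP : IntegrableOn (fun x => stableDensity α γ t x * |x|) (Ioi 0) :=
    hp1.congr_fun (fun x hx => by simp only [abs_of_pos (show 0 < x from hx)]) measurableSet_Ioi
  have iN' : IntegrableOn (fun x => stableDensity α (-γ) t x * |x|) (Ioi 0) :=
    hn1.congr_fun (fun x hx => by simp only [abs_of_pos (show 0 < x from hx)]) measurableSet_Ioi
  have iN : IntegrableOn (fun x => stableDensity α γ t x * |x|) (Iic 0) := by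
    rw [integrableOn_Iic_iff_integrableOn_Iio]
    have := IntegrableOn.comp_neg_Iio (c := (0 : ℝ))
      (f := fun x => stableDensity α (-γ) t x * |x|) (by simpa using iN')
    refine this.congr_fun (fun x _ => ?_) measurableSet_Iio
    simp only [abs_neg]
    rw [← density_neg, neg_neg]
  have vP : ∫ x in Ioi (0 : ℝ), stableDensity α γ t x * |x| =
      ∫ x in Ioi (0 : ℝ), stableDensity α γ t x * x :=
    setIntegral_congr_fun measurableSet_Ioi
      (fun x hx => by simp only [abs_of_pos (show 0 < x from hx)])
  have vN : ∫ x in Iic (0 : ℝ), stableDensity α γ t x * |x| =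
      ∫ x in Ioi (0 : ℝ), stableDensity α (-γ) t x * x := by
    have := integral_comp_neg_Iic 0 (fun x => stableDensity α (-γ) t x * |x|)
    simp only [← density_neg, neg_neg, abs_neg, neg_zero] at this
    rw [this]
    refine setIntegral_congr_fun measurableSet_Ioi (fun x hx => ?_)
    simp only [density_neg, abs_of_pos (show 0 < x from hx)]
  rw [← intervalIntegral.integral_Iic_add_Ioi iN iP, vP, vN, hp2, hn2]
  have hs : Real.sin (Real.pi * (α - γ) / (2 * α)) = Real.cos (Real.pi * γ / (2 * α)) := by
    rw [← Real.sin_pi_div_two_sub]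
    congr 1
    field_simp
  have hc : Real.cos (Real.pi * -γ / (2 * α)) = Real.cos (Real.pi * γ / (2 * α)) := by
    rw [← Real.cos_neg]; congr 1; ring
  rw [hs, hc]
  ring
end

section
/- Let 𝔭_t(x) be the density of a strictly stable process of index α ∈ (1,2). For every continuous function φ on [0,T], lim_{y→0+} ∫₀^T [(𝔭_t(y) − 𝔭_t(0))/y^{α−1}]·φ(t) dt = b⁺·φ(0), where b⁺ = α·∫₀^∞ (𝔭₁(u) − 𝔭₁(0))/u^α du, and the analogous statement holds as y → 0− with b⁻ = α·∫₀^∞ (𝔭₁(−u) − 𝔭₁(0))/u^α du. -/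
open Filter Topology

lemma stableExponent_scale (α γ c θ : ℝ) (hc : 0 < c) :
    stableExponent α γ (c * θ) = ((c ^ α : ℝ) : ℂ) * stableExponent α γ θ := by
  have h1 : Real.sign (c * θ) = Real.sign θ := by
    rcases lt_trichotomy θ 0 with h | h | h
    · rw [Real.sign_of_neg h, Real.sign_of_neg (mul_neg_of_pos_of_neg hc h)]
    · simp [h]
    · rw [Real.sign_of_pos h, Real.sign_of_pos (mul_pos hc h)]
  unfold stableExponent
  rw [h1, abs_mul, abs_of_pos hc, Real.mul_rpow hc.le (abs_nonneg _)]
  push_cast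
  ring

lemma stableDensity_scale (α γ c x : ℝ) (hc : 0 < c) :
    stableDensity α γ (c ^ α) (c * x) = c⁻¹ * stableDensity α γ 1 x := by
  unfold stableDensity
  have := MeasureTheory.Measure.integral_comp_mul_left
    (fun θ : ℝ => (Complex.exp (-((1 : ℝ) : ℂ) * stableExponent α γ θ - Complex.I * θ * x)).re) c
  rw [abs_of_pos (inv_pos.mpr hc), smul_eq_mul] at this
  rw [mul_left_comm, ← this]
  congr 1
  apply MeasureTheory.integral_congr_ae
  refine Filter.Eventually.of_forall fun θ => ?_
  simp only
  rw [stableExponent_scale _ _ _ _ hc]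
  congr 2
  push_cast
  ring

lemma stableExponent_re_ge (α γ θ : ℝ) :
    Real.cos (Real.pi * γ / 2) * |θ| ^ α ≤ (stableExponent α γ θ).re := by
  have key : ∀ s : ℝ, (Complex.exp (Complex.I * (Real.pi * γ / 2) * s)).re
      = Real.cos (Real.pi * γ / 2 * s) := by
    intro s
    rw [show Complex.I * (Real.pi * γ / 2) * s = ((Real.pi * γ / 2 * s : ℝ) : ℂ) * Complex.I by
      push_cast; ring, Complex.exp_ofReal_mul_I_re]
  unfold stableExponent
  rw [Complex.re_mul_ofReal, key]
  apply mul_le_mul_of_nonneg_right _ (by positivity)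
  rcases lt_trichotomy θ 0 with h | h | h
  · rw [Real.sign_of_neg h]; simp
  · simp [h, Real.cos_le_one]
  · rw [Real.sign_of_pos h]; simp

lemma norm_kernel_le (α γ θ x : ℝ) :
    ‖Complex.exp (-((1 : ℝ) : ℂ) * stableExponent α γ θ - Complex.I * θ * x)‖
      ≤ Real.exp (-Real.cos (Real.pi * γ / 2) * |θ| ^ α) := by
  rw [Complex.norm_exp, Real.exp_le_exp]
  have := stableExponent_re_ge α γ θ
  simp
  linarith

lemma measurable_kernel (α γ x : ℝ) : Measurable fun θ : ℝ =>
    (Complex.exp (-((1 : ℝ) : ℂ) * stableExponent α γ θ - Complex.I * θ * x)).re := by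
  have hs : Measurable Real.sign := by
    unfold Real.sign
    exact Measurable.ite measurableSet_Iio measurable_const
      (Measurable.ite measurableSet_Ioi measurable_const measurable_const)
  unfold stableExponent
  fun_prop

lemma integrable_abs_of_Ioi (f : ℝ → ℝ) (h : MeasureTheory.IntegrableOn f (Set.Ioi 0)) :
    MeasureTheory.Integrable fun x : ℝ => f |x| := by
  have hf : MeasureTheory.IntegrableOn (fun x => f |x|) (Set.Ioi 0) :=
    h.congr_fun (fun x hx => by simp only [abs_of_pos (Set.mem_Ioi.mp hx)]) measurableSet_Ioi
  have int_Iic : MeasureTheory.IntegrableOn (fun x ↦ f |x|) (Set.Iic 0) := by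
    rw [← MeasureTheory.Measure.map_neg_eq_self (MeasureTheory.volume : MeasureTheory.Measure ℝ)]
    let m : MeasurableEmbedding fun x : ℝ => -x := (Homeomorph.neg ℝ).measurableEmbedding
    rw [m.integrableOn_map_iff]
    simp_rw [Function.comp_def, abs_neg, Set.neg_preimage, Set.neg_Iic, neg_zero]
    exact Iff.mpr integrableOn_Ici_iff_integrableOn_Ioi hf
  have := int_Iic.union hf
  rwa [Set.Iic_union_Ioi, MeasureTheory.integrableOn_univ] at this

lemma integrable_abs_aux (α c s : ℝ) (hα : 1 < α) (hc : 0 < c) (hs : -1 < s) :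
    MeasureTheory.Integrable fun θ : ℝ => |θ| ^ s * Real.exp (-c * |θ| ^ α) := by
  have := integrableOn_rpow_mul_exp_neg_mul_rpow hs (by linarith : 0 < α) hc
  exact integrable_abs_of_Ioi (fun θ : ℝ => θ ^ s * Real.exp (-c * θ ^ α)) this

lemma kernel_integrable (α γ x : ℝ) (hα : 1 < α) (hc : 0 < Real.cos (Real.pi * γ / 2)) :
    MeasureTheory.Integrable fun θ : ℝ =>
    (Complex.exp (-((1 : ℝ) : ℂ) * stableExponent α γ θ - Complex.I * θ * x)).re := by
  refine (integrable_abs_aux α _ 0 hα hc (by norm_num)).mono'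
    (measurable_kernel α γ x).aestronglyMeasurable (Filter.Eventually.of_forall fun θ => ?_)
  rw [Real.rpow_zero, one_mul]
  exact (Complex.abs_re_le_norm _).trans (norm_kernel_le α γ θ x)

lemma stableDensity_bounded (α γ : ℝ) (hα : 1 < α) (hc : 0 < Real.cos (Real.pi * γ / 2)) :
    ∃ B, ∀ x, |stableDensity α γ 1 x| ≤ B := by
  refine ⟨(1 / (2 * Real.pi)) * ∫ θ : ℝ, |θ| ^ (0:ℝ) *
    Real.exp (-Real.cos (Real.pi * γ / 2) * |θ| ^ α), fun x => ?_⟩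
  unfold stableDensity
  have hpi := Real.pi_pos
  rw [abs_mul, abs_of_pos (by positivity : 0 < 1 / (2 * Real.pi))]
  refine mul_le_mul_of_nonneg_left ?_ (by positivity)
  rw [← Real.norm_eq_abs]
  refine MeasureTheory.norm_integral_le_of_norm_le
    (integrable_abs_aux α _ 0 hα hc (by norm_num)) (Filter.Eventually.of_forall fun θ => ?_)
  rw [Real.rpow_zero, one_mul]
  exact (Complex.abs_re_le_norm _).trans (norm_kernel_le α γ θ x)

lemma stableDensity_lip (α γ : ℝ) (hα : 1 < α) (hc : 0 < Real.cos (Real.pi * γ / 2)) :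
    ∃ L, ∀ x y, |stableDensity α γ 1 x - stableDensity α γ 1 y| ≤ L * |x - y| := by
  refine ⟨(1 / (2 * Real.pi)) * ∫ θ : ℝ, |θ| ^ (1:ℝ) *
    Real.exp (-Real.cos (Real.pi * γ / 2) * |θ| ^ α), fun x y => ?_⟩
  unfold stableDensity
  have hpi := Real.pi_pos
  rw [← mul_sub, abs_mul, abs_of_pos (by positivity : 0 < 1 / (2 * Real.pi)), mul_assoc]
  refine mul_le_mul_of_nonneg_left ?_ (by positivity)
  rw [← MeasureTheory.integral_sub (kernel_integrable α γ x hα hc)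
    (kernel_integrable α γ y hα hc), ← MeasureTheory.integral_mul_const]
  rw [← Real.norm_eq_abs]
  refine MeasureTheory.norm_integral_le_of_norm_le
    ((integrable_abs_aux α _ 1 hα hc (by norm_num)).mul_const _)
    (Filter.Eventually.of_forall fun θ => ?_)
  rw [← Complex.sub_re]
  refine (Complex.abs_re_le_norm _).trans ?_
  have : Complex.exp (-((1 : ℝ) : ℂ) * stableExponent α γ θ - Complex.I * θ * x) -
      Complex.exp (-((1 : ℝ) : ℂ) * stableExponent α γ θ - Complex.I * θ * y) =
      Complex.exp (-((1 : ℝ) : ℂ) * stableExponent α γ θ - Complex.I * θ * y) *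
      (Complex.exp (Complex.I * ((-θ * (x - y) : ℝ) : ℂ)) - 1) := by
    rw [mul_sub, ← Complex.exp_add, mul_one]
    congr 2
    push_cast
    ring
  rw [this, norm_mul, Real.rpow_one]
  calc _ ≤ Real.exp (-Real.cos (Real.pi * γ / 2) * |θ| ^ α) * ‖-θ * (x - y)‖ :=
        mul_le_mul (norm_kernel_le α γ θ y) Real.norm_exp_I_mul_ofReal_sub_one_le
          (norm_nonneg _) (Real.exp_pos _).le
    _ = _ := by rw [Real.norm_eq_abs, abs_mul, abs_neg]; ring

lemma core_integrable (α : ℝ) (hα : 1 < α) (hα2 : α < 2) (G : ℝ → ℝ) (hG : Continuous G)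
    (L B : ℝ) (hL : ∀ u, |G u| ≤ L * |u|) (hB : ∀ u, |G u| ≤ B) :
    MeasureTheory.IntegrableOn (fun u => G u / u ^ α) (Set.Ioi 0) := by
  have hm : Measurable (fun u => G u / u ^ α) := by
    have := hG.measurable
    fun_prop
  rw [← Set.Ioc_union_Ioi_eq_Ioi (zero_le_one : (0:ℝ) ≤ 1)]
  refine MeasureTheory.IntegrableOn.union ?_ ?_
  · have h1 : MeasureTheory.IntegrableOn (fun u : ℝ => u ^ (1 - α)) (Set.Ioc 0 1) := by
      have := intervalIntegral.intervalIntegrable_rpow' (a := 0) (b := 1)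
        (by linarith : -1 < 1 - α)
      rwa [intervalIntegrable_iff_integrableOn_Ioc_of_le zero_le_one] at this
    refine (h1.const_mul L).mono' hm.aestronglyMeasurable ?_
    refine (MeasureTheory.ae_restrict_iff' measurableSet_Ioc).mpr
      (Filter.Eventually.of_forall fun u hu => ?_)
    have hu0 : 0 < u := hu.1
    have hp : 0 < u ^ α := Real.rpow_pos_of_pos hu0 _
    rw [Real.norm_eq_abs, abs_div, abs_of_pos hp, Real.rpow_sub hu0, Real.rpow_one, ← mul_div_assoc]
    have := hL u
    rw [abs_of_pos hu0] at this
    gcongr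
  · have h1 := integrableOn_Ioi_rpow_of_lt (by linarith : -α < -1) (zero_lt_one : (0:ℝ) < 1)
    refine (h1.const_mul B).mono' hm.aestronglyMeasurable ?_
    refine (MeasureTheory.ae_restrict_iff' measurableSet_Ioi).mpr
      (Filter.Eventually.of_forall fun u hu => ?_)
    have hu0 : 0 < u := lt_trans zero_lt_one hu
    have hp : 0 < u ^ α := Real.rpow_pos_of_pos hu0 _
    rw [Real.norm_eq_abs, abs_div, abs_of_pos hp, Real.rpow_neg hu0.le, ← div_eq_mul_inv]
    have := hB u
    gcongr

lemma core_subst (α T : ℝ) (hα : 1 < α) (hT : 0 < T) (P : ℝ → ℝ → ℝ)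
    (hP : ∀ c x, 0 < c → P (c ^ α) (c * x) = c⁻¹ * P 1 x) (φ : ℝ → ℝ) (r : ℝ) (hr : 0 < r) :
    ∫ t in (0:ℝ)..T, (P t r - P t 0) / |r| ^ (α - 1) * φ t =
    ∫ u in Set.Ioi (0:ℝ), α * ((P 1 u - P 1 0) / u ^ α) *
      (Set.Ioc 0 T).indicator φ ((r / u) ^ α) := by
  rw [intervalIntegral.integral_of_le hT.le]
  set K : ℝ → ℝ := (Set.Ioc 0 T).indicator
    (fun t => (P t r - P t 0) / |r| ^ (α - 1) * φ t) with hK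
  have e1 : ∫ t in Set.Ioc 0 T, (P t r - P t 0) / |r| ^ (α - 1) * φ t
      = ∫ t in Set.Ioi (0:ℝ), K t := by
    rw [hK, MeasureTheory.setIntegral_indicator measurableSet_Ioc]
    congr 2
    ext x
    simp only [Set.mem_inter_iff, Set.mem_Ioc, Set.mem_Ioi]
    tauto
  have hrα : 0 < r ^ α := Real.rpow_pos_of_pos hr _
  have e2 := MeasureTheory.integral_comp_mul_left_Ioi' K 0 hrα
  have e3 := MeasureTheory.integral_comp_rpow_Ioi (fun s => K (r ^ α * s))
    (by linarith : -α ≠ 0)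
  rw [mul_zero] at e2
  rw [e1, ← e2, ← e3, ← MeasureTheory.integral_smul]
  refine MeasureTheory.setIntegral_congr_fun measurableSet_Ioi fun u hu => ?_
  have hu0 : 0 < u := hu
  have hc : 0 < r / u := div_pos hr hu0
  have ht : r ^ α * u ^ (-α) = (r / u) ^ α := by
    rw [Real.div_rpow hr.le hu0.le, Real.rpow_neg hu0.le, div_eq_mul_inv]
  have hs1 := hP (r / u) u hc
  have hs0 := hP (r / u) 0 hc
  rw [div_mul_cancel₀ _ hu0.ne'] at hs1
  rw [mul_zero] at hs0
  simp only [smul_eq_mul]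
  rw [ht, hK]
  by_cases hmem : (r / u) ^ α ∈ Set.Ioc 0 T
  · rw [Set.indicator_of_mem hmem, Set.indicator_of_mem hmem, hs1, hs0, abs_neg,
      abs_of_pos (by linarith : 0 < α), abs_of_pos hr, Real.rpow_sub hu0, Real.rpow_sub hr,
      Real.rpow_neg hu0.le, Real.rpow_one, Real.rpow_one]
    have hp : 0 < u ^ α := Real.rpow_pos_of_pos hu0 _
    field_simp
  · rw [Set.indicator_of_notMem hmem, Set.indicator_of_notMem hmem]
    simp

lemma core_tendsto (α T : ℝ) (hα : 1 < α) (hα2 : α < 2) (hT : 0 < T) (P : ℝ → ℝ → ℝ)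
    (hP : ∀ c x, 0 < c → P (c ^ α) (c * x) = c⁻¹ * P 1 x)
    (L B : ℝ) (hL : ∀ x y, |P 1 x - P 1 y| ≤ L * |x - y|) (hB : ∀ x, |P 1 x| ≤ B)
    (φ : ℝ → ℝ) (hφ : ContinuousOn φ (Set.Icc 0 T)) :
    Tendsto (fun y : ℝ => ∫ t in (0:ℝ)..T, (P t y - P t 0) / |y| ^ (α - 1) * φ t)
      (𝓝[>] 0)
      (𝓝 ((α * ∫ u in Set.Ioi (0:ℝ), (P 1 u - P 1 0) / u ^ α) * φ 0)) := by
  have hcont : Continuous (P 1) := by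
    have : LipschitzWith (Real.toNNReal L) (P 1) := by
      refine LipschitzWith.of_dist_le_mul fun x y => ?_
      rw [Real.dist_eq, Real.dist_eq]
      refine (hL x y).trans ?_
      exact mul_le_mul_of_nonneg_right (Real.le_coe_toNNReal L) (abs_nonneg _)
    exact this.continuous
  have hGc : Continuous fun u => P 1 u - P 1 0 := hcont.sub continuous_const
  have hint := core_integrable α hα hα2 (fun u => P 1 u - P 1 0) hGc L (B + B)
    (fun u => by simpa using hL u 0)
    (fun u => (abs_sub _ _).trans (add_le_add (hB u) (hB 0)))
  obtain ⟨M, hM⟩ := isCompact_Icc.exists_bound_of_continuousOn hφ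
  have hM0 : 0 ≤ M := (norm_nonneg _).trans (hM 0 ⟨le_rfl, hT.le⟩)
  have hψm : Measurable ((Set.Ioc 0 T).indicator φ) := by
    have h1 : Continuous (Set.IccExtend hT.le ((Set.Icc 0 T).domRestrict φ)) :=
      (continuousOn_iff_continuous_domRestrict.mp hφ).Icc_extend'
    have h2 : (Set.Ioc 0 T).indicator φ =
        (Set.Ioc 0 T).indicator (Set.IccExtend hT.le ((Set.Icc 0 T).domRestrict φ)) := by
      refine Set.indicator_congr fun x hx => ?_
      rw [Set.IccExtend_of_mem _ _ (Set.Ioc_subset_Icc_self hx)]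
      rfl
    rw [h2]
    exact h1.measurable.indicator measurableSet_Ioc
  have hψb : ∀ t, |(Set.Ioc 0 T).indicator φ t| ≤ M := by
    intro t
    by_cases ht : t ∈ Set.Ioc 0 T
    · rw [Set.indicator_of_mem ht]; exact hM t (Set.Ioc_subset_Icc_self ht)
    · rw [Set.indicator_of_notMem ht]; simpa using hM0
  have hψlim : Tendsto ((Set.Ioc 0 T).indicator φ) (𝓝[>] 0) (𝓝 (φ 0)) := by
    have h1 : Tendsto φ (𝓝[>] 0) (𝓝 (φ 0)) := by
      have h0 : ContinuousWithinAt φ (Set.Icc 0 T) 0 := hφ 0 ⟨le_rfl, hT.le⟩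
      have h2 : Tendsto φ (𝓝[Set.Ioc 0 T] 0) (𝓝 (φ 0)) := h0.mono Set.Ioc_subset_Icc_self
      rwa [nhdsWithin_Ioc_eq_nhdsGT hT] at h2
    refine h1.congr' ?_
    filter_upwards [Ioc_mem_nhdsGT hT] with t ht
    rw [Set.indicator_of_mem ht]
  have main : Tendsto (fun r : ℝ => ∫ u in Set.Ioi (0:ℝ), α * ((P 1 u - P 1 0) / u ^ α) *
      (Set.Ioc 0 T).indicator φ ((r / u) ^ α)) (𝓝[>] 0)
      (𝓝 (∫ u in Set.Ioi (0:ℝ), α * ((P 1 u - P 1 0) / u ^ α) * φ 0)) := by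
    refine MeasureTheory.tendsto_integral_filter_of_dominated_convergence
      (fun u => |α * ((P 1 u - P 1 0) / u ^ α)| * M) ?_ ?_ ?_ ?_
    · refine Filter.Eventually.of_forall fun r => ?_
      refine Measurable.aestronglyMeasurable ?_
      have h1 := hGc.measurable
      have h2 : Measurable fun u : ℝ => (r / u) ^ α := by fun_prop
      exact (Measurable.const_mul (h1.div (by fun_prop)) _).mul (hψm.comp h2)
    · refine Filter.Eventually.of_forall fun r => Filter.Eventually.of_forall fun u => ?_
      rw [Real.norm_eq_abs, abs_mul]
      exact mul_le_mul_of_nonneg_left (hψb _) (abs_nonneg _)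
    · exact ((hint.const_mul α).abs).mul_const M
    · refine (MeasureTheory.ae_restrict_iff' measurableSet_Ioi).mpr
        (Filter.Eventually.of_forall fun u hu => ?_)
      have hu0 : 0 < u := hu
      refine Tendsto.const_mul _ (hψlim.comp ?_)
      refine tendsto_nhdsWithin_iff.mpr ⟨?_, ?_⟩
      · have : Continuous fun r : ℝ => (r / u) ^ α :=
          (continuous_id.div_const u).rpow_const fun _ => Or.inr (by linarith)
        have h3 := this.tendsto 0
        simp only [zero_div] at h3
        rw [Real.zero_rpow (by linarith)] at h3
        exact h3.mono_left nhdsWithin_le_nhds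
      · filter_upwards [self_mem_nhdsWithin] with r hr
        exact Real.rpow_pos_of_pos (div_pos hr hu0) _
  rw [MeasureTheory.integral_mul_const, MeasureTheory.integral_const_mul] at main
  refine main.congr' ?_
  filter_upwards [self_mem_nhdsWithin] with r hr
  exact (core_subst α T hα hT P hP φ r hr).symm

/-- Lemma 7.2: for continuous `φ` on `[0,T]`,
`∫₀^T (𝔭_t(y) − 𝔭_t(0))/|y|^{α−1} · φ(t) dt → b^± φ(0)` as `y → 0±`, where
`b^± = α ∫₀^∞ (𝔭₁(±u) − 𝔭₁(0))/u^α du`. -/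
theorem stmt6 (α γ T : ℝ) (hα : 1 < α) (hα2 : α < 2) (hγ : |γ| ≤ 2 - α) (hT : 0 < T)
    (φ : ℝ → ℝ) (hφ : ContinuousOn φ (Set.Icc 0 T)) :
    Tendsto
      (fun y : ℝ =>
        ∫ t in (0:ℝ)..T,
          (stableDensity α γ t y - stableDensity α γ t 0) / |y| ^ (α - 1) * φ t)
      (𝓝[>] 0)
      (𝓝 ((α * ∫ u in Set.Ioi (0:ℝ),
          (stableDensity α γ 1 u - stableDensity α γ 1 0) / u ^ α) * φ 0)) ∧
    Tendsto
      (fun y : ℝ =>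
        ∫ t in (0:ℝ)..T,
          (stableDensity α γ t y - stableDensity α γ t 0) / |y| ^ (α - 1) * φ t)
      (𝓝[<] 0)
      (𝓝 ((α * ∫ u in Set.Ioi (0:ℝ),
          (stableDensity α γ 1 (-u) - stableDensity α γ 1 0) / u ^ α) * φ 0)) := by
  have hc : 0 < Real.cos (Real.pi * γ / 2) := by
    have h := abs_le.mp hγ
    have hpi := Real.pi_pos
    apply Real.cos_pos_of_mem_Ioo
    constructor <;> nlinarith
  obtain ⟨L, hL⟩ := stableDensity_lip α γ hα hc
  obtain ⟨B, hB⟩ := stableDensity_bounded α γ hα hc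
  refine ⟨core_tendsto α T hα hα2 hT (stableDensity α γ)
    (fun c x h => stableDensity_scale α γ c x h) L B hL hB φ hφ, ?_⟩
  have h2 := core_tendsto α T hα hα2 hT (fun t x => stableDensity α γ t (-x))
    (fun c x h => by
      have := stableDensity_scale α γ c (-x) h
      rwa [mul_neg] at this) L B
    (fun x y => by
      have := hL (-x) (-y)
      rwa [show -x - -y = -(x - y) by ring, abs_neg] at this) (fun x => hB (-x)) φ hφ
  have h3 : Tendsto (fun y : ℝ => -y) (𝓝[<] 0) (𝓝[>] 0) := by
    simpa using tendsto_neg_nhdsLT (a := (0:ℝ))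
  have h4 := h2.comp h3
  simpa only [Function.comp_def, neg_neg, neg_zero, abs_neg] using h4
end

section
/- Let S be a random walk on ℤ whose step characteristic function φ satisfies (1−φ(θ))/|θ|^α → c₀·e^{±iπγ/2} as θ → ±0 with 1 < α < 2, c₀ > 0, |γ| ≤ 2−α, and which is strongly aperiodic. Then there is a constant C such that for all n ≥ 1 and x ∈ ℤ, p^n(x) ≤ C·n^{−1/α}·min(1, (|x|/n^{1/α})^{−α}). -/
open Filter Topology

/-- `pn p n x` is the `n`-step transition probability `P[S_n = x]`. -/
noncomputable def pn (p : ℤ → ℝ) : ℕ → ℤ → ℝ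
  | 0, x => if x = 0 then 1 else 0
  | n + 1, x => ∑' y : ℤ, pn p n y * p (x - y)

/-- The characteristic function `φ(θ) = E[e^{iθX}]` of the step distribution. -/
noncomputable def rwChar (p : ℤ → ℝ) (θ : ℝ) : ℂ :=
  ∑' x : ℤ, (p x : ℂ) * Complex.exp (Complex.I * θ * x)

open MeasureTheory

lemma norm_term (q : ℤ → ℝ) (hq0 : ∀ x, 0 ≤ q x) (θ : ℝ) (x : ℤ) :
    ‖(q x : ℂ) * Complex.exp (Complex.I * θ * x)‖ = q x := by
  have h : Complex.I * θ * x = ((θ * x : ℝ) : ℂ) * Complex.I := by push_cast; ring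
  rw [norm_mul, h, Complex.norm_exp_ofReal_mul_I, mul_one, Complex.norm_real, Real.norm_of_nonneg (hq0 x)]

lemma conv_hasSum {R : Type*} [NormedRing R] [CompleteSpace R] {f g : ℤ → R}
    (hf : Summable fun x => ‖f x‖) (hg : Summable fun x => ‖g x‖) :
    HasSum (fun x => ∑' y, f y * g (x - y)) ((∑' x, f x) * ∑' x, g x) := by
  have h1 := (HasSum.mul hf.of_norm.hasSum hg.of_norm.hasSum (summable_mul_of_summable_norm hf hg))
  let e : ℤ × ℤ ≃ ℤ × ℤ :=
    { toFun := fun z => (z.2, z.1 - z.2)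
      invFun := fun z => (z.1 + z.2, z.1)
      left_inv := fun z => by simp
      right_inv := fun z => by simp }
  have h2 := (e.hasSum_iff).2 h1
  refine h2.prod_fiberwise (fun b => ?_)
  have := (h2.summable.prod_factor b)
  exact this.hasSum

lemma pn_prop (p : ℤ → ℝ) (hp0 : ∀ x, 0 ≤ p x) (hp1 : HasSum p 1) (n : ℕ) :
    (∀ x, 0 ≤ pn p n x) ∧ HasSum (pn p n) 1 := by
  induction n with
  | zero =>
    refine ⟨fun x => ?_, ?_⟩
    · simp only [pn]; split_ifs <;> norm_num
    · have := hasSum_ite_eq (0 : ℤ) (1 : ℝ)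
      simpa [pn] using this
  | succ n ih =>
    refine ⟨fun x => ?_, ?_⟩
    · simp only [pn]; exact tsum_nonneg fun y => mul_nonneg (ih.1 y) (hp0 _)
    · have := conv_hasSum (f := pn p n) (g := p) ih.2.summable.norm hp1.summable.norm
      rw [ih.2.tsum_eq, hp1.tsum_eq, mul_one] at this
      exact this

lemma summable_term (q : ℤ → ℝ) (hq0 : ∀ x, 0 ≤ q x) (hq : Summable q) (θ : ℝ) :
    Summable fun x : ℤ => ‖(q x : ℂ) * Complex.exp (Complex.I * θ * x)‖ := by
  simpa only [norm_term q hq0] using hq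

lemma char_conv (f g : ℤ → ℝ) (hf0 : ∀ x, 0 ≤ f x) (hf : Summable f)
    (hg0 : ∀ x, 0 ≤ g x) (hg : Summable g) (θ : ℝ) :
    rwChar (fun x => ∑' y, f y * g (x - y)) θ = rwChar f θ * rwChar g θ := by
  have := conv_hasSum (summable_term f hf0 hf θ) (summable_term g hg0 hg θ)
  unfold rwChar
  rw [← this.tsum_eq]
  refine tsum_congr fun x => ?_
  rw [Complex.ofReal_tsum, ← tsum_mul_right]
  refine tsum_congr fun y => ?_
  have h : Complex.exp (Complex.I * θ * x)
    = Complex.exp (Complex.I * θ * y) * Complex.exp (Complex.I * θ * ((x - y : ℤ) : ℂ)) := by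
    rw [← Complex.exp_add]; congr 1; push_cast; ring
  rw [h]; push_cast; ring

lemma char_pn (p : ℤ → ℝ) (hp0 : ∀ x, 0 ≤ p x) (hp1 : HasSum p 1) (n : ℕ) (θ : ℝ) :
    rwChar (pn p n) θ = rwChar p θ ^ n := by
  induction n with
  | zero =>
    unfold rwChar
    rw [tsum_eq_single 0]
    · simp [pn]
    · intro b hb; simp [pn, hb]
  | succ n ih =>
    have h := pn_prop p hp0 hp1 n
    rw [pow_succ, ← ih, ← char_conv _ _ h.1 h.2.summable hp0 hp1.summable]
    rfl

lemma char_cont (q : ℤ → ℝ) (hq0 : ∀ x, 0 ≤ q x) (hq : Summable q) : Continuous (rwChar q) := by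
  unfold rwChar
  refine continuous_tsum (fun i => by fun_prop) hq (fun n θ => (norm_term q hq0 θ n).le)

lemma char_norm_le (q : ℤ → ℝ) (hq0 : ∀ x, 0 ≤ q x) (hq : HasSum q 1) (θ : ℝ) :
    ‖rwChar q θ‖ ≤ 1 := by
  have := norm_tsum_le_tsum_norm (summable_term q hq0 hq.summable θ)
  simp only [norm_term q hq0, hq.tsum_eq] at this
  exact this

lemma int_exp (k : ℤ) : ∫ θ in (-Real.pi)..Real.pi, Complex.exp (Complex.I * θ * k)
    = if k = 0 then (2 * Real.pi : ℂ) else 0 := by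
  split_ifs with h
  · subst h; simp; ring
  · have hc : Complex.I * k ≠ 0 := mul_ne_zero Complex.I_ne_zero (by exact_mod_cast h)
    have := integral_exp_mul_complex (a := -Real.pi) (b := Real.pi) hc
    have h2 : ∀ θ : ℝ, Complex.I * θ * k = Complex.I * k * θ := fun θ => by ring
    simp only [h2]
    rw [this]
    have : Complex.exp (Complex.I * k * (Real.pi : ℝ)) = Complex.exp (Complex.I * k * ((-Real.pi : ℝ) : ℂ)) := by
      rw [Complex.exp_eq_exp_iff_exists_int]
      exact ⟨k, by push_cast; ring⟩
    rw [this, sub_self, zero_div]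

lemma inversion (q : ℤ → ℝ) (hq0 : ∀ x, 0 ≤ q x) (hq : Summable q) (x : ℤ) :
    (q x : ℂ) * (2 * Real.pi)
      = ∫ θ in (-Real.pi)..Real.pi, rwChar q θ * Complex.exp (-(Complex.I * θ * x)) := by
  have key : HasSum (fun y : ℤ => ∫ θ in (-Real.pi)..Real.pi,
      (q y : ℂ) * Complex.exp (Complex.I * θ * y) * Complex.exp (-(Complex.I * θ * x)))
      (∫ θ in (-Real.pi)..Real.pi, rwChar q θ * Complex.exp (-(Complex.I * θ * x))) := by
    refine intervalIntegral.hasSum_integral_of_dominated_convergence (fun y _ => q y) ?_ ?_ ?_ ?_ ?_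
    · intro n; exact Continuous.aestronglyMeasurable (by fun_prop)
    · intro n; refine Eventually.of_forall fun t _ => ?_
      rw [norm_mul, norm_term q hq0]
      have h : -(Complex.I * t * x) = ((-t * x : ℝ) : ℂ) * Complex.I := by push_cast; ring
      rw [h, Complex.norm_exp_ofReal_mul_I, mul_one]
    · exact Eventually.of_forall fun t _ => hq
    · exact intervalIntegrable_const
    · exact Eventually.of_forall fun t _ =>
        (summable_term q hq0 hq t).of_norm.hasSum.mul_right _
  have h2 : ∀ y : ℤ, (∫ θ in (-Real.pi)..Real.pi,
      (q y : ℂ) * Complex.exp (Complex.I * θ * y) * Complex.exp (-(Complex.I * θ * x)))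
      = if y = x then (q x : ℂ) * (2 * Real.pi) else 0 := by
    intro y
    have : ∀ θ : ℝ, (q y : ℂ) * Complex.exp (Complex.I * θ * y) * Complex.exp (-(Complex.I * θ * x))
      = (q y : ℂ) * Complex.exp (Complex.I * θ * ((y - x : ℤ) : ℂ)) := by
      intro θ; rw [mul_assoc, ← Complex.exp_add]; congr 2; push_cast; ring
    simp only [this]
    rw [intervalIntegral.integral_const_mul, int_exp]
    by_cases h : y = x
    · simp [h]
    · simp [h, sub_eq_zero]
  simp only [h2] at key
  exact (hasSum_ite_eq x _).unique key

lemma pn_add (p : ℤ → ℝ) (hp0 : ∀ x, 0 ≤ p x) (hp1 : HasSum p 1) (m k : ℕ) (x : ℤ) :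
    pn p (m + k) x = ∑' y, pn p m y * pn p k (x - y) := by
  have hm := pn_prop p hp0 hp1 m
  have hk := pn_prop p hp0 hp1 k
  have hmk := pn_prop p hp0 hp1 (m + k)
  have hs := conv_hasSum (f := pn p m) (g := pn p k) hm.2.summable.norm hk.2.summable.norm
  have h1 := inversion _ hmk.1 hmk.2.summable x
  have h2 := inversion (fun x => ∑' y, pn p m y * pn p k (x - y))
    (fun x => tsum_nonneg fun y => mul_nonneg (hm.1 _) (hk.1 _)) hs.summable x
  simp only [char_conv _ _ hm.1 hm.2.summable hk.1 hk.2.summable, char_pn p hp0 hp1, ← pow_add] at h1 h2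
  rw [← h1] at h2
  have hpi : (2 * Real.pi : ℂ) ≠ 0 := by
    have := Real.pi_ne_zero
    simpa using this
  exact_mod_cast (mul_right_cancel₀ hpi h2).symm

/-- tail bound -/
lemma tail_bound (p : ℤ → ℝ) (α K : ℝ) (hα : 1 < α) (hp0 : ∀ x, 0 ≤ p x) (hp1 : HasSum p 1)
    (hK0 : 0 ≤ K) (hK : ∀ θ, ‖1 - rwChar p θ‖ ≤ K * |θ| ^ α) (m : ℕ) (r : ℝ) (hr : 0 < r) :
    ∑' y : ℤ, (if r ≤ |(y : ℝ)| then pn p m y else 0) ≤ 2 * K * 2 ^ α * (m * r ^ (-α)) := by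
  have hm := pn_prop p hp0 hp1 m
  set u : ℝ := 2 / r with hu
  have hu0 : 0 < u := by positivity
  refine Real.tsum_le_of_sum_le (fun y => ?_) (fun s => ?_)
  · dsimp; split_ifs; exacts [hm.1 y, le_rfl]
  have hpt : ∀ t : ℝ, 0 ≤ t → t ≤ u → ∑ y ∈ s, pn p m y * (1 - Real.cos (t * y)) ≤ m * (K * u ^ α) := by
    intro t ht htu
    have hre : HasSum (fun y : ℤ => pn p m y * (1 - Real.cos (t * y))) (1 - (rwChar (pn p m) t).re) := by
      have h1 := Complex.hasSum_re (summable_term _ hm.1 hm.2.summable t).of_norm.hasSum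
      have h2 := hm.2.sub h1
      have hfun : (fun y : ℤ => pn p m y * (1 - Real.cos (t * y)))
          = fun y : ℤ => pn p m y - ((pn p m y : ℂ) * Complex.exp (Complex.I * t * y)).re := by
       funext y
       have h : Complex.I * t * y = ((t * y : ℝ) : ℂ) * Complex.I := by push_cast; ring
       rw [h, Complex.re_ofReal_mul, Complex.exp_ofReal_mul_I_re]; ring
      rw [hfun]
      exact h2
    have h3 := sum_le_hasSum s (fun y _ => mul_nonneg (hm.1 y) (by linarith [Real.cos_le_one (t * y)])) hre
    refine h3.trans ?_
    rw [char_pn p hp0 hp1]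
    have h4 : 1 - ((rwChar p t) ^ m).re ≤ ‖1 - (rwChar p t) ^ m‖ := by
      have := Complex.re_le_norm (1 - (rwChar p t) ^ m)
      simpa using this
    refine h4.trans ?_
    have h5 : ‖1 - (rwChar p t) ^ m‖ ≤ m * ‖1 - rwChar p t‖ := by
      have hz := char_norm_le p hp0 hp1 t
      generalize rwChar p t = z at hz
      rw [← mul_neg_geom_sum, norm_mul, mul_comm]
      gcongr
      refine (norm_sum_le _ _).trans ?_
      refine (Finset.sum_le_card_nsmul _ _ 1 fun i _ => ?_).trans (by simp)
      rw [norm_pow]; exact pow_le_one₀ (norm_nonneg _) hz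
    refine h5.trans ?_
    gcongr
    refine (hK t).trans ?_
    rw [abs_of_nonneg ht]
    gcongr
  have hint := intervalIntegral.integral_mono_on hu0.le
    (f := fun t : ℝ => ∑ y ∈ s, pn p m y * (1 - Real.cos (t * y))) (g := fun _ => m * (K * u ^ α))
    (Continuous.intervalIntegrable (by fun_prop) _ _) intervalIntegrable_const
    (μ := volume) (fun t ht => hpt t ht.1 ht.2)
  rw [intervalIntegral.integral_finsetSum
    (fun y _ => Continuous.intervalIntegrable (by fun_prop) _ _)] at hint
  simp only [intervalIntegral.integral_const_mul, intervalIntegral.integral_const, smul_eq_mul, sub_zero] at hint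
  have hlow : u / 2 * ∑ y ∈ s, (if r ≤ |(y : ℝ)| then pn p m y else 0)
      ≤ ∑ y ∈ s, pn p m y * ∫ t in (0 : ℝ)..u, (1 - Real.cos (t * y)) := by
    rw [Finset.mul_sum]
    refine Finset.sum_le_sum fun y _ => ?_
    split_ifs with h
    · rw [mul_comm]
      refine mul_le_mul_of_nonneg_left ?_ (hm.1 y)
      have hy : 0 < |(y : ℝ)| := hr.trans_le h
      have hy' : (y : ℝ) ≠ 0 := abs_pos.1 hy
      rw [intervalIntegral.integral_sub intervalIntegrable_const
        (Continuous.intervalIntegrable (by fun_prop) _ _),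
        intervalIntegral.integral_comp_mul_right _ hy']
      simp only [integral_cos, intervalIntegral.integral_const, smul_eq_mul, sub_zero, zero_mul, Real.sin_zero, mul_one]
      have : (y : ℝ)⁻¹ * Real.sin (u * y) ≤ r⁻¹ := by
        refine (le_abs_self _).trans ?_
        rw [abs_mul, abs_inv]
        calc |(y : ℝ)|⁻¹ * |Real.sin (u * y)| ≤ r⁻¹ * 1 := by
              gcongr
              exact Real.abs_sin_le_one _
          _ = _ := mul_one _
      have h2 : u / 2 = r⁻¹ := by rw [hu]; field_simp
      linarith
    · rw [mul_zero]
      refine mul_nonneg (hm.1 y) (intervalIntegral.integral_nonneg hu0.le fun t _ => ?_)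
      linarith [Real.cos_le_one (t * y)]
  have h6 := hlow.trans hint
  have h7 : ∑ y ∈ s, (if r ≤ |(y : ℝ)| then pn p m y else 0) ≤ 2 * (m * (K * u ^ α)) := by
    have : u / 2 * ∑ y ∈ s, (if r ≤ |(y : ℝ)| then pn p m y else 0) ≤ u / 2 * (2 * (m * (K * u ^ α))) := by
      linarith
    exact le_of_mul_le_mul_left this (by positivity)
  refine h7.trans (le_of_eq ?_)
  rw [hu, Real.div_rpow (by norm_num) hr.le, Real.rpow_neg hr.le]
  field_simp

lemma local_bound (p : ℤ → ℝ) (α c : ℝ) (hα : 1 < α) (hp0 : ∀ x, 0 ≤ p x) (hp1 : HasSum p 1)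
    (hc : 0 < c) (hφ : ∀ θ, |θ| ≤ Real.pi → ‖rwChar p θ‖ ≤ Real.exp (-c * |θ| ^ α)) :
    ∃ A : ℝ, 0 < A ∧ ∀ n : ℕ, ∀ x, pn p n x ≤ A * ((n : ℝ) + 1) ^ (-(1 / α)) := by
  have hα0 : 0 < α := by linarith
  set G := Real.Gamma (1 / α + 1) with hG
  have hG0 : 0 < G := Real.Gamma_pos_of_pos (by positivity)
  have hpi := Real.pi_pos
  refine ⟨1 + c ^ (-(1 / α)) * G * 2 ^ (1 / α), by positivity, fun n x => ?_⟩
  have hn := pn_prop p hp0 hp1 n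
  rcases Nat.eq_zero_or_pos n with rfl | hn1
  · have : pn p 0 x ≤ 1 := by simp only [pn]; split_ifs <;> norm_num
    have h0 : 0 ≤ c ^ (-(1 / α)) * G * 2 ^ (1 / α) := by positivity
    simp only [Nat.cast_zero, zero_add, Real.one_rpow, mul_one]
    linarith
  have hn1' : (1 : ℝ) ≤ n := by exact_mod_cast hn1
  have hb : 0 < n * c := by positivity
  have hI : IntegrableOn (fun x : ℝ => Real.exp (-(n * c) * x ^ α)) (Set.Ioi 0) := by
    have := integrableOn_rpow_mul_exp_neg_mul_rpow (p := α) (s := 0) (b := n * c) (by norm_num) hα0 hb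
    simpa using this
  have hcont : Continuous fun θ : ℝ => Real.exp (-(n * c) * |θ| ^ α) := by
    have : Continuous fun θ : ℝ => |θ| ^ α := continuous_abs.rpow_const (fun _ => Or.inr hα0.le)
    fun_prop
  have hhalf : ∫ θ in (0 : ℝ)..Real.pi, Real.exp (-(n * c) * |θ| ^ α) ≤ (n * c) ^ (-(1 / α)) * G := by
    have h1 := integral_exp_neg_mul_rpow hα0 hb
    rw [← hG, neg_div] at h1
    rw [← h1, intervalIntegral.integral_of_le hpi.le]
    calc ∫ θ in Set.Ioc 0 Real.pi, Real.exp (-(n * c) * |θ| ^ α)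
        = ∫ θ in Set.Ioc 0 Real.pi, Real.exp (-(n * c) * θ ^ α) :=
          setIntegral_congr_fun measurableSet_Ioc fun θ hθ => by
            simp only [abs_of_pos hθ.1]
      _ ≤ _ := setIntegral_mono_set hI (Eventually.of_forall fun _ => (Real.exp_pos _).le)
          (HasSubset.Subset.eventuallyLE Set.Ioc_subset_Ioi_self)
  have hfull : ∫ θ in (-Real.pi)..Real.pi, Real.exp (-(n * c) * |θ| ^ α)
      ≤ 2 * ((n * c) ^ (-(1 / α)) * G) := by
    rw [← intervalIntegral.integral_add_adjacent_intervals (b := 0)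
      (hcont.intervalIntegrable _ _) (hcont.intervalIntegrable _ _)]
    have h2 := intervalIntegral.integral_comp_neg (a := 0) (b := Real.pi)
      (fun θ : ℝ => Real.exp (-(n * c) * |θ| ^ α))
    simp only [abs_neg, neg_zero] at h2
    rw [← h2]; linarith
  have hinv := inversion _ hn.1 hn.2.summable x
  have hnorm : pn p n x * (2 * Real.pi) ≤ 2 * ((n * c) ^ (-(1 / α)) * G) := by
    have e : pn p n x * (2 * Real.pi) = ‖(pn p n x : ℂ) * (2 * Real.pi)‖ := by
      have : (pn p n x : ℂ) * (2 * Real.pi) = ((pn p n x * (2 * Real.pi) : ℝ) : ℂ) := by push_cast; ring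
      rw [this, Complex.norm_real, Real.norm_of_nonneg (mul_nonneg (hn.1 x) (by positivity))]
    rw [e, hinv]
    refine (intervalIntegral.norm_integral_le_of_norm_le (by linarith)
      (Eventually.of_forall fun θ hθ => ?_) (hcont.intervalIntegrable _ _)).trans hfull
    have h : -(Complex.I * θ * x) = ((-θ * x : ℝ) : ℂ) * Complex.I := by push_cast; ring
    rw [norm_mul, h, Complex.norm_exp_ofReal_mul_I, mul_one, char_pn p hp0 hp1, norm_pow]
    have := pow_le_pow_left₀ (norm_nonneg _) (hφ θ (abs_le.2 ⟨hθ.1.le, hθ.2⟩)) n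
    refine this.trans (le_of_eq ?_)
    rw [← Real.exp_nat_mul]; congr 1; ring
  have h3 : pn p n x ≤ (n * c) ^ (-(1 / α)) * G := by
    have : pn p n x * (2 * 1) ≤ pn p n x * (2 * Real.pi) :=
      mul_le_mul_of_nonneg_left (by linarith [Real.pi_gt_three]) (hn.1 x)
    linarith
  have h4 : (n : ℝ) ^ (-(1 / α)) ≤ 2 ^ (1 / α) * ((n : ℝ) + 1) ^ (-(1 / α)) := by
    have : (((n : ℝ) + 1) / 2) ^ (-(1 / α)) = 2 ^ (1 / α) * ((n : ℝ) + 1) ^ (-(1 / α)) := by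
      rw [Real.div_rpow (by positivity) (by norm_num), Real.rpow_neg (by norm_num : (0:ℝ) ≤ 2), div_inv_eq_mul, mul_comm]
    rw [← this]
    refine Real.rpow_le_rpow_of_nonpos (by positivity) (by linarith) ?_
    have : 0 < 1 / α := by positivity
    linarith
  rw [Real.mul_rpow (by positivity) hc.le] at h3
  calc pn p n x ≤ (n : ℝ) ^ (-(1 / α)) * (c ^ (-(1 / α)) * G) := by linarith
    _ ≤ (2 ^ (1 / α) * ((n : ℝ) + 1) ^ (-(1 / α))) * (c ^ (-(1 / α)) * G) := by gcongr
    _ = (0 + c ^ (-(1 / α)) * G * 2 ^ (1 / α)) * ((n : ℝ) + 1) ^ (-(1 / α)) := by ring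
    _ ≤ _ := by gcongr; norm_num

lemma char_lt_one (p : ℤ → ℝ) (hp0 : ∀ x, 0 ≤ p x) (hp1 : HasSum p 1)
    (hap : ∀ x : ℤ, ∀ᶠ n in atTop, 0 < pn p n x) (θ : ℝ) (h0 : θ ≠ 0) (hθ : |θ| ≤ Real.pi) :
    ‖rwChar p θ‖ < 1 := by
  obtain ⟨n, ha, hb⟩ := ((hap 0).and (hap 1)).exists
  have hn := pn_prop p hp0 hp1 n
  have hcos : Real.cos θ < 1 := by
    refine lt_of_le_of_ne (Real.cos_le_one _) fun h => h0 ?_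
    have := abs_le.1 hθ
    exact (Real.cos_eq_one_iff_of_lt_of_lt (by linarith [Real.pi_pos]) (by linarith [Real.pi_pos])).1 h
  have hlt : ‖rwChar p θ ^ n‖ < 1 := by
    rw [← char_pn p hp0 hp1]
    have hs := summable_term _ hn.1 hn.2.summable θ
    have h1 := hs.of_norm.sum_add_tsum_compl (s := {0, 1})
    have h2 := hn.2.summable.sum_add_tsum_compl (s := {0, 1})
    rw [hn.2.tsum_eq] at h2
    have h3 := norm_tsum_le_tsum_norm
      (hs.comp_injective (i := fun x : ((({0, 1} : Finset ℤ) : Set ℤ)ᶜ : Set ℤ) => (x : ℤ)) Subtype.val_injective)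
    simp only [Function.comp_def, norm_term _ hn.1] at h3
    rw [Finset.sum_pair (by norm_num)] at h1 h2
    unfold rwChar
    rw [← h1]
    refine (norm_add_le _ _).trans_lt ?_
    have h4 : ‖(pn p n 0 : ℂ) * Complex.exp (Complex.I * θ * (0 : ℤ)) +
        (pn p n 1 : ℂ) * Complex.exp (Complex.I * θ * (1 : ℤ))‖ < pn p n 0 + pn p n 1 := by
      refine lt_of_pow_lt_pow_left₀ 2 (by positivity) ?_
      rw [← Complex.normSq_eq_norm_sq, Complex.normSq_apply]
      have h : Complex.I * θ * (1 : ℤ) = (θ : ℂ) * Complex.I := by push_cast; ring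
      rw [h]
      simp only [Complex.add_re, Complex.add_im, Complex.re_ofReal_mul, Complex.im_ofReal_mul,
        Complex.exp_ofReal_mul_I_re, Complex.exp_ofReal_mul_I_im, Int.cast_zero, mul_zero,
        Complex.exp_zero, Complex.one_re, Complex.one_im]
      have := Real.sin_sq_add_cos_sq θ
      have h5 := mul_pos ha hb
      have h6 : (pn p n 0 * 1 + pn p n 1 * Real.cos θ) * (pn p n 0 * 1 + pn p n 1 * Real.cos θ) +
          (0 + pn p n 1 * Real.sin θ) * (0 + pn p n 1 * Real.sin θ)
          = pn p n 0 ^ 2 + 2 * (pn p n 0 * pn p n 1 * Real.cos θ)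
            + pn p n 1 ^ 2 * (Real.sin θ ^ 2 + Real.cos θ ^ 2) := by ring
      rw [h6, this]
      nlinarith [mul_pos h5 (sub_pos.2 hcos)]
    linarith
  rw [norm_pow] at hlt
  by_contra hcon
  push Not at hcon
  exact absurd (one_le_pow₀ hcon (n := n)) (not_le.2 hlt)

lemma char_estimates (p : ℤ → ℝ) (α γ c₀ : ℝ)
    (hα : 1 < α) (hα2 : α < 2) (hγ : |γ| ≤ 2 - α) (hc₀ : 0 < c₀)
    (hp0 : ∀ x, 0 ≤ p x) (hp1 : HasSum p 1)
    (hap : ∀ x : ℤ, ∀ᶠ n in atTop, 0 < pn p n x)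
    (hpos : Tendsto (fun θ : ℝ => (1 - rwChar p θ) / ((|θ| ^ α : ℝ) : ℂ)) (𝓝[>] 0)
      (𝓝 ((c₀ : ℂ) * Complex.exp (Complex.I * Real.pi * γ / 2))))
    (hneg : Tendsto (fun θ : ℝ => (1 - rwChar p θ) / ((|θ| ^ α : ℝ) : ℂ)) (𝓝[<] 0)
      (𝓝 ((c₀ : ℂ) * Complex.exp (-(Complex.I * Real.pi * γ / 2))))) :
    (∃ K : ℝ, 0 ≤ K ∧ ∀ θ, ‖1 - rwChar p θ‖ ≤ K * |θ| ^ α) ∧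
    (∃ c : ℝ, 0 < c ∧ ∀ θ, |θ| ≤ Real.pi → ‖rwChar p θ‖ ≤ Real.exp (-c * |θ| ^ α)) := by
  have hα0 : 0 < α := by linarith
  have hpi := Real.pi_pos
  set κ := c₀ * Real.cos (Real.pi * γ / 2) with hκ
  have hκ0 : 0 < κ := by
    refine mul_pos hc₀ (Real.cos_pos_of_mem_Ioo ⟨?_, ?_⟩) <;>
      have := abs_le.1 hγ <;> nlinarith
  have e1 : Complex.I * Real.pi * γ / 2 = ((Real.pi * γ / 2 : ℝ) : ℂ) * Complex.I := by push_cast; ring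
  have e2 : -(Complex.I * Real.pi * γ / 2) = ((-(Real.pi * γ / 2) : ℝ) : ℂ) * Complex.I := by
    push_cast; ring
  rw [e1] at hpos
  rw [e2] at hneg
  have hev : ∀ (β : ℝ) (l : Filter ℝ), Real.cos β = Real.cos (Real.pi * γ / 2) →
      Tendsto (fun θ : ℝ => (1 - rwChar p θ) / ((|θ| ^ α : ℝ) : ℂ)) l
        (𝓝 ((c₀ : ℂ) * Complex.exp ((β : ℂ) * Complex.I))) →
      ∀ᶠ θ in l, κ / 2 ≤ ((1 - rwChar p θ) / ((|θ| ^ α : ℝ) : ℂ)).re ∧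
        ‖(1 - rwChar p θ) / ((|θ| ^ α : ℝ) : ℂ)‖ ≤ c₀ + 1 := by
    intro β l hβ h
    have h1 := (Complex.continuous_re.tendsto _).comp h
    rw [Complex.re_ofReal_mul, Complex.exp_ofReal_mul_I_re, hβ, ← hκ] at h1
    have h2 := h.norm
    rw [norm_mul, Complex.norm_exp_ofReal_mul_I, mul_one, Complex.norm_real, Real.norm_of_nonneg hc₀.le] at h2
    filter_upwards [h1.eventually (lt_mem_nhds (half_lt_self hκ0)),
      h2.eventually (gt_mem_nhds (lt_add_one c₀))] with θ ha hb
    exact ⟨ha.le, hb.le⟩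
  have hev2 := Filter.eventually_sup.2 ⟨hev _ _ (Real.cos_neg _) hneg, hev _ _ rfl hpos⟩
  rw [nhdsLT_sup_nhdsGT] at hev2
  have hsmall : ∀ᶠ θ : ℝ in 𝓝[≠] 0, |θ| ^ α < κ / (2 * (c₀ + 1) ^ 2) := by
    have : Continuous fun θ : ℝ => |θ| ^ α := continuous_abs.rpow_const (fun _ => Or.inr hα0.le)
    have h := (this.tendsto 0).mono_left (nhdsWithin_le_nhds (s := {0}ᶜ))
    rw [abs_zero, Real.zero_rpow hα0.ne'] at h
    exact h.eventually (gt_mem_nhds (by positivity))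
  have hall := hev2.and hsmall
  rw [eventually_nhdsWithin_iff, Metric.eventually_nhds_iff] at hall
  obtain ⟨δ', hδ', hδ⟩ := hall
  set δ := min (δ' / 2) 1 with hδdef
  have hδ0 : 0 < δ := by positivity
  have hδlt : δ < δ' := (min_le_left _ _).trans_lt (half_lt_self hδ')
  have hδ1 : δ ≤ 1 := min_le_right _ _
  have hφ0 : rwChar p 0 = 1 := by
    have : rwChar p 0 = ((∑' x, p x : ℝ) : ℂ) := by
      unfold rwChar; rw [Complex.ofReal_tsum]; simp
    rw [this, hp1.tsum_eq, Complex.ofReal_one]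
  have hnear : ∀ θ : ℝ, |θ| ≤ δ → κ / 2 * |θ| ^ α ≤ (1 - rwChar p θ).re ∧
      ‖1 - rwChar p θ‖ ≤ (c₀ + 1) * |θ| ^ α ∧ |θ| ^ α ≤ κ / (2 * (c₀ + 1) ^ 2) := by
    intro θ hθ
    by_cases h0 : θ = 0
    · subst h0
      rw [abs_zero, Real.zero_rpow hα0.ne', hφ0]
      simp; positivity
    · obtain ⟨⟨h1, h2⟩, h3⟩ := hδ (by rw [Real.dist_eq, sub_zero]; linarith : dist θ 0 < δ') h0
      have hs : 0 < |θ| ^ α := Real.rpow_pos_of_pos (abs_pos.2 h0) _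
      rw [Complex.div_ofReal_re, le_div_iff₀ hs] at h1
      rw [norm_div, Complex.norm_real, Real.norm_of_nonneg hs.le, div_le_iff₀ hs] at h2
      exact ⟨h1, h2, h3.le⟩
  refine ⟨⟨(c₀ + 1) + 2 * δ ^ (-α), by positivity, fun θ => ?_⟩, ?_⟩
  · have hs : 0 ≤ |θ| ^ α := by positivity
    rcases le_total |θ| δ with h | h
    · refine (hnear θ h).2.1.trans (mul_le_mul_of_nonneg_right ?_ hs)
      have : 0 ≤ 2 * δ ^ (-α) := by positivity
      linarith
    · have h1 : ‖1 - rwChar p θ‖ ≤ 2 := by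
        refine (norm_sub_le _ _).trans ?_
        have := char_norm_le p hp0 hp1 θ
        rw [norm_one]; linarith
      have h2 : 1 ≤ δ ^ (-α) * |θ| ^ α := by
        have : δ ^ α ≤ |θ| ^ α := by gcongr
        rw [Real.rpow_neg hδ0.le, inv_mul_eq_div, one_le_div (by positivity)]
        exact this
      nlinarith [mul_nonneg (by linarith : 0 ≤ c₀ + 1) hs]
  · have hcpt : IsCompact (Set.Icc (-Real.pi) (-δ) ∪ Set.Icc δ Real.pi) := isCompact_Icc.union isCompact_Icc
    obtain ⟨θ₀, hθ₀, hmax⟩ := hcpt.exists_isMaxOn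
      ⟨δ, Or.inr ⟨le_rfl, by linarith [Real.pi_gt_three]⟩⟩
      ((char_cont p hp0 hp1.summable).norm.continuousOn)
    have hM : ‖rwChar p θ₀‖ < 1 := by
      refine char_lt_one p hp0 hp1 hap θ₀ ?_ ?_
      · rintro rfl
        rcases hθ₀ with h | h
        · linarith [h.2]
        · linarith [h.1]
      · rw [abs_le]
        rcases hθ₀ with h | h
        · exact ⟨h.1, by linarith [h.2]⟩
        · exact ⟨by linarith [h.1], h.2⟩
    set M := ‖rwChar p θ₀‖ with hMdef
    have hP : 0 < Real.pi ^ α := by positivity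
    refine ⟨min (κ / 4) ((1 - M) / Real.pi ^ α), lt_min (by positivity) (div_pos (by linarith) hP), fun θ hθ => ?_⟩
    have hs : 0 ≤ |θ| ^ α := by positivity
    rcases le_total |θ| δ with h | h
    · obtain ⟨h1, h2, h3⟩ := hnear θ h
      have h4 : ‖rwChar p θ‖ ≤ Real.exp (-(κ / 4) * |θ| ^ α) := by
        refine (sq_le_sq₀ (norm_nonneg _) (Real.exp_pos _).le).1 ?_
        have h5 : ‖rwChar p θ‖ ^ 2 = 1 - 2 * (1 - rwChar p θ).re + ‖1 - rwChar p θ‖ ^ 2 := by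
          rw [← Complex.normSq_eq_norm_sq, ← Complex.normSq_eq_norm_sq, Complex.normSq_apply, Complex.normSq_apply]
          simp; ring
        have h6 : ‖1 - rwChar p θ‖ ^ 2 ≤ ((c₀ + 1) * |θ| ^ α) ^ 2 := by gcongr
        have h7 : (c₀ + 1) ^ 2 * |θ| ^ α ≤ κ / 2 := by
          rw [le_div_iff₀ (by positivity)] at h3; linarith
        have h8 := mul_le_mul_of_nonneg_right h7 hs
        have h9 := Real.add_one_le_exp (-(κ / 2) * |θ| ^ α)
        rw [← Real.exp_nat_mul]
        have : ((2 : ℕ) : ℝ) * (-(κ / 4) * |θ| ^ α) = -(κ / 2) * |θ| ^ α := by push_cast; ring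
        rw [this, h5]
        nlinarith
      refine h4.trans (Real.exp_le_exp.2 ?_)
      have := mul_le_mul_of_nonneg_right (min_le_left (κ / 4) ((1 - M) / Real.pi ^ α)) hs
      linarith
    · have h1 : ‖rwChar p θ‖ ≤ M := by
        refine hmax ?_
        have := abs_le.1 hθ
        rcases le_abs.1 h with h' | h'
        · exact Or.inr ⟨h', this.2⟩
        · exact Or.inl ⟨this.1, by linarith⟩
      have h2 := Real.add_one_le_exp (-(1 - M))
      refine (h1.trans (by linarith : M ≤ Real.exp (-(1 - M)))).trans (Real.exp_le_exp.2 ?_)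
      have h3 : |θ| ^ α ≤ Real.pi ^ α := by gcongr
      have h4 := mul_le_mul_of_nonneg_right (min_le_right (κ / 4) ((1 - M) / Real.pi ^ α)) hs
      have h5 : (1 - M) / Real.pi ^ α * |θ| ^ α ≤ 1 - M := by
        calc _ ≤ (1 - M) / Real.pi ^ α * Real.pi ^ α :=
              mul_le_mul_of_nonneg_left h3 (div_nonneg (by linarith) hP.le)
          _ = _ := div_mul_cancel₀ _ hP.ne'
      linarith

lemma split_bound (p : ℤ → ℝ) (hp0 : ∀ x, 0 ≤ p x) (hp1 : HasSum p 1) (m k : ℕ) (x : ℤ)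
    (a b : ℝ) (ha : ∀ y, pn p m y ≤ a) (hb : ∀ y, pn p k y ≤ b) :
    pn p (m + k) x ≤ b * ∑' y : ℤ, (if |(x : ℝ)| / 2 ≤ |(y : ℝ)| then pn p m y else 0)
      + a * ∑' y : ℤ, (if |(x : ℝ)| / 2 ≤ |(y : ℝ)| then pn p k y else 0) := by
  have hm := pn_prop p hp0 hp1 m
  have hk := pn_prop p hp0 hp1 k
  have hsum : ∀ n, Summable fun y : ℤ => (if |(x : ℝ)| / 2 ≤ |(y : ℝ)| then pn p n y else 0) := by
    intro n
    have hn := pn_prop p hp0 hp1 n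
    refine hn.2.summable.of_nonneg_of_le (fun y => ?_) (fun y => ?_)
    · split_ifs; exacts [hn.1 y, le_rfl]
    · split_ifs; exacts [le_rfl, hn.1 y]
  have h1 := (hsum m).hasSum.mul_left b
  have h2 := (((Equiv.subLeft x).hasSum_iff).2 (hsum k).hasSum).mul_left a
  have h3 := h1.add h2
  rw [pn_add p hp0 hp1]
  have ha0 : 0 ≤ a := (hm.1 0).trans (ha 0)
  have hb0 : 0 ≤ b := (hk.1 0).trans (hb 0)
  have hle : ∀ y : ℤ, pn p m y * pn p k (x - y) ≤
      b * (if |(x : ℝ)| / 2 ≤ |(y : ℝ)| then pn p m y else 0) +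
      a * (if |(x : ℝ)| / 2 ≤ |((x - y : ℤ) : ℝ)| then pn p k (x - y) else 0) := by
    intro y
    have i1 : pn p m y * pn p k (x - y) ≤ b * pn p m y := by
      rw [mul_comm]; exact mul_le_mul_of_nonneg_right (hb _) (hm.1 y)
    have i2 : pn p m y * pn p k (x - y) ≤ a * pn p k (x - y) :=
      mul_le_mul_of_nonneg_right (ha _) (hk.1 _)
    have j1 := mul_nonneg hb0 (hm.1 y)
    have j2 := mul_nonneg ha0 (hk.1 (x - y))
    split_ifs with h h' h'
    · linarith
    · linarith
    · linarith
    · exfalso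
      have := abs_add_le (y : ℝ) ((x - y : ℤ) : ℝ)
      push_cast at this h'
      rw [add_sub_cancel] at this
      linarith
  rw [← h3.tsum_eq]
  refine Summable.tsum_le_tsum hle ?_ h3.summable
  exact h3.summable.of_nonneg_of_le (fun y => mul_nonneg (hm.1 _) (hk.1 _)) hle

theorem stmt10 (p : ℤ → ℝ) (α γ c₀ : ℝ)
    (hα : 1 < α) (hα2 : α < 2) (hγ : |γ| ≤ 2 - α) (hc₀ : 0 < c₀)
    (hp0 : ∀ x, 0 ≤ p x) (hp1 : HasSum p 1)
    (hap : ∀ x : ℤ, ∀ᶠ n in atTop, 0 < pn p n x)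
    (hpos : Tendsto (fun θ : ℝ => (1 - rwChar p θ) / ((|θ| ^ α : ℝ) : ℂ)) (𝓝[>] 0)
      (𝓝 ((c₀ : ℂ) * Complex.exp (Complex.I * Real.pi * γ / 2))))
    (hneg : Tendsto (fun θ : ℝ => (1 - rwChar p θ) / ((|θ| ^ α : ℝ) : ℂ)) (𝓝[<] 0)
      (𝓝 ((c₀ : ℂ) * Complex.exp (-(Complex.I * Real.pi * γ / 2))))) :
    ∃ C : ℝ, ∀ n : ℕ, 1 ≤ n → ∀ x : ℤ,
      pn p n x ≤ C * (n : ℝ) ^ (-(1 / α)) *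
        (max 1 ((|(x : ℝ)| / (n : ℝ) ^ (1 / α)) ^ α))⁻¹ := by
  have hα0 : 0 < α := by linarith
  obtain ⟨⟨K, hK0, hK⟩, c, hc, hφ⟩ :=
    char_estimates p α γ c₀ hα hα2 hγ hc₀ hp0 hp1 hap hpos hneg
  obtain ⟨A, hA, hloc⟩ := local_bound p α c hα hp0 hp1 hc hφ
  have hia : 0 < 1 / α := by positivity
  set B := 2 * K * 2 ^ α with hB
  have hB0 : 0 ≤ B := by positivity
  set D := A * 2 ^ (1 / α) * (B * 2 ^ α) with hD
  have hD0 : 0 ≤ D := by positivity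
  refine ⟨A + D, fun n hn x => ?_⟩
  have hn0 : (0 : ℝ) < n := by exact_mod_cast hn
  have hnp : 0 < (n : ℝ) ^ (-(1 / α)) := by positivity
  have hS : pn p n x ≤ A * (n : ℝ) ^ (-(1 / α)) := by
    refine (hloc n x).trans ?_
    refine mul_le_mul_of_nonneg_left ?_ hA.le
    exact Real.rpow_le_rpow_of_nonpos hn0 (by linarith) (by linarith)
  rcases le_total ((|(x : ℝ)| / (n : ℝ) ^ (1 / α)) ^ α) 1 with hw | hw
  · rw [max_eq_left hw, inv_one, mul_one]
    refine hS.trans ?_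
    gcongr
    linarith
  rw [max_eq_right hw]
  have hx : 0 < |(x : ℝ)| := by
    rcases (abs_nonneg (x : ℝ)).eq_or_lt with h | h
    · rw [← h, zero_div, Real.zero_rpow hα0.ne'] at hw; linarith
    · exact h
  have hhalf : ∀ j : ℕ, n ≤ 2 * (j + 1) → ∀ y, pn p j y ≤ A * (2 ^ (1 / α) * (n : ℝ) ^ (-(1 / α))) := by
    intro j hj y
    refine (hloc j y).trans (mul_le_mul_of_nonneg_left ?_ hA.le)
    have e : ((n : ℝ) / 2) ^ (-(1 / α)) = 2 ^ (1 / α) * (n : ℝ) ^ (-(1 / α)) := by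
      rw [Real.div_rpow hn0.le (by norm_num), Real.rpow_neg (by norm_num : (0:ℝ) ≤ 2), div_inv_eq_mul, mul_comm]
    rw [← e]
    have hj' : (n : ℝ) ≤ 2 * (j + 1) := by exact_mod_cast hj
    exact Real.rpow_le_rpow_of_nonpos (by positivity) (by linarith) (by linarith)
  have hmk : n / 2 + (n - n / 2) = n := by omega
  have hsp := split_bound p hp0 hp1 (n / 2) (n - n / 2) x _ _
    (hhalf (n / 2) (by omega)) (hhalf (n - n / 2) (by omega))
  rw [hmk] at hsp
  have t1 := tail_bound p α K hα hp0 hp1 hK0 hK (n / 2) (|(x : ℝ)| / 2) (by positivity)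
  have t2 := tail_bound p α K hα hp0 hp1 hK0 hK (n - n / 2) (|(x : ℝ)| / 2) (by positivity)
  rw [← hB] at t1 t2
  set a := A * (2 ^ (1 / α) * (n : ℝ) ^ (-(1 / α))) with ha
  have ha0 : 0 ≤ a := by positivity
  have hcast : ((n / 2 : ℕ) : ℝ) + ((n - n / 2 : ℕ) : ℝ) = n := by exact_mod_cast hmk
  have h1 : pn p n x ≤ a * (B * (n * (|(x : ℝ)| / 2) ^ (-α))) := by
    calc pn p n x ≤ _ := hsp
      _ ≤ a * (B * (((n / 2 : ℕ) : ℝ) * (|(x : ℝ)| / 2) ^ (-α))) +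
          a * (B * (((n - n / 2 : ℕ) : ℝ) * (|(x : ℝ)| / 2) ^ (-α))) := by gcongr
      _ = a * (B * ((((n / 2 : ℕ) : ℝ) + ((n - n / 2 : ℕ) : ℝ)) * (|(x : ℝ)| / 2) ^ (-α))) := by ring
      _ = _ := by rw [hcast]
  have h2 : ((|(x : ℝ)| / (n : ℝ) ^ (1 / α)) ^ α)⁻¹ = n * |(x : ℝ)| ^ (-α) := by
    rw [Real.div_rpow hx.le (by positivity), ← Real.rpow_mul hn0.le, one_div_mul_cancel hα0.ne',
      Real.rpow_one, inv_div, Real.rpow_neg hx.le, div_eq_mul_inv]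
  have h3 : (|(x : ℝ)| / 2) ^ (-α) = 2 ^ α * |(x : ℝ)| ^ (-α) := by
    rw [Real.div_rpow hx.le (by norm_num), Real.rpow_neg (by norm_num : (0:ℝ) ≤ 2), div_inv_eq_mul, mul_comm]
  rw [h2]
  calc pn p n x ≤ a * (B * (n * (|(x : ℝ)| / 2) ^ (-α))) := h1
    _ = D * (n : ℝ) ^ (-(1 / α)) * (n * |(x : ℝ)| ^ (-α)) := by rw [h3, ha, hD]; ring
    _ ≤ (A + D) * (n : ℝ) ^ (-(1 / α)) * (n * |(x : ℝ)| ^ (-α)) := by gcongr; linarith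
end

section
/- Let S be a recurrent strongly aperiodic random walk on ℤ in the normal domain of attraction of a stable law of index α ∈ (1,2) with parameter γ, and suppose c₀·a(x) ~ κ₊·x^{α−1} as x → +∞ and c₀·a(x) ~ κ₋·|x|^{α−1} as x → −∞ with κ₋ > 0 (which holds when γ > α−2). Then there exists C such that for all R > 1 and all x ≤ R: P[σ^x_{[R,∞)} < σ^x_{{0}}] ≤ C·(a†(x)·R^{−α+1} + x₊/R). -/
open Filter Topology

/-- `pk p B n x y = P[x + S_n = y, σ^x_B > n]`: the walk killed on `B`. -/
noncomputable def pk (p : ℤ → ℝ) (B : Set ℤ) : ℕ → ℤ → ℤ → ℝ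
  | 0, x, y => if x = y then 1 else 0
  | n + 1, x, y => Set.indicator Bᶜ (fun w => ∑' z : ℤ, pk p B n x z * p (w - z)) y

/-- `P[σ^x_{[R,∞)} < σ^x_{{0}}]`: the probability that the walk started at `x`
enters `[R,∞)` strictly before hitting `0`, obtained by summing, over the time
and position just before the first entrance into `{0} ∪ [R,∞)`, the probability
that the next step lands in `[R,∞)`. -/
noncomputable def hitHalfBefore0 (p : ℤ → ℝ) (x R : ℤ) : ℝ :=
  ∑' n : ℕ, ∑' w : ℤ, pk p ({0} ∪ {v : ℤ | R ≤ v}) n x w * ∑' u : ℤ, if R - w ≤ u then p u else 0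


/-- One-step transition operator. -/
noncomputable def Pop (p f : ℤ → ℝ) (x : ℤ) : ℝ := ∑' u : ℤ, p u * f (x + u)

lemma summable_bdd {p : ℤ → ℝ} (hp0 : ∀ x, 0 ≤ p x) (hs : Summable p) (f : ℤ → ℝ) (M : ℝ)
    (hf : ∀ x, |f x| ≤ M) : Summable (fun u => p u * f u) := by
  refine Summable.of_norm_bounded (hs.mul_right M) (fun u => ?_)
  rw [Real.norm_eq_abs, abs_mul, abs_of_nonneg (hp0 u)]
  exact mul_le_mul_of_nonneg_left (hf u) (hp0 u)

lemma p_le_one {p : ℤ → ℝ} (hp0 : ∀ x, 0 ≤ p x) (hp1 : HasSum p 1) (x : ℤ) : p x ≤ 1 :=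
  le_hasSum hp1 x (fun j _ => hp0 j)

lemma pn_nonneg {p : ℤ → ℝ} (hp0 : ∀ x, 0 ≤ p x) (n : ℕ) (x : ℤ) : 0 ≤ pn p n x := by
  induction n generalizing x with
  | zero => simp only [pn]; split_ifs <;> norm_num
  | succ n ih => simp only [pn]; exact tsum_nonneg (fun y => mul_nonneg (ih y) (hp0 _))

lemma sum_shift_le {p : ℤ → ℝ} (hp0 : ∀ x, 0 ≤ p x) (hp1 : HasSum p 1) (y : ℤ) (s : Finset ℤ) :
    ∑ x ∈ s, p (x - y) ≤ 1 := by
  have h : HasSum (fun x => p (x - y)) 1 := (Equiv.subRight y).hasSum_iff.mpr hp1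
  exact sum_le_hasSum s (fun i _ => hp0 _) h

lemma pn_sum_le {p : ℤ → ℝ} (hp0 : ∀ x, 0 ≤ p x) (hp1 : HasSum p 1) (n : ℕ) (s : Finset ℤ) :
    ∑ x ∈ s, pn p n x ≤ 1 := by
  induction n generalizing s with
  | zero =>
    simp only [pn]
    rw [Finset.sum_ite_eq']
    split_ifs <;> norm_num
  | succ n ih =>
    have hs : Summable (pn p n) := summable_of_sum_le (pn_nonneg hp0 n) ih
    have hle : ∑' y, pn p n y ≤ 1 := hs.tsum_le_of_sum_le ih
    simp only [pn]
    have hsx : ∀ x ∈ s, Summable (fun y => pn p n y * p (x - y)) := fun x _ =>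
      summable_bdd (pn_nonneg hp0 n) hs (fun y => p (x - y)) 1
        (fun y => by rw [abs_of_nonneg (hp0 _)]; exact p_le_one hp0 hp1 _)
    rw [← Summable.tsum_finsetSum hsx]
    refine le_trans (Summable.tsum_le_tsum (fun y => ?_) (summable_sum hsx) hs) hle
    rw [← Finset.mul_sum]
    exact mul_le_of_le_one_right (pn_nonneg hp0 n y) (sum_shift_le hp0 hp1 y s)

lemma pn_summable {p : ℤ → ℝ} (hp0 : ∀ x, 0 ≤ p x) (hp1 : HasSum p 1) (n : ℕ) :
    Summable (pn p n) := summable_of_sum_le (pn_nonneg hp0 n) (pn_sum_le hp0 hp1 n)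

lemma pn_le_one {p : ℤ → ℝ} (hp0 : ∀ x, 0 ≤ p x) (hp1 : HasSum p 1) (n : ℕ) (x : ℤ) :
    pn p n x ≤ 1 := by
  simpa using pn_sum_le hp0 hp1 n {x}

lemma pn_hasSum {p : ℤ → ℝ} (hp0 : ∀ x, 0 ≤ p x) (hp1 : HasSum p 1) (n : ℕ) (r x : ℤ) :
    HasSum (fun u => p u * pn p n (r - (x + u))) (pn p (n + 1) (r - x)) := by
  have hs : Summable (fun y => pn p n y * p (r - x - y)) :=
      summable_bdd (pn_nonneg hp0 n) (pn_summable hp0 hp1 n) (fun y => p (r - x - y)) 1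
        (fun y => by rw [abs_of_nonneg (hp0 _)]; exact p_le_one hp0 hp1 _)
  have h := hs.hasSum
  have h2 := (Equiv.subLeft (r - x)).hasSum_iff.mpr h
  simp only [pn]
  convert h2 using 2 with u
  simp only [Function.comp, Equiv.subLeft_apply]
  rw [mul_comm]
  congr 2 <;> ring

lemma hasSum_cg {ι : Type*} {f g : ι → ℝ} {s t : ℝ} (h : HasSum f s) (h1 : ∀ u, g u = f u)
    (h2 : t = s) : HasSum g t := by
  rw [h2, funext h1]; exact h

/-- Fatou. -/
lemma fatou {p : ℤ → ℝ} (hp0 : ∀ x, 0 ≤ p x) (F : ℕ → ℤ → ℝ) (f : ℤ → ℝ) (L : ℕ → ℝ) (l : ℝ)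
    (x : ℤ) (hF0 : ∀ N y, 0 ≤ F N y) (hF : ∀ N, HasSum (fun u => p u * F N (x + u)) (L N))
    (hf : ∀ y, Tendsto (fun N => F N y) atTop (𝓝 (f y))) (hL : Tendsto L atTop (𝓝 l)) :
    Summable (fun u => p u * f (x + u)) ∧ Pop p f x ≤ l := by
  have hf0 : ∀ y, 0 ≤ f y := fun y => ge_of_tendsto' (hf y) (fun N => hF0 N y)
  have key : ∀ s : Finset ℤ, ∑ u ∈ s, p u * f (x + u) ≤ l := by
    intro s
    have h1 : Tendsto (fun N => ∑ u ∈ s, p u * F N (x + u)) atTop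
        (𝓝 (∑ u ∈ s, p u * f (x + u))) :=
      tendsto_finsetSum _ (fun u _ => (hf _).const_mul _)
    exact le_of_tendsto_of_tendsto' h1 hL (fun N =>
      sum_le_hasSum s (fun i _ => mul_nonneg (hp0 _) (hF0 _ _)) (hF N))
  have hs := summable_of_sum_le (fun u => mul_nonneg (hp0 u) (hf0 (x + u))) key
  exact ⟨hs, hs.tsum_le_of_sum_le key⟩

/-- Tonelli. -/
lemma conv_tsum {p : ℤ → ℝ} (hp0 : ∀ x, 0 ≤ p x) (k F : ℤ → ℝ) (hk : ∀ w, 0 ≤ k w)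
    (hF : ∀ w, 0 ≤ F w) (hs : ∀ w, Summable (fun u => p u * F (w + u)))
    (hS : Summable (fun w => k w * Pop p F w)) :
    HasSum (fun z => (∑' w, k w * p (z - w)) * F z) (∑' w, k w * Pop p F w) := by
  have hin : ∀ w, HasSum (fun z => k w * p (z - w) * F z) (k w * Pop p F w) := by
    intro w
    have h := ((hs w).hasSum).mul_left (k w)
    have h2 := (Equiv.subRight w).hasSum_iff.mpr h
    refine hasSum_cg h2 (fun z => ?_) rfl
    simp only [Function.comp, Equiv.subRight_apply, add_sub_cancel]
    ring
  have hsum : Summable (fun q : ℤ × ℤ => k q.1 * p (q.2 - q.1) * F q.2) := by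
    rw [summable_prod_of_nonneg (fun q => mul_nonneg (mul_nonneg (hk _) (hp0 _)) (hF _))]
    refine ⟨fun w => (hin w).summable, ?_⟩
    exact hS.congr (fun w => (hin w).tsum_eq.symm)
  have hsw := hsum.prod_symm
  have h3 := hsw.prod
  have e1 : ∑' w, k w * Pop p F w = ∑' z, ∑' w, k w * p (z - w) * F z := by
    have hc := Summable.tsum_comm (f := fun w z => k w * p (z - w) * F z) hsum
    exact (tsum_congr (fun w => (hin w).tsum_eq.symm)).trans hc.symm
  rw [e1]
  have h4 : HasSum (fun z => ∑' w, k w * p (z - w) * F z)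
      (∑' z, ∑' w, k w * p (z - w) * F z) := h3.hasSum
  simpa only [tsum_mul_right] using h4

/-- Bounded nonnegative subharmonic functions vanishing at `0` vanish (recurrence). -/
lemma subharm_zero {p : ℤ → ℝ} (hp0 : ∀ x, 0 ≤ p x) (hp1 : HasSum p 1)
    (hdiv : ∀ y, ¬ Summable (fun n => pn p n y))
    (hap : ∀ x : ℤ, ∀ᶠ n in atTop, 0 < pn p n x)
    (f : ℤ → ℝ) (M : ℝ) (hf0 : ∀ x, 0 ≤ f x) (hfM : ∀ x, f x ≤ M) (h0 : f 0 = 0)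
    (hsub : ∀ x, f x ≤ Pop p f x) (y : ℤ) : f y = 0 := by
  have habs : ∀ x, |f x| ≤ M := fun x => by rw [abs_of_nonneg (hf0 x)]; exact hfM x
  have hs : ∀ w, Summable (fun u => p u * f (w + u)) := fun w =>
    summable_bdd hp0 hp1.summable (fun u => f (w + u)) M (fun u => habs _)
  have hP0 : ∀ w, 0 ≤ Pop p f w := fun w => tsum_nonneg (fun u => mul_nonneg (hp0 _) (hf0 _))
  have hPM : ∀ w, Pop p f w ≤ M := by
    intro w
    have : Pop p f w ≤ ∑' u, p u * M :=
      Summable.tsum_le_tsum (fun u => mul_le_mul_of_nonneg_left (hfM _) (hp0 u)) (hs w)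
        (hp1.summable.mul_right M)
    rwa [tsum_mul_right, hp1.tsum_eq, one_mul] at this
  have hPabs : ∀ x, |Pop p f x| ≤ M := fun x => by rw [abs_of_nonneg (hP0 x)]; exact hPM x
  have hbs : ∀ n, Summable (fun w => pn p n w * f w) := fun n =>
    summable_bdd (pn_nonneg hp0 n) (pn_summable hp0 hp1 n) f M habs
  have hbP : ∀ n, Summable (fun w => pn p n w * Pop p f w) := fun n =>
    summable_bdd (pn_nonneg hp0 n) (pn_summable hp0 hp1 n) _ M hPabs
  set b : ℕ → ℝ := fun n => ∑' w, pn p n w * f w with hb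
  have hb1 : ∀ n, b (n + 1) = ∑' w, pn p n w * Pop p f w := fun n =>
    (conv_tsum hp0 (pn p n) f (pn_nonneg hp0 n) hf0 hs (hbP n)).tsum_eq
  have hb0 : b 0 = 0 := by
    simp only [hb, pn]
    rw [tsum_eq_single 0 (fun w hw => by simp [hw])]
    simp [h0]
  have hM : 0 ≤ M := le_trans (hf0 0) (hfM 0)
  have hbM : ∀ n, b n ≤ M := by
    intro n
    refine Real.tsum_le_of_sum_le (fun w => mul_nonneg (pn_nonneg hp0 n w) (hf0 w)) (fun s => ?_)
    calc ∑ w ∈ s, pn p n w * f w ≤ ∑ w ∈ s, pn p n w * M :=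
          Finset.sum_le_sum (fun w _ => mul_le_mul_of_nonneg_left (hfM w) (pn_nonneg hp0 n w))
      _ = (∑ w ∈ s, pn p n w) * M := by rw [Finset.sum_mul]
      _ ≤ 1 * M := mul_le_mul_of_nonneg_right (pn_sum_le hp0 hp1 n s) hM
      _ = M := one_mul _
  have hdiff : ∀ n, b (n + 1) - b n = ∑' w, pn p n w * (Pop p f w - f w) := by
    intro n
    rw [hb1, hb, ← Summable.tsum_sub (hbP n) (hbs n)]
    exact tsum_congr (fun w => by ring)
  have hds : ∀ n, Summable (fun w => pn p n w * (Pop p f w - f w)) := by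
    intro n
    refine ((hbP n).sub (hbs n)).congr (fun w => by ring)
  have he : ∀ z, Pop p f z - f z = 0 := by
    intro z
    by_contra hne
    have hpos : 0 < Pop p f z - f z := lt_of_le_of_ne (sub_nonneg.mpr (hsub z)) (Ne.symm hne)
    apply hdiv z
    refine summable_of_sum_range_le (c := M / (Pop p f z - f z)) (fun n => pn_nonneg hp0 n z)
      (fun N => ?_)
    rw [le_div_iff₀ hpos, Finset.sum_mul]
    have : ∑ n ∈ Finset.range N, pn p n z * (Pop p f z - f z)
        ≤ ∑ n ∈ Finset.range N, (b (n + 1) - b n) := by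
      refine Finset.sum_le_sum (fun n _ => ?_)
      rw [hdiff]
      exact (hds n).le_tsum z
        (fun w _ => mul_nonneg (pn_nonneg hp0 n w) (sub_nonneg.mpr (hsub w)))
    rw [Finset.sum_range_sub, hb0, sub_zero] at this
    exact this.trans (hbM N)
  have hbz : ∀ n, b n = 0 := by
    intro n
    induction n with
    | zero => exact hb0
    | succ n ih =>
      have := hdiff n
      simp only [he, mul_zero, tsum_zero, ih, sub_zero] at this
      exact this
  obtain ⟨n, hn⟩ := (hap y).exists
  have h1 : pn p n y * f y ≤ b n :=
    (hbs n).le_tsum y (fun w _ => mul_nonneg (pn_nonneg hp0 n w) (hf0 w))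
  rw [hbz] at h1
  have h2 := mul_nonneg hn.le (hf0 y)
  have h3 : pn p n y * f y = 0 := le_antisymm h1 h2
  rcases mul_eq_zero.mp h3 with h | h
  · exact absurd h hn.ne'
  · exact h

lemma dN_hasSum {p : ℤ → ℝ} (hp0 : ∀ x, 0 ≤ p x) (hp1 : HasSum p 1) (r : ℤ) (N : ℕ) (x : ℤ) :
    HasSum (fun u => p u * ∑ n ∈ Finset.range N, pn p n (r - (x + u)))
      ((∑ n ∈ Finset.range (N + 1), pn p n (r - x)) - (if r = x then 1 else 0)) := by
  have h := hasSum_sum (s := Finset.range N) (fun n _ => pn_hasSum hp0 hp1 n r x)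
  rw [Finset.sum_range_succ']
  convert h using 1
  · funext u; rw [Finset.mul_sum]
  · simp only [pn, sub_eq_zero]; ring

lemma uN_le {p : ℤ → ℝ} (hp0 : ∀ x, 0 ≤ p x) (hp1 : HasSum p 1) (N : ℕ) (x : ℤ) :
    ∑ n ∈ Finset.range N, pn p n (-x) ≤ ∑ n ∈ Finset.range N, pn p n 0 := by
  induction N generalizing x with
  | zero => simp
  | succ N ih =>
    rcases eq_or_ne x 0 with rfl | hx
    · simp
    · have h := dN_hasSum hp0 hp1 0 N x
      rw [if_neg (Ne.symm hx), sub_zero, zero_sub] at h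
      have h2 := hp1.mul_right (∑ n ∈ Finset.range N, pn p n 0)
      rw [one_mul] at h2
      have h3 := hasSum_le (fun u => mul_le_mul_of_nonneg_left
        (by simpa using ih (x + u)) (hp0 u)) h h2
      refine h3.trans ?_
      rw [Finset.sum_range_succ]
      linarith [pn_nonneg hp0 N 0]

section kernel
variable {p : ℤ → ℝ} {a : ℤ → ℝ}

lemma a_zero (ha : ∀ x : ℤ, HasSum (fun n => pn p n 0 - pn p n (-x)) (a x)) : a 0 = 0 := by
  have h := ha 0
  simp only [neg_zero, sub_self] at h
  exact h.unique hasSum_zero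

lemma AN_nonneg (hp0 : ∀ x, 0 ≤ p x) (hp1 : HasSum p 1) (N : ℕ) (x : ℤ) :
    0 ≤ ∑ n ∈ Finset.range N, (pn p n 0 - pn p n (-x)) := by
  rw [Finset.sum_sub_distrib, sub_nonneg]
  exact uN_le hp0 hp1 N x

lemma a_nonneg (hp0 : ∀ x, 0 ≤ p x) (hp1 : HasSum p 1)
    (ha : ∀ x : ℤ, HasSum (fun n => pn p n 0 - pn p n (-x)) (a x)) (x : ℤ) : 0 ≤ a x :=
  ge_of_tendsto' (ha x).tendsto_sum_nat (fun N => AN_nonneg hp0 hp1 N x)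

lemma a_super (hp0 : ∀ x, 0 ≤ p x) (hp1 : HasSum p 1)
    (ha : ∀ x : ℤ, HasSum (fun n => pn p n 0 - pn p n (-x)) (a x)) (x : ℤ) :
    Summable (fun u => p u * a (x + u)) ∧ Pop p a x ≤ a x + (if x = 0 then 1 else 0) := by
  refine ⟨?_, ?_⟩
  all_goals
    have hA : ∀ N, HasSum (fun u => p u * ∑ n ∈ Finset.range N, (pn p n 0 - pn p n (-(x + u))))
        ((∑ n ∈ Finset.range N, (pn p n 0 - pn p n (-x))) + (if x = 0 then 1 else 0)
          - pn p N (-x)) := by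
      intro N
      have h1 := dN_hasSum hp0 hp1 0 N x
      have h2 := hp1.mul_right (∑ n ∈ Finset.range N, pn p n 0)
      have h3 := h2.sub h1
      refine hasSum_cg h3 (fun u => ?_) ?_
      · rw [Finset.sum_sub_distrib]; simp only [zero_sub]; ring
      · rw [Finset.sum_sub_distrib, Finset.sum_range_succ]
        simp only [zero_sub, eq_comm (a := (0:ℤ))]; ring
    -- subtract off the nonnegative remainder by working along finite sums
    have key : ∀ s : Finset ℤ, ∑ u ∈ s, p u * a (x + u) ≤ a x + (if x = 0 then 1 else 0) := by
      intro s
      have h1 : Tendsto (fun N => ∑ u ∈ s, p u *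
          ∑ n ∈ Finset.range N, (pn p n 0 - pn p n (-(x + u)))) atTop
          (𝓝 (∑ u ∈ s, p u * a (x + u))) :=
        tendsto_finsetSum _ (fun u _ => ((ha _).tendsto_sum_nat).const_mul _)
      have h2 : Tendsto (fun N => (∑ n ∈ Finset.range N, (pn p n 0 - pn p n (-x)))
          + (if x = 0 then (1:ℝ) else 0)) atTop (𝓝 (a x + (if x = 0 then 1 else 0))) :=
        ((ha x).tendsto_sum_nat).add_const _
      refine le_of_tendsto_of_tendsto' h1 h2 (fun N => ?_)
      refine (sum_le_hasSum s (fun i _ => mul_nonneg (hp0 _) (AN_nonneg hp0 hp1 _ _)) (hA N)).trans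
        ?_
      linarith [pn_nonneg hp0 N (-x)]
    have hs := summable_of_sum_le
      (fun u => mul_nonneg (hp0 u) (a_nonneg hp0 hp1 ha (x + u))) key
  · exact hs
  · exact hs.tsum_le_of_sum_le key

/-- `a x + a (-r) - a (x - r)` is bounded below and superharmonic off `0`. -/
lemma g_super (hp0 : ∀ x, 0 ≤ p x) (hp1 : HasSum p 1)
    (ha : ∀ x : ℤ, HasSum (fun n => pn p n 0 - pn p n (-x)) (a x)) (r : ℤ) :
    (∃ M, ∀ x, -M ≤ a x + a (-r) - a (x - r)) ∧
    ∀ x, Summable (fun u => p u * (a (x + u) + a (-r) - a (x + u - r))) ∧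
      Pop p (fun y => a y + a (-r) - a (y - r)) x ≤
        a x + a (-r) - a (x - r) + (if x = 0 then 1 else 0) := by
  obtain ⟨M, hM⟩ := ((ha (-r)).tendsto_sum_nat).bddAbove_range
  have hM : ∀ N, ∑ n ∈ Finset.range N, (pn p n 0 - pn p n (- -r)) ≤ M := fun N =>
    hM ⟨N, rfl⟩
  have hM0 : 0 ≤ M := by simpa using hM 0
  set d : ℕ → ℤ → ℝ := fun N x =>
    (∑ n ∈ Finset.range N, pn p n (r - x)) - ∑ n ∈ Finset.range N, pn p n (0 - x) with hd
  have hdP : ∀ N x, HasSum (fun u => p u * d N (x + u))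
      (d (N + 1) x - (if r = x then 1 else 0) + (if x = 0 then 1 else 0)) := by
    intro N x
    have h := (dN_hasSum hp0 hp1 r N x).sub (dN_hasSum hp0 hp1 0 N x)
    refine hasSum_cg h (fun u => ?_) ?_
    · simp only [hd]; ring
    · simp only [hd, eq_comm (a := (0:ℤ))]; ring
  have hd0 : ∀ N, -M ≤ d N 0 := by
    intro N
    have := hM N
    rw [Finset.sum_sub_distrib, neg_neg] at this
    simp only [hd, sub_zero]
    linarith
  have hdM : ∀ N x, -M ≤ d N x := by
    intro N
    induction N with
    | zero => intro x; simp [hd, hM0]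
    | succ N ih =>
      intro x
      rcases eq_or_ne x 0 with rfl | hx
      · exact hd0 _
      · have h := hdP N x
        rw [if_neg hx] at h
        have h2 := hasSum_le (fun u => mul_le_mul_of_nonneg_left (ih (x + u)) (hp0 u))
          (hp1.mul_right (-M)) h
        have : (0:ℝ) ≤ if r = x then 1 else 0 := by split_ifs <;> norm_num
        linarith
  have hlim : ∀ x, Tendsto (fun N => d N x) atTop (𝓝 (a x - a (x - r))) := by
    intro x
    have h := ((ha x).tendsto_sum_nat).sub ((ha (x - r)).tendsto_sum_nat)
    refine h.congr (fun N => ?_)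
    simp only [hd, Finset.sum_sub_distrib, neg_sub, zero_sub]
    ring
  refine ⟨⟨M - a (-r), fun x => ?_⟩, fun x => ?_⟩
  · have := ge_of_tendsto' (hlim x) (fun N => hdM N x)
    linarith
  · have hF : ∀ N, HasSum (fun u => p u * (d N (x + u) + M))
        (d (N + 1) x - (if r = x then 1 else 0) + (if x = 0 then 1 else 0) + M) := by
      intro N
      have h := (hdP N x).add (hp1.mul_right M)
      convert h using 1
      · funext u; ring
      · ring
    have hL : Tendsto (fun N => d (N + 1) x - (if r = x then (1:ℝ) else 0) +
        (if x = 0 then 1 else 0) + M) atTop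
        (𝓝 (a x - a (x - r) - (if r = x then (1:ℝ) else 0) + (if x = 0 then 1 else 0) + M)) :=
      (((((hlim x).comp (tendsto_add_atTop_nat 1))).sub_const _).add_const _).add_const _
    have h := fatou hp0 (fun N y => d N y + M) (fun y => a y - a (y - r) + M) _ _ x
      (fun N y => by linarith [hdM N y]) hF (fun y => (hlim y).add_const M) hL
    obtain ⟨hs, hle⟩ := h
    have hs' := hs.hasSum.add (hp1.mul_right (a (-r) - M))
    have e : (fun u => p u * (a (x + u) - a (x + u - r) + M) + p u * (a (-r) - M))
        = fun u => p u * (a (x + u) + a (-r) - a (x + u - r)) := by funext u; ring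
    rw [e] at hs'
    refine ⟨hs'.summable, ?_⟩
    have h5 : Pop p (fun y => a y + a (-r) - a (y - r)) x =
      Pop p (fun y => a y - a (y - r) + M) x + 1 * (a (-r) - M) := hs'.tsum_eq
    rw [h5]
    have : (0:ℝ) ≤ if r = x then 1 else 0 := by split_ifs <;> norm_num
    linarith

lemma pn_div (hrec : ¬ Summable (fun n => pn p n 0))
    (ha : ∀ x : ℤ, HasSum (fun n => pn p n 0 - pn p n (-x)) (a x)) (y : ℤ) :
    ¬ Summable (fun n => pn p n y) := by
  intro h
  apply hrec
  have := (ha (-y)).summable.add h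
  refine this.congr (fun n => ?_)
  simp

lemma g_nonneg (hp0 : ∀ x, 0 ≤ p x) (hp1 : HasSum p 1)
    (hrec : ¬ Summable (fun n => pn p n 0))
    (hap : ∀ x : ℤ, ∀ᶠ n in atTop, 0 < pn p n x)
    (ha : ∀ x : ℤ, HasSum (fun n => pn p n 0 - pn p n (-x)) (a x)) (r x : ℤ) :
    0 ≤ a x + a (-r) - a (x - r) := by
  obtain ⟨⟨M, hM⟩, hg⟩ := g_super hp0 hp1 ha r
  set g : ℤ → ℝ := fun x => a x + a (-r) - a (x - r) with hgd
  have hg0 : g 0 = 0 := by simp [hgd, a_zero ha]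
  have hM0 : 0 ≤ M := by have := hM 0; change -M ≤ g 0 at this; rw [hg0] at this; linarith
  have hfM : ∀ x, max 0 (-g x) ≤ M := fun x => max_le hM0 (by have := hM x; simp only [hgd]; linarith)
  have hsm : ∀ x, Summable (fun u => p u * max 0 (-g (x + u))) := fun x =>
    summable_bdd hp0 hp1.summable (fun u => max 0 (-g (x + u))) M
      (fun u => by rw [abs_of_nonneg (le_max_left _ _)]; exact hfM _)
  have h := subharm_zero hp0 hp1 (pn_div hrec ha) hap (fun x => max 0 (-g x)) M
    (fun x => le_max_left _ _) hfM (by simp [hg0]) (fun x => ?_) x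
  · have h2 : -g x ≤ 0 := h ▸ le_max_right 0 (-g x)
    simp only [hgd] at h2; linarith
  · have hP0 : 0 ≤ Pop p (fun x => max 0 (-g x)) x :=
      tsum_nonneg (fun u => mul_nonneg (hp0 _) (le_max_left _ _))
    refine max_le hP0 ?_
    rcases eq_or_ne x 0 with rfl | hx
    · rw [hg0, neg_zero]; exact hP0
    · obtain ⟨hs, hle⟩ := hg x
      rw [if_neg hx, add_zero] at hle
      have h3 : -Pop p g x ≤ Pop p (fun x => max 0 (-g x)) x := by
        unfold Pop
        rw [← tsum_neg]
        refine Summable.tsum_le_tsum (fun u => ?_) hs.neg (hsm x)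
        rw [← mul_neg]
        exact mul_le_mul_of_nonneg_left (le_max_right _ _) (hp0 u)
      change Pop p g x ≤ g x at hle
      linarith

lemma a_neg_pos (hp0 : ∀ x, 0 ≤ p x) (hp1 : HasSum p 1)
    (hap : ∀ x : ℤ, ∀ᶠ n in atTop, 0 < pn p n x)
    (ha : ∀ x : ℤ, HasSum (fun n => pn p n 0 - pn p n (-x)) (a x))
    (hev : ∀ᶠ m : ℕ in atTop, 0 < a (-(m : ℤ))) (x : ℤ) (hx : x < 0) : 0 < a x := by
  by_contra hcon
  have hax : a x = 0 := le_antisymm (not_lt.mp hcon) (a_nonneg hp0 hp1 ha x)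
  have hu : ∃ u : ℤ, u < 0 ∧ 0 < p u := by
    by_contra hno
    push Not at hno
    have hz : ∀ u : ℤ, u < 0 → p u = 0 := fun u hu => le_antisymm (hno u hu) (hp0 u)
    have hpn : ∀ n : ℕ, ∀ y : ℤ, y < 0 → pn p n y = 0 := by
      intro n
      induction n with
      | zero => intro y hy; simp [pn, hy.ne]
      | succ n ih =>
        intro y hy
        simp only [pn]
        rw [← tsum_zero (α := ℝ) (β := ℤ)]
        refine tsum_congr (fun z => ?_)
        rcases lt_or_ge z 0 with h | h
        · rw [ih z h, zero_mul]
        · rw [hz (y - z) (by omega), mul_zero]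
    obtain ⟨n, hn⟩ := (hap (-1)).exists
    rw [hpn n (-1) (by norm_num)] at hn
    exact lt_irrefl _ hn
  obtain ⟨u, hu0, hpu⟩ := hu
  have hk : ∀ k : ℕ, a (x + k * u) = 0 := by
    intro k
    induction k with
    | zero => simpa using hax
    | succ k ih =>
      have hne : x + k * u ≠ 0 := by nlinarith [Int.natCast_nonneg k]
      obtain ⟨hs, hle⟩ := a_super hp0 hp1 ha (x + k * u)
      rw [if_neg hne, ih, add_zero] at hle
      have h1 : p u * a (x + k * u + u) ≤ 0 :=
        (hs.le_tsum u (fun w _ => mul_nonneg (hp0 w) (a_nonneg hp0 hp1 ha _))).trans hle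
      have h2 := a_nonneg hp0 hp1 ha (x + k * u + u)
      have h3 : a (x + k * u + u) = 0 := by
        by_contra hne2
        have := mul_pos hpu (lt_of_le_of_ne h2 (Ne.symm hne2))
        linarith
      rw [← h3]; congr 1; push_cast; ring
  obtain ⟨J, hJ⟩ := eventually_atTop.mp hev
  have h4 : x + (J : ℤ) * u ≤ -(J : ℤ) := by nlinarith [Int.natCast_nonneg J]
  have h5 := hJ (-(x + (J : ℤ) * u)).toNat (by omega)
  rw [Int.toNat_of_nonneg (by omega), neg_neg, hk J] at h5
  exact lt_irrefl _ h5

end kernel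

lemma pk_nonneg {p : ℤ → ℝ} (hp0 : ∀ x, 0 ≤ p x) (B : Set ℤ) (n : ℕ) (x y : ℤ) :
    0 ≤ pk p B n x y := by
  induction n generalizing y with
  | zero => simp only [pk]; split_ifs <;> norm_num
  | succ n ih =>
    simp only [pk]
    exact Set.indicator_nonneg (fun w _ => tsum_nonneg (fun z => mul_nonneg (ih z) (hp0 _))) y

lemma hit_bound {p : ℤ → ℝ} (hp0 : ∀ x, 0 ≤ p x) (hp1 : HasSum p 1) (x R : ℤ)
    (F : ℤ → ℝ) (hF0 : ∀ y, 0 ≤ F y) (c L : ℝ) (hc : 0 < c)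
    (hs : ∀ w, Summable (fun u => p u * F (w + u)))
    (hsup : ∀ w, w ≠ 0 → Pop p F w ≤ F w) (hL : Pop p F x ≤ L)
    (hlow : ∀ y, R ≤ y → c ≤ F y) : hitHalfBefore0 p x R ≤ L / c := by
  unfold hitHalfBefore0
  set B : Set ℤ := {0} ∪ {v : ℤ | R ≤ v} with hB
  have hk0 := pk_nonneg hp0 B
  have hPF0 : ∀ w, 0 ≤ Pop p F w := fun w => tsum_nonneg (fun u => mul_nonneg (hp0 _) (hF0 _))
  set I : ℤ → ℝ := fun y => if R ≤ y then 1 else 0 with hI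
  have hI0 : ∀ y, 0 ≤ I y := fun y => by simp only [hI]; split_ifs <;> norm_num
  have hIs : ∀ w, Summable (fun u => p u * I (w + u)) := fun w =>
    summable_bdd hp0 hp1.summable (fun u => I (w + u)) 1 (fun u => by
      rw [abs_of_nonneg (hI0 _)]; simp only [hI]; split_ifs <;> norm_num)
  have hIF : ∀ y, c * I y ≤ F y := by
    intro y
    simp only [hI]
    split_ifs with h
    · rw [mul_one]; exact hlow y h
    · rw [mul_zero]; exact hF0 y
  have hPI0 : ∀ w, 0 ≤ Pop p I w := fun w => tsum_nonneg (fun u => mul_nonneg (hp0 _) (hI0 _))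
  have hPI : ∀ w, c * Pop p I w ≤ Pop p F w := by
    intro w
    unfold Pop
    rw [← tsum_mul_left]
    refine Summable.tsum_le_tsum (fun u => ?_) ((hIs w).mul_left c) (hs w)
    have := mul_le_mul_of_nonneg_left (hIF (w + u)) (hp0 u)
    linarith
  have hT : ∀ w, (∑' u : ℤ, if R - w ≤ u then p u else 0) = Pop p I w := by
    intro w
    refine tsum_congr (fun u => ?_)
    simp only [hI]
    by_cases h : R - w ≤ u
    · rw [if_pos h, if_pos (by omega), mul_one]
    · rw [if_neg h, if_neg (by omega), mul_zero]
  simp only [hT]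
  have hIsum : ∀ n, Summable (fun w => pk p B n x w * Pop p F w) →
      Summable (fun w => pk p B n x w * Pop p I w) := by
    intro n h
    refine Summable.of_nonneg_of_le (fun w => mul_nonneg (hk0 n x w) (hPI0 w)) (fun w => ?_)
      (h.mul_left c⁻¹)
    have := mul_le_mul_of_nonneg_left (hPI w) (hk0 n x w)
    rw [inv_mul_eq_div, le_div_iff₀ hc]
    linarith
  have step : ∀ n, Summable (fun w => pk p B n x w * Pop p F w) →
      Summable (fun w => pk p B (n + 1) x w * Pop p F w) ∧
      c * ∑' w, pk p B n x w * Pop p I w + ∑' w, pk p B (n + 1) x w * Pop p F w ≤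
        ∑' w, pk p B n x w * Pop p F w := by
    intro n h
    have h1 := conv_tsum hp0 (pk p B n x) F (hk0 n x) hF0 hs h
    have h2 := conv_tsum hp0 (pk p B n x) I (hk0 n x) hI0 hIs (hIsum n h)
    have hq : ∀ z, 0 ≤ ∑' w, pk p B n x w * p (z - w) := fun z =>
      tsum_nonneg (fun w => mul_nonneg (hk0 n x w) (hp0 _))
    have hpt : ∀ z, c * ((∑' w, pk p B n x w * p (z - w)) * I z) +
        pk p B (n + 1) x z * Pop p F z ≤ (∑' w, pk p B n x w * p (z - w)) * F z := by
      intro z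
      by_cases hz : z ∈ B
      · have : pk p B (n + 1) x z = 0 := by simp [pk, hz]
        rw [this, zero_mul, add_zero]
        have := mul_le_mul_of_nonneg_left (hIF z) (hq z)
        linarith
      · have e : pk p B (n + 1) x z = ∑' w, pk p B n x w * p (z - w) := by simp [pk, hz]
        have hz' : z ≠ 0 ∧ ¬ R ≤ z := by
          simpa [hB] using hz
        have hIz : I z = 0 := by simp only [hI]; rw [if_neg hz'.2]
        rw [e, hIz, mul_zero, mul_zero, zero_add]
        exact mul_le_mul_of_nonneg_left (hsup z hz'.1) (hq z)
    have hs2 : Summable (fun w => pk p B (n + 1) x w * Pop p F w) := by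
      refine Summable.of_nonneg_of_le (fun w => mul_nonneg (hk0 _ x w) (hPF0 w)) (fun z => ?_)
        h1.summable
      have := hpt z
      have h3 := mul_nonneg hc.le (mul_nonneg (hq z) (hI0 z))
      linarith
    exact ⟨hs2, hasSum_le hpt ((h2.mul_left c).add hs2.hasSum) h1⟩
  have h00 : HasSum (fun w => pk p B 0 x w * Pop p F w) (Pop p F x) := by
    have := hasSum_single (f := fun w => pk p B 0 x w * Pop p F w) x
      (fun w hw => by simp [pk, Ne.symm hw])
    simpa [pk] using this
  have hall : ∀ n, Summable (fun w => pk p B n x w * Pop p F w) := by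
    intro n
    induction n with
    | zero => exact h00.summable
    | succ n ih => exact (step n ih).1
  have hpart : ∀ N, c * ∑ n ∈ Finset.range N, ∑' w, pk p B n x w * Pop p I w +
      ∑' w, pk p B N x w * Pop p F w ≤ Pop p F x := by
    intro N
    induction N with
    | zero => simp only [Finset.range_zero, Finset.sum_empty, mul_zero, zero_add]; rw [h00.tsum_eq]
    | succ N ih =>
      rw [Finset.sum_range_succ]
      have := (step N (hall N)).2
      linarith
  refine Real.tsum_le_of_sum_range_le (fun n => tsum_nonneg (fun w => mul_nonneg (hk0 n x w) (hPI0 w)))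
    (fun N => ?_)
  rw [le_div_iff₀ hc]
  have h1 := hpart N
  have h2 : 0 ≤ ∑' w, pk p B N x w * Pop p F w :=
    tsum_nonneg (fun w => mul_nonneg (hk0 N x w) (hPF0 w))
  linarith

lemma hit_le_one {p : ℤ → ℝ} (hp0 : ∀ x, 0 ≤ p x) (hp1 : HasSum p 1) (x R : ℤ) :
    hitHalfBefore0 p x R ≤ 1 := by
  have h1 : ∀ w, Pop p (fun _ => 1) w = 1 := fun w => by
    simp only [Pop, mul_one]; exact hp1.tsum_eq
  have := hit_bound hp0 hp1 x R (fun _ => 1) (fun _ => zero_le_one) 1 1 one_pos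
    (fun w => by simpa using hp1.summable) (fun w _ => (h1 w).le) (h1 x).le (fun _ _ => le_rfl)
  simpa using this

/-- Superharmonicity of a weighted sum. -/
lemma tsum_super {p : ℤ → ℝ} (hp0 : ∀ x, 0 ≤ p x) (H : ℕ → ℤ → ℝ) (ρ : ℝ) (hρ0 : 0 < ρ)
    (hρ1 : ρ < 1) (D : ℤ → ℝ) (hH0 : ∀ k y, 0 ≤ H k y) (hHD : ∀ k y, H k y ≤ D y)
    (hP : ∀ k x, Summable (fun u => p u * H k (x + u)) ∧
      Pop p (H k) x ≤ H k x + (if x = 0 then 1 else 0)) :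
    (∀ y, Summable (fun k => ρ ^ k * H k y)) ∧
    ∀ x, Summable (fun u => p u * ∑' k, ρ ^ k * H k (x + u)) ∧
      Pop p (fun y => ∑' k, ρ ^ k * H k y) x ≤
        (∑' k, ρ ^ k * H k x) + (1 - ρ)⁻¹ * (if x = 0 then 1 else 0) := by
  have hg := summable_geometric_of_lt_one hρ0.le hρ1
  have hs : ∀ y, Summable (fun k => ρ ^ k * H k y) := fun y =>
    Summable.of_nonneg_of_le (fun k => mul_nonneg (pow_nonneg hρ0.le k) (hH0 k y))
      (fun k => mul_le_mul_of_nonneg_left (hHD k y) (pow_nonneg hρ0.le k)) (hg.mul_right (D y))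
  refine ⟨hs, fun x => ?_⟩
  have key : ∀ s : Finset ℤ, ∑ u ∈ s, p u * ∑' k, ρ ^ k * H k (x + u) ≤
      (∑' k, ρ ^ k * H k x) + (1 - ρ)⁻¹ * (if x = 0 then 1 else 0) := by
    intro s
    have h1 : HasSum (fun k => ∑ u ∈ s, p u * (ρ ^ k * H k (x + u)))
        (∑ u ∈ s, p u * ∑' k, ρ ^ k * H k (x + u)) :=
      hasSum_sum (fun u _ => (hs (x + u)).hasSum.mul_left (p u))
    have h2 : HasSum (fun k => ρ ^ k * H k x + ρ ^ k * (if x = 0 then (1:ℝ) else 0))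
        ((∑' k, ρ ^ k * H k x) + (1 - ρ)⁻¹ * (if x = 0 then 1 else 0)) :=
      (hs x).hasSum.add ((hasSum_geometric_of_lt_one hρ0.le hρ1).mul_right _)
    refine hasSum_le (fun k => ?_) h1 h2
    have h3 : ∑ u ∈ s, p u * H k (x + u) ≤ H k x + (if x = 0 then 1 else 0) :=
      ((hP k x).1.sum_le_tsum s (fun u _ => mul_nonneg (hp0 u) (hH0 _ _))).trans (hP k x).2
    have h4 := mul_le_mul_of_nonneg_left h3 (pow_nonneg hρ0.le k)
    rw [Finset.mul_sum, mul_add] at h4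
    refine le_trans (le_of_eq (Finset.sum_congr rfl (fun u _ => by ring))) h4
  have hs2 := summable_of_sum_le (fun u => mul_nonneg (hp0 u)
    (tsum_nonneg (fun k => mul_nonneg (pow_nonneg hρ0.le k) (hH0 k (x + u))))) key
  exact ⟨hs2, hs2.tsum_le_of_sum_le key⟩

/-- The averaged Green function. -/
noncomputable def hav (a : ℤ → ℝ) (m : ℕ) (y : ℤ) : ℝ :=
  (∑ j ∈ Finset.range m, (a y + a (-((m : ℤ) + 1 + j)) - a (y - ((m : ℤ) + 1 + j)))) / m

section avg
variable {p : ℤ → ℝ} {a : ℤ → ℝ}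

lemma hav_nonneg (hg : ∀ r x : ℤ, 0 ≤ a x + a (-r) - a (x - r)) (m : ℕ) (y : ℤ) :
    0 ≤ hav a m y :=
  div_nonneg (Finset.sum_nonneg (fun j _ => hg _ _)) (Nat.cast_nonneg m)

lemma hav_le (hg : ∀ r x : ℤ, 0 ≤ a x + a (-r) - a (x - r)) (m : ℕ) (hm : 0 < m) (y : ℤ) :
    hav a m y ≤ a y + a (-y) := by
  have hm' : (0:ℝ) < m := Nat.cast_pos.mpr hm
  unfold hav
  rw [div_le_iff₀ hm']
  calc _ ≤ ∑ j ∈ Finset.range m, (a y + a (-y)) := by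
        refine Finset.sum_le_sum (fun j _ => ?_)
        have := hg y (y - ((m : ℤ) + 1 + j))
        rw [show y - ((m : ℤ) + 1 + j) - y = -((m : ℤ) + 1 + j) by ring] at this
        linarith
    _ = _ := by simp; ring

lemma hav_super (m : ℕ) (hm : 0 < m)
    (hG : ∀ r x : ℤ, Summable (fun u => p u * (a (x + u) + a (-r) - a (x + u - r))) ∧
      Pop p (fun y => a y + a (-r) - a (y - r)) x ≤
        a x + a (-r) - a (x - r) + (if x = 0 then 1 else 0)) (x : ℤ) :
    Summable (fun u => p u * hav a m (x + u)) ∧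
      Pop p (hav a m) x ≤ hav a m x + (if x = 0 then 1 else 0) := by
  have hm' : (0:ℝ) < m := Nat.cast_pos.mpr hm
  have h1 := (hasSum_sum (s := Finset.range m)
    (fun j _ => (hG ((m : ℤ) + 1 + j) x).1.hasSum)).div_const (m : ℝ)
  have h2 : HasSum (fun u => p u * hav a m (x + u)) _ := hasSum_cg h1 (fun u => by
    unfold hav; rw [Finset.sum_div, Finset.mul_sum, Finset.sum_div]
    exact Finset.sum_congr rfl (fun j _ => by ring)) rfl
  refine ⟨h2.summable, ?_⟩
  have h3 : Pop p (hav a m) x = _ := h2.tsum_eq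
  rw [h3, div_le_iff₀ hm', add_mul]
  unfold hav
  rw [div_mul_cancel₀ _ hm'.ne']
  calc _ ≤ ∑ j ∈ Finset.range m, (a x + a (-((m : ℤ) + 1 + j)) - a (x - ((m : ℤ) + 1 + j)) +
        (if x = 0 then (1:ℝ) else 0)) := Finset.sum_le_sum (fun j _ => (hG _ x).2)
    _ = _ := by
      rw [Finset.sum_add_distrib]
      simp only [Finset.sum_const, Finset.card_range, nsmul_eq_mul]; ring

lemma hav_tele (h0 : ∀ x, 0 ≤ a x) (m : ℕ) (hm : 0 < m) (K : ℝ)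
    (hK : ∀ j : ℕ, j ≤ 2 * m → a (-(j : ℤ)) ≤ K) (x : ℕ) (hx : x ≤ 2 * m) :
    hav a m x ≤ a x + x * K / m := by
  have hm' : (0:ℝ) < m := Nat.cast_pos.mpr hm
  have hD : ∀ x : ℕ, x ≤ 2 * m → ∑ j ∈ Finset.range m, (a (-((m : ℤ) + 1 + j)) -
      a (x - ((m : ℤ) + 1 + j))) ≤ x * K := by
    intro x
    induction x with
    | zero => intro _; simp
    | succ x ih =>
      intro hx
      have h1 := ih (by omega)
      have h2 : ∑ j ∈ Finset.range m, (a (((x + 1 : ℕ) : ℤ) - ((m : ℤ) + 1 + ((j + 1 : ℕ) : ℤ))) -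
          a (((x + 1 : ℕ) : ℤ) - ((m : ℤ) + 1 + (j : ℤ)))) =
          a (((x + 1 : ℕ) : ℤ) - ((m : ℤ) + 1 + (m : ℤ))) -
          a (((x + 1 : ℕ) : ℤ) - ((m : ℤ) + 1 + ((0 : ℕ) : ℤ))) :=
        Finset.sum_range_sub (fun j => a (((x + 1 : ℕ) : ℤ) - ((m : ℤ) + 1 + (j : ℤ)))) m
      have h3 := hK (2 * m - x) (by omega)
      have e3 : -((2 * m - x : ℕ) : ℤ) = ((x + 1 : ℕ) : ℤ) - ((m : ℤ) + 1 + (m : ℤ)) := by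
        push_cast [Nat.cast_sub (show x ≤ 2 * m by omega)]; ring
      rw [e3] at h3
      have h4 := h0 (((x + 1 : ℕ) : ℤ) - ((m : ℤ) + 1 + ((0 : ℕ) : ℤ)))
      have h5 : ∑ j ∈ Finset.range m, (a (-((m : ℤ) + 1 + j)) -
          a (((x + 1 : ℕ) : ℤ) - ((m : ℤ) + 1 + j))) =
          ∑ j ∈ Finset.range m, (a (-((m : ℤ) + 1 + j)) - a (x - ((m : ℤ) + 1 + j))) +
          ∑ j ∈ Finset.range m, (a (((x + 1 : ℕ) : ℤ) - ((m : ℤ) + 1 + ((j + 1 : ℕ) : ℤ))) -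
          a (((x + 1 : ℕ) : ℤ) - ((m : ℤ) + 1 + (j : ℤ)))) := by
        rw [← Finset.sum_add_distrib]
        refine Finset.sum_congr rfl (fun j _ => ?_)
        have : (x : ℤ) - ((m : ℤ) + 1 + j) =
          ((x + 1 : ℕ) : ℤ) - ((m : ℤ) + 1 + ((j + 1 : ℕ) : ℤ)) := by push_cast; ring
        rw [this]; ring
      rw [h5, h2]
      push_cast at h1 h3 h4 ⊢
      linarith
  unfold hav
  rw [div_le_iff₀ hm', add_mul, div_mul_cancel₀ _ hm'.ne']
  have := hD x hx
  calc _ = ∑ j ∈ Finset.range m, (a x + (a (-((m : ℤ) + 1 + j)) -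
      a (x - ((m : ℤ) + 1 + j)))) := Finset.sum_congr rfl (fun j _ => by ring)
    _ = a x * m + ∑ j ∈ Finset.range m, (a (-((m : ℤ) + 1 + j)) -
      a (x - ((m : ℤ) + 1 + j))) := by rw [Finset.sum_add_distrib]; simp; ring
    _ ≤ _ := by linarith

lemma hav_lower (m : ℕ) (hm : 0 < m) (K : ℝ) (y : ℕ) (hy : 2 * m ≤ y)
    (h : ∀ r j : ℕ, m ≤ r → r + j = y → K ≤ a (y : ℤ) + a (-(r : ℤ)) - a (j : ℤ)) :
    K ≤ hav a m y := by
  have hm' : (0:ℝ) < m := Nat.cast_pos.mpr hm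
  unfold hav
  rw [le_div_iff₀ hm']
  calc K * m = ∑ j ∈ Finset.range m, K := by simp [mul_comm]
    _ ≤ _ := by
      refine Finset.sum_le_sum (fun j hj => ?_)
      have hj := Finset.mem_range.mp hj
      have := h (m + 1 + j) (y - (m + 1 + j)) (by omega) (by omega)
      push_cast [Nat.cast_sub (show m + 1 + j ≤ y by omega)] at this
      exact this

end avg

section asym
variable {a : ℤ → ℝ} {β c₀ κp κm : ℝ}

lemma asym_upper1 (f : ℕ → ℝ) (κ : ℝ) (hc₀ : 0 < c₀) (h0 : f 0 = 0) (hβ : 0 < β)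
    (hP : Tendsto (fun m : ℕ => c₀ * f m / (m : ℝ) ^ β) atTop (𝓝 κ)) :
    ∃ C : ℝ, 0 < C ∧ ∀ m : ℕ, f m ≤ C * (m : ℝ) ^ β := by
  obtain ⟨C, hC⟩ := hP.bddAbove_range
  refine ⟨(|C| + 1) / c₀, by positivity, fun m => ?_⟩
  rcases Nat.eq_zero_or_pos m with rfl | hm
  · simp [h0, Real.zero_rpow hβ.ne']
  · have hm' : (0:ℝ) < (m : ℝ) ^ β := Real.rpow_pos_of_pos (Nat.cast_pos.mpr hm) _
    have h1 : c₀ * f m / (m : ℝ) ^ β ≤ C := hC ⟨m, rfl⟩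
    rw [div_le_iff₀ hm'] at h1
    rw [div_mul_eq_mul_div, le_div_iff₀ hc₀]
    nlinarith [le_abs_self C]

lemma asym_lower1 (f : ℕ → ℝ) (hc₀ : 0 < c₀) (hκm : 0 < κm)
    (hpos : ∀ m : ℕ, 0 < m → 0 < f m)
    (hP : Tendsto (fun m : ℕ => c₀ * f m / (m : ℝ) ^ β) atTop (𝓝 κm)) :
    ∃ c : ℝ, 0 < c ∧ ∀ m : ℕ, 0 < m → c * (m : ℝ) ^ β ≤ f m := by
  obtain ⟨C, hC⟩ := (hP.inv₀ hκm.ne').bddAbove_range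
  refine ⟨1 / ((|C| + 1) * c₀), by positivity, fun m hm => ?_⟩
  have hm' : (0:ℝ) < (m : ℝ) ^ β := Real.rpow_pos_of_pos (Nat.cast_pos.mpr hm) _
  have h1 : (c₀ * f m / (m : ℝ) ^ β)⁻¹ ≤ C := hC ⟨m, rfl⟩
  have hf := mul_pos hc₀ (hpos m hm)
  rw [inv_div, div_le_iff₀ hf] at h1
  rw [div_mul_eq_mul_div, div_le_iff₀ (by positivity), one_mul]
  nlinarith [le_abs_self C]

lemma asym_g (hβ : 0 < β) (hβ1 : β < 1) (hc₀ : 0 < c₀) (hκm : 0 < κm) (h0 : ∀ x, 0 ≤ a x)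
    (C1 : ℝ) (hC1 : 0 < C1) (hup : ∀ m : ℕ, a m ≤ C1 * (m : ℝ) ^ β)
    (haP : Tendsto (fun m : ℕ => c₀ * a (m : ℤ) / (m : ℝ) ^ β) atTop (𝓝 κp))
    (haM : Tendsto (fun m : ℕ => c₀ * a (-(m : ℤ)) / (m : ℝ) ^ β) atTop (𝓝 κm)) :
    ∃ c : ℝ, 0 < c ∧ ∃ M0 : ℕ, 0 < M0 ∧ ∀ m : ℕ, M0 ≤ m → ∀ y r j : ℕ, y ≤ 4 * m → m ≤ r →
      r + j = y → c * (m : ℝ) ^ β ≤ a (y : ℤ) + a (-(r : ℤ)) - a (j : ℤ) := by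
  have hκp : 0 ≤ κp := ge_of_tendsto' haP (fun m =>
    div_nonneg (mul_nonneg hc₀.le (h0 _)) (Real.rpow_nonneg (Nat.cast_nonneg m) _))
  set ε := κm / 20 with hε
  have hε0 : 0 < ε := by positivity
  obtain ⟨J1, hJ1⟩ := eventually_atTop.mp (haP.eventually (Ioo_mem_nhds
    (show κp - ε < κp by linarith) (show κp < κp + ε by linarith)))
  obtain ⟨J2, hJ2⟩ := eventually_atTop.mp (haM.eventually (Ioo_mem_nhds
    (show κm - ε < κm by linarith) (show κm < κm + ε by linarith)))
  set J := J1 + J2 + 1 with hJ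
  set K := c₀ * (C1 * (J : ℝ) ^ β) with hK
  have hK0 : 0 ≤ K := by positivity
  have htend : Tendsto (fun m : ℕ => ε * (m : ℝ) ^ β) atTop atTop :=
    ((tendsto_rpow_atTop hβ).comp tendsto_natCast_atTop_atTop).const_mul_atTop hε0
  obtain ⟨J3, hJ3⟩ := eventually_atTop.mp (htend.eventually_ge_atTop K)
  refine ⟨κm / 2 / c₀, by positivity, J + J3, by omega, ?_⟩
  intro m hm y r j hy hr hrj
  have hpos : ∀ n : ℕ, 0 < n → (0:ℝ) < (n : ℝ) ^ β := fun n hn =>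
    Real.rpow_pos_of_pos (Nat.cast_pos.mpr hn) _
  have hmono : ∀ n k : ℕ, n ≤ k → (n : ℝ) ^ β ≤ (k : ℝ) ^ β := fun n k h =>
    Real.rpow_le_rpow (Nat.cast_nonneg n) (Nat.cast_le.mpr h) hβ.le
  have hKm : K ≤ ε * (m : ℝ) ^ β := hJ3 m (by omega)
  have hY := (hJ1 y (by omega)).1
  rw [lt_div_iff₀ (hpos y (by omega))] at hY
  have hRr := (hJ2 r (by omega)).1
  rw [lt_div_iff₀ (hpos r (by omega))] at hRr
  have hj : c₀ * a (j : ℤ) ≤ (κp + ε) * (j : ℝ) ^ β + K := by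
    rcases le_or_gt J j with h | h
    · have h1 := (hJ1 j (by omega)).2
      rw [div_lt_iff₀ (hpos j (by omega))] at h1
      linarith
    · have h1 := mul_le_mul_of_nonneg_left (hup j) hc₀.le
      have h2 : c₀ * (C1 * (j : ℝ) ^ β) ≤ K := by
        rw [hK]
        have := hmono j J h.le
        gcongr
      have h3 : 0 ≤ (κp + ε) * (j : ℝ) ^ β := by positivity
      linarith
  have h4 : (y : ℝ) ^ β ≤ 4 * (m : ℝ) ^ β := by
    calc (y : ℝ) ^ β ≤ ((4 : ℝ) * m) ^ β :=
          Real.rpow_le_rpow (Nat.cast_nonneg y) (by exact_mod_cast hy) hβ.le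
      _ = 4 ^ β * (m : ℝ) ^ β := Real.mul_rpow (by norm_num) (Nat.cast_nonneg m)
      _ ≤ 4 * (m : ℝ) ^ β := by
        refine mul_le_mul_of_nonneg_right ?_ (Real.rpow_nonneg (Nat.cast_nonneg m) _)
        calc (4:ℝ) ^ β ≤ 4 ^ (1:ℝ) := Real.rpow_le_rpow_of_exponent_le (by norm_num) hβ1.le
          _ = 4 := Real.rpow_one _
  have hjy := hmono j y (by omega)
  have hmr := hmono m r hr
  have hmp := hpos m (by omega)
  have e1 : (κp + ε) * (j : ℝ) ^ β ≤ (κp + ε) * (y : ℝ) ^ β := by gcongr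
  have e2 : (κm - ε) * (m : ℝ) ^ β ≤ (κm - ε) * (r : ℝ) ^ β :=
    mul_le_mul_of_nonneg_left hmr (by rw [hε]; linarith)
  have e3 : ε * (y : ℝ) ^ β ≤ ε * (4 * (m : ℝ) ^ β) := by gcongr
  rw [div_mul_eq_mul_div, div_le_iff₀ hc₀]
  have e4 : ε * (m : ℝ) ^ β = κm * (m : ℝ) ^ β / 20 := by rw [hε]; ring
  have e5 := mul_pos hκm hmp
  nlinarith

end asym

lemma large_bound {p a : ℤ → ℝ} {β : ℝ} (hβ : 0 < β) (hβ1 : β < 1)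
    (hp0 : ∀ x, 0 ≤ p x) (hp1 : HasSum p 1) (h0 : ∀ x, 0 ≤ a x)
    (hg : ∀ r x : ℤ, 0 ≤ a x + a (-r) - a (x - r))
    (hG : ∀ r x : ℤ, Summable (fun u => p u * (a (x + u) + a (-r) - a (x + u - r))) ∧
      Pop p (fun y => a y + a (-r) - a (y - r)) x ≤
        a x + a (-r) - a (x - r) + (if x = 0 then 1 else 0))
    (C1 : ℝ) (hC1 : 0 < C1) (hup : ∀ m : ℕ, a (-(m : ℤ)) ≤ C1 * (m : ℝ) ^ β)
    (c : ℝ) (hc : 0 < c) (M0 : ℕ) (hM0 : 0 < M0)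
    (hlow : ∀ m : ℕ, M0 ≤ m → ∀ y r j : ℕ, y ≤ 4 * m → m ≤ r →
      r + j = y → c * (m : ℝ) ^ β ≤ a (y : ℤ) + a (-(r : ℤ)) - a (j : ℤ)) :
    ∃ K : ℝ, 0 < K ∧ ∀ m : ℕ, M0 ≤ m → ∀ R : ℤ, 2 * (m : ℤ) ≤ R → ∀ x : ℤ,
      (x < 0 → hitHalfBefore0 p x R ≤ K * (a x + a (-x)) * (m : ℝ) ^ (-β)) ∧
      (0 ≤ x → x ≤ 2 * m → hitHalfBefore0 p x R ≤
        K * (((if x = 0 then 1 else 0) + a x) * (m : ℝ) ^ (-β) + x / m)) := by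
  set ρ : ℝ := (2 ^ β)⁻¹ with hρ
  have h2β : (1:ℝ) < 2 ^ β := Real.one_lt_rpow (by norm_num) hβ
  have h2β2 : (2:ℝ) ^ β ≤ 2 := by
    calc (2:ℝ) ^ β ≤ 2 ^ (1:ℝ) := Real.rpow_le_rpow_of_exponent_le (by norm_num) hβ1.le
      _ = 2 := Real.rpow_one _
  have hρ0 : 0 < ρ := by positivity
  have hρ1 : ρ < 1 := inv_lt_one_of_one_lt₀ h2β
  have h1ρ : 0 < 1 - ρ := by linarith
  refine ⟨(1 - ρ)⁻¹ / c + 4 * C1 / c, by positivity, ?_⟩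
  intro m hm R hR x
  have hm0 : 0 < m := by omega
  have hmR : (0:ℝ) < m := Nat.cast_pos.mpr hm0
  have hmβ : (0:ℝ) < (m : ℝ) ^ β := Real.rpow_pos_of_pos hmR _
  have hk0 : ∀ k : ℕ, 0 < 2 ^ k * m := fun k => by positivity
  have hscale : ∀ k : ℕ, ρ ^ k * ((2 ^ k * m : ℕ) : ℝ) ^ β = (m : ℝ) ^ β := by
    intro k
    push_cast
    rw [Real.mul_rpow (by positivity) hmR.le, ← Real.rpow_pow_comm (by norm_num), hρ, inv_pow,
      ← mul_assoc, inv_mul_cancel₀ (by positivity), one_mul]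
  set H : ℕ → ℤ → ℝ := fun k => hav a (2 ^ k * m) with hH
  have hH0 : ∀ k y, 0 ≤ H k y := fun k y => hav_nonneg hg _ y
  have hHD : ∀ k y, H k y ≤ a y + a (-y) := fun k y => hav_le hg _ (hk0 k) y
  obtain ⟨hS, hP⟩ := tsum_super hp0 H ρ hρ0 hρ1 (fun y => a y + a (-y)) hH0 hHD
    (fun k x => hav_super _ (hk0 k) hG x)
  set F : ℤ → ℝ := fun y => ∑' k, ρ ^ k * H k y with hF
  have hF0 : ∀ y, 0 ≤ F y := fun y =>
    tsum_nonneg (fun k => mul_nonneg (pow_nonneg hρ0.le k) (hH0 k y))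
  have hFlow : ∀ y, R ≤ y → c * (m : ℝ) ^ β ≤ F y := by
    intro y hy
    obtain ⟨n, rfl⟩ := Int.eq_ofNat_of_zero_le (show 0 ≤ y by omega)
    have hn : 2 * m ≤ n := by omega
    have hex : ∃ k : ℕ, n < 2 * (2 ^ (k + 1) * m) := by
      refine ⟨n, ?_⟩
      have : n < 2 ^ n := Nat.lt_two_pow_self
      have h3 : 2 ^ (n + 1) = 2 * 2 ^ n := by ring
      rw [h3]
      nlinarith
    classical
    set k := Nat.find hex with hk
    have hk1 : n < 2 * (2 ^ (k + 1) * m) := Nat.find_spec hex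
    have hk2 : 2 * (2 ^ k * m) ≤ n := by
      rcases Nat.eq_zero_or_pos k with h | h
      · rw [h]; simpa using hn
      · have := Nat.find_min hex (m := k - 1) (by omega)
        rw [Nat.sub_add_cancel h] at this
        omega
    have h3 : c * ((2 ^ k * m : ℕ) : ℝ) ^ β ≤ H k n := by
      refine hav_lower _ (hk0 k) _ n hk2 (fun r j hr hrj => ?_)
      refine hlow (2 ^ k * m) ?_ n r j ?_ hr hrj
      · have : 1 ≤ 2 ^ k := Nat.one_le_two_pow
        nlinarith
      · rw [pow_succ] at hk1; nlinarith
    have h4 : ρ ^ k * H k n ≤ F n :=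
      (hS n).le_tsum k (fun i _ => mul_nonneg (pow_nonneg hρ0.le i) (hH0 i n))
    have h5 := mul_le_mul_of_nonneg_left h3 (pow_nonneg hρ0.le k)
    have h6 := hscale k
    calc c * (m : ℝ) ^ β = ρ ^ k * (c * ((2 ^ k * m : ℕ) : ℝ) ^ β) := by rw [← h6]; ring
      _ ≤ F n := h5.trans h4
  have hhit := hit_bound hp0 hp1 x R F hF0 (c * (m : ℝ) ^ β)
    (F x + (1 - ρ)⁻¹ * (if x = 0 then 1 else 0)) (by positivity) (fun w => (hP w).1)
    (fun w hw => by have := (hP w).2; rwa [if_neg hw, mul_zero, add_zero] at this) (hP x).2 hFlow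
  have hgeo := hasSum_geometric_of_lt_one hρ0.le hρ1
  refine ⟨fun hx => ?_, fun hx hx2 => ?_⟩
  · rw [if_neg hx.ne, mul_zero, add_zero] at hhit
    have hFx : F x ≤ (1 - ρ)⁻¹ * (a x + a (-x)) :=
      hasSum_le (fun k => mul_le_mul_of_nonneg_left (hHD k x) (pow_nonneg hρ0.le k))
        (hS x).hasSum (hgeo.mul_right _)
    refine hhit.trans ?_
    have hs := add_nonneg (h0 x) (h0 (-x))
    calc F x / (c * (m : ℝ) ^ β) ≤ ((1 - ρ)⁻¹ * (a x + a (-x))) / (c * (m : ℝ) ^ β) := by gcongr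
      _ = (1 - ρ)⁻¹ / c * (a x + a (-x)) * (m : ℝ) ^ (-β) := by
        rw [Real.rpow_neg hmR.le]; field_simp
      _ ≤ _ := by
        have : (1 - ρ)⁻¹ / c ≤ (1 - ρ)⁻¹ / c + 4 * C1 / c := by
          have : 0 < 4 * C1 / c := by positivity
          linarith
        gcongr
  · obtain ⟨n, rfl⟩ := Int.eq_ofNat_of_zero_le hx
    have hn : n ≤ 2 * m := by omega
    have hterm : ∀ k, ρ ^ k * H k n ≤ ρ ^ k * a n + (1 / 2) ^ k * (n * (2 * C1) * (m : ℝ) ^ β / m) := by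
      intro k
      have h2 : n ≤ 2 * (2 ^ k * m) := by
        have : 1 ≤ 2 ^ k := Nat.one_le_two_pow
        nlinarith
      have h3 := hav_tele h0 (2 ^ k * m) (hk0 k) (2 * C1 * ((2 ^ k * m : ℕ) : ℝ) ^ β)
        (fun j hj => by
          refine (hup j).trans ?_
          calc C1 * (j : ℝ) ^ β ≤ C1 * ((2:ℝ) * ((2 ^ k * m : ℕ) : ℝ)) ^ β := by
                have : (j : ℝ) ≤ (2:ℝ) * ((2 ^ k * m : ℕ) : ℝ) := by exact_mod_cast hj
                gcongr
            _ = C1 * (2 ^ β * ((2 ^ k * m : ℕ) : ℝ) ^ β) := by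
                rw [Real.mul_rpow (by norm_num) (Nat.cast_nonneg _)]
            _ ≤ C1 * (2 * ((2 ^ k * m : ℕ) : ℝ) ^ β) := by gcongr
            _ = _ := by ring) n h2
      have h4 := mul_le_mul_of_nonneg_left h3 (pow_nonneg hρ0.le k)
      refine h4.trans (le_of_eq ?_)
      rw [mul_add]
      congr 1
      rw [← hscale k]
      push_cast
      field_simp
      rw [mul_assoc, ← mul_pow]
      norm_num
    have hFx : F n ≤ (1 - ρ)⁻¹ * a n + 2 * (n * (2 * C1) * (m : ℝ) ^ β / m) :=
      hasSum_le hterm (hS n).hasSum ((hgeo.mul_right _).add (hasSum_geometric_two.mul_right _))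
    refine hhit.trans ?_
    rw [div_le_iff₀ (by positivity)]
    set δ : ℝ := if (n : ℤ) = 0 then 1 else 0 with hδ
    have hδ0 : 0 ≤ δ := by rw [hδ]; split_ifs <;> norm_num
    have ha0 := h0 n
    have e : ((1 - ρ)⁻¹ / c + 4 * C1 / c) * ((δ + a n) * (m : ℝ) ^ (-β) + ((n : ℤ) : ℝ) / m) *
        (c * (m : ℝ) ^ β) = (1 - ρ)⁻¹ * (δ + a n) + 4 * C1 * (n * (m : ℝ) ^ β / m)
        + ((1 - ρ)⁻¹ * (n * (m : ℝ) ^ β / m) + 4 * C1 * (δ + a n)) := by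
      rw [Real.rpow_neg hmR.le]; push_cast; field_simp; ring
    rw [e]
    have e2 : 0 ≤ (1 - ρ)⁻¹ * (n * (m : ℝ) ^ β / m) + 4 * C1 * (δ + a n) := by positivity
    have e3 : 2 * (n * (2 * C1) * (m : ℝ) ^ β / m) = 4 * C1 * (n * (m : ℝ) ^ β / m) := by ring
    linarith

/-- Lemma 7.9: for a recurrent strongly aperiodic walk in the normal domain of
attraction of a stable law of index `α ∈ (1,2)`, whose potential kernel `a`
satisfies `c₀ a(x) ~ κ₊ x^{α−1}` (`x → +∞`) and `c₀ a(x) ~ κ₋ |x|^{α−1}`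
(`x → −∞`) with `κ₋ > 0`, there is `C` such that for all `R > 1`, `x ≤ R`:
`P[σ^x_{[R,∞)} < σ^x_{{0}}] ≤ C (a†(x) R^{−α+1} + x₊/R)`. -/
theorem stmt17 (p : ℤ → ℝ) (a : ℤ → ℝ) (α γ c₀ κp κm : ℝ)
    (hα : 1 < α) (hα2 : α < 2) (hγ : |γ| ≤ 2 - α) (hc₀ : 0 < c₀) (hκm : 0 < κm)
    (hp0 : ∀ x, 0 ≤ p x) (hp1 : HasSum p 1)
    (hrec : ¬ Summable (fun n => pn p n 0))
    (hap : ∀ x : ℤ, ∀ᶠ n in atTop, 0 < pn p n x)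
    (hpos : Tendsto (fun θ : ℝ => (1 - rwChar p θ) / ((|θ| ^ α : ℝ) : ℂ)) (𝓝[>] 0)
      (𝓝 ((c₀ : ℂ) * Complex.exp (Complex.I * Real.pi * γ / 2))))
    (hneg : Tendsto (fun θ : ℝ => (1 - rwChar p θ) / ((|θ| ^ α : ℝ) : ℂ)) (𝓝[<] 0)
      (𝓝 ((c₀ : ℂ) * Complex.exp (-(Complex.I * Real.pi * γ / 2)))))
    (ha : ∀ x : ℤ, HasSum (fun n => pn p n 0 - pn p n (-x)) (a x))
    (haP : Tendsto (fun m : ℕ => c₀ * a (m : ℤ) / (m : ℝ) ^ (α - 1)) atTop (𝓝 κp))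
    (haM : Tendsto (fun m : ℕ => c₀ * a (-(m : ℤ)) / (m : ℝ) ^ (α - 1)) atTop (𝓝 κm)) :
    ∃ C : ℝ, ∀ R : ℤ, 1 < R → ∀ x : ℤ, x ≤ R →
      hitHalfBefore0 p x R ≤
        C * (((if x = 0 then (1:ℝ) else 0) + a x) * (R : ℝ) ^ (-α + 1) +
          max (x : ℝ) 0 / (R : ℝ)) := by
  set β := α - 1 with hβd
  have hβ : 0 < β := by rw [hβd]; linarith
  have hβ1 : β < 1 := by rw [hβd]; linarith
  have hexp : -α + 1 = -β := by rw [hβd]; ring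
  have h0 := a_nonneg hp0 hp1 ha
  have haz := a_zero ha
  have hg := g_nonneg hp0 hp1 hrec hap ha
  have hev : ∀ᶠ m : ℕ in atTop, 0 < a (-(m : ℤ)) := by
    filter_upwards [haM.eventually (lt_mem_nhds hκm)] with m hm
    by_contra hcon
    have : a (-(m : ℤ)) = 0 := le_antisymm (not_lt.mp hcon) (h0 _)
    rw [this] at hm
    simp at hm
  have hneg' := a_neg_pos hp0 hp1 hap ha hev
  obtain ⟨Cp, hCp, hupP⟩ := asym_upper1 (fun m : ℕ => a (m : ℤ)) κp hc₀ (by simpa using haz) hβ haP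
  obtain ⟨Cm, hCm, hupM⟩ := asym_upper1 (fun m : ℕ => a (-(m : ℤ))) κm hc₀ (by simpa using haz) hβ haM
  obtain ⟨c1, hc1, hlowM⟩ := asym_lower1 (fun m : ℕ => a (-(m : ℤ))) hc₀ hκm
    (fun m hm => hneg' _ (by omega)) haM
  obtain ⟨c, hc, M0, hM0, hlow⟩ := asym_g hβ hβ1 hc₀ hκm h0 Cp hCp hupP haP haM
  obtain ⟨K, hK, hbig⟩ := large_bound hβ hβ1 hp0 hp1 h0 hg (fun r => (g_super hp0 hp1 ha r).2)
    Cm hCm hupM c hc M0 hM0 hlow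
  set R1 : ℝ := 2 * M0 + 2 with hR1
  have hR1p : 0 < R1 := by positivity
  refine ⟨1 + R1 + R1 / c1 + 3 * K + 3 * K * (1 + Cp / c1), ?_⟩
  intro R hR x hxR
  rw [hexp]
  have hRp : (0:ℝ) < R := by exact_mod_cast (by omega : (0:ℤ) < R)
  have hR1' : (1:ℝ) ≤ R := by exact_mod_cast hR.le
  have hRβ : (0:ℝ) < (R:ℝ) ^ (-β) := Real.rpow_pos_of_pos hRp _
  have hδ0 : (0:ℝ) ≤ if x = 0 then (1:ℝ) else 0 := by split_ifs <;> norm_num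
  set Q : ℝ := ((if x = 0 then (1:ℝ) else 0) + a x) * (R : ℝ) ^ (-β) + max (x : ℝ) 0 / (R : ℝ) with hQ
  have hT1 : 0 ≤ ((if x = 0 then (1:ℝ) else 0) + a x) * (R : ℝ) ^ (-β) :=
    mul_nonneg (add_nonneg hδ0 (h0 x)) hRβ.le
  have hT2 : 0 ≤ max (x : ℝ) 0 / (R : ℝ) := div_nonneg (le_max_right _ _) hRp.le
  have hQ0 : 0 ≤ Q := add_nonneg hT1 hT2
  -- it suffices to bound by any of the constants
  have hfin : ∀ k : ℝ, k ≤ 1 + R1 + R1 / c1 + 3 * K + 3 * K * (1 + Cp / c1) →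
      hitHalfBefore0 p x R ≤ k * Q →
      hitHalfBefore0 p x R ≤ (1 + R1 + R1 / c1 + 3 * K + 3 * K * (1 + Cp / c1)) * Q :=
    fun k hk h => h.trans (mul_le_mul_of_nonneg_right hk hQ0)
  have q1 : 0 < R1 / c1 := by positivity
  have q2 : 0 < 3 * K * (1 + Cp / c1) := by positivity
  have hhit1 := hit_le_one hp0 hp1 x R
  have hax : x < 0 → c1 * ((x.natAbs : ℕ) : ℝ) ^ β ≤ a x ∧
      a (-x) ≤ Cp * ((x.natAbs : ℕ) : ℝ) ^ β := by
    intro hx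
    have h1 := hlowM x.natAbs (by omega)
    have h2 := hupP x.natAbs
    have e1 : ((x.natAbs : ℕ) : ℤ) = -x := by omega
    simp only [e1, neg_neg] at h1 h2
    exact ⟨h1, h2⟩
  obtain ⟨m, hm⟩ : ∃ m : ℕ, (m : ℤ) = R / 2 := ⟨(R / 2).toNat, by omega⟩
  have hmp : 0 < m := by omega
  by_cases hmM : M0 ≤ m
  · have hmR : (0:ℝ) < m := Nat.cast_pos.mpr hmp
    have hRm : (R : ℝ) ≤ 3 * m := by exact_mod_cast (by omega : R ≤ 3 * (m : ℤ))
    have hmβ : (m : ℝ) ^ (-β) ≤ 3 * (R : ℝ) ^ (-β) := by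
      rw [Real.rpow_neg hmR.le, Real.rpow_neg hRp.le, ← div_eq_mul_inv,
        le_div_iff₀ (by positivity), inv_mul_le_iff₀ (by positivity)]
      calc (R : ℝ) ^ β ≤ (3 * (m : ℝ)) ^ β := by gcongr
        _ = 3 ^ β * (m : ℝ) ^ β := Real.mul_rpow (by norm_num) hmR.le
        _ ≤ 3 * (m : ℝ) ^ β := by
          have : (3:ℝ) ^ β ≤ 3 ^ (1:ℝ) :=
            Real.rpow_le_rpow_of_exponent_le (by norm_num) hβ1.le
          rw [Real.rpow_one] at this
          gcongr
        _ = _ := by ring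
    obtain ⟨hb1, hb2⟩ := hbig m hmM R (by omega) x
    rcases lt_or_ge x 0 with hx | hx
    · refine hfin (3 * K * (1 + Cp / c1)) (by linarith) ((hb1 hx).trans ?_)
      obtain ⟨h1, h2⟩ := hax hx
      have h3 : a (-x) ≤ Cp / c1 * a x := by
        refine h2.trans ?_
        rw [div_mul_eq_mul_div, le_div_iff₀ hc1]
        nlinarith
      have ha0 := h0 x
      have ha1 := h0 (-x)
      calc K * (a x + a (-x)) * (m : ℝ) ^ (-β)
          ≤ K * (a x + Cp / c1 * a x) * (3 * (R : ℝ) ^ (-β)) := by gcongr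
        _ = 3 * K * (1 + Cp / c1) * (a x * (R : ℝ) ^ (-β)) := by ring
        _ ≤ 3 * K * (1 + Cp / c1) * Q := by
          refine mul_le_mul_of_nonneg_left ?_ q2.le
          rw [hQ, if_neg hx.ne, zero_add]
          linarith
    · rcases le_or_gt x (2 * m) with hx2 | hx2
      · refine hfin (3 * K) (by linarith) ((hb2 hx hx2).trans ?_)
        have hxR0 : (0:ℝ) ≤ x := by exact_mod_cast hx
        have e1 : (x : ℝ) / m ≤ 3 * (max (x : ℝ) 0 / R) := by
          rw [max_eq_left hxR0, ← mul_div_assoc, div_le_div_iff₀ hmR hRp]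
          nlinarith
        have ha0 := add_nonneg hδ0 (h0 x)
        calc _ ≤ K * (((if x = 0 then (1:ℝ) else 0) + a x) * (3 * (R : ℝ) ^ (-β)) +
              3 * (max (x : ℝ) 0 / R)) := by gcongr
          _ = 3 * K * Q := by rw [hQ]; ring
      · have hxe : x = R := by omega
        refine hfin 1 (by linarith) (hhit1.trans ?_)
        have : max (x : ℝ) 0 / (R : ℝ) = 1 := by
          rw [hxe, max_eq_left hRp.le, div_self hRp.ne']
        rw [hQ, this]; linarith
  · have hRR1 : (R : ℝ) ≤ R1 := by
      rw [hR1]; exact_mod_cast (by omega : R ≤ 2 * (M0 : ℤ) + 2)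
    have hRinv : 1 / R1 ≤ (R : ℝ) ^ (-β) := by
      calc 1 / R1 ≤ 1 / (R : ℝ) := by gcongr
        _ = (R : ℝ) ^ (-1 : ℝ) := by rw [Real.rpow_neg_one, one_div]
        _ ≤ (R : ℝ) ^ (-β) := Real.rpow_le_rpow_of_exponent_le hR1' (by linarith)
    rcases lt_trichotomy x 0 with hx | hx | hx
    · refine hfin (R1 / c1) (by linarith) (hhit1.trans ?_)
      obtain ⟨h1, _⟩ := hax hx
      have h3 : (1:ℝ) ≤ ((x.natAbs : ℕ) : ℝ) ^ β :=
        Real.one_le_rpow (by exact_mod_cast (by omega : 1 ≤ x.natAbs)) hβ.le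
      have h4 : c1 ≤ a x := by nlinarith
      have h40 := h0 x
      have h5 : c1 * (1 / R1) ≤ a x * (R : ℝ) ^ (-β) := by gcongr
      calc (1:ℝ) = R1 / c1 * (c1 * (1 / R1)) := by field_simp
        _ ≤ R1 / c1 * Q := by
          refine mul_le_mul_of_nonneg_left ?_ q1.le
          rw [hQ, if_neg hx.ne, zero_add]
          linarith
    · refine hfin R1 (by linarith) (hhit1.trans ?_)
      calc (1:ℝ) = R1 * (1 / R1) := by field_simp
        _ ≤ R1 * Q := by
          refine mul_le_mul_of_nonneg_left ?_ hR1p.le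
          rw [hQ, if_pos hx, hx, haz, add_zero, one_mul]
          rw [hx] at hT2
          linarith
    · refine hfin R1 (by linarith) (hhit1.trans ?_)
      have hx1 : (1:ℝ) ≤ x := by exact_mod_cast hx
      have h5 : 1 / R1 ≤ max (x : ℝ) 0 / (R : ℝ) := by
        rw [max_eq_left (by linarith)]
        gcongr
      calc (1:ℝ) = R1 * (1 / R1) := by field_simp
        _ ≤ R1 * Q := by
          refine mul_le_mul_of_nonneg_left ?_ hR1p.le
          linarith
end
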